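/- Let φ ∈ H^{13}(𝕋) be real-valued with φ ∉ C^∞(𝕋) and P_N(φ) < 0. Then for every T > 0 there does not exist any real-valued solution u ∈ C([0,T]; H^{13}(𝕋)) (solving the equation in the sense of distributions) of ∂_t u + γ₀∂_x⁵u + γ₁∂_x³u + γ₂∂_x u = N(∂_x³u,∂_x²u,∂_xu,u) on [0,T]×𝕋 with u(0,·) = φ. -/

import Mathlib

/- Fifth order dispersive equations on the torus: non-existence of H^{13} solutions
   forward in time when P_N(φ) < 0 and φ is not smooth. -/

namespace FifthOrderStmt4

/-- Fourier coefficient of a `2π`-periodic function `f : ℝ → ℝ`: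
`f̂(k) = (1/2π) ∫_0^{2π} f(x) e^{-ikx} dx`. -/
noncomputable def fc (f : ℝ → ℝ) (k : ℤ) : ℂ :=
  (Complex.ofReal (2 * Real.pi))⁻¹ *
    ∫ x in (0:ℝ)..(2 * Real.pi), (f x : ℂ) * Complex.exp (-Complex.I * (k : ℂ) * (x : ℂ))

/-- Sobolev norm `‖f‖_{H^s} = (Σ_k (1+k²)^s |f̂(k)|²)^{1/2}`. -/
noncomputable def hsNorm (s : ℕ) (f : ℝ → ℝ) : ℝ :=
  Real.sqrt (∑' k : ℤ, (1 + (k : ℝ) ^ 2) ^ s * ‖fc f k‖ ^ 2)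

/-- `f` belongs to `H^s(𝕋)` (continuous representative, `2π`-periodic, finite `H^s` norm). -/
def MemHs (s : ℕ) (f : ℝ → ℝ) : Prop :=
  Continuous f ∧ Function.Periodic f (2 * Real.pi) ∧
    Summable (fun k : ℤ => (1 + (k : ℝ) ^ 2) ^ s * ‖fc f k‖ ^ 2)

/-- The nonlinearity `N(∂_x³f, ∂_x²f, ∂_xf, f) = Σ_j λ_j (∂_x³f)^{a_j}(∂_x²f)^{b_j}(∂_xf)^{c_j}f^{d_j}`. -/
noncomputable def Nfun (j0 : ℕ) (lam : Fin j0 → ℝ) (a b c d : Fin j0 → ℕ)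
    (f : ℝ → ℝ) (x : ℝ) : ℝ :=
  ∑ j : Fin j0, lam j * (iteratedDeriv 3 f x) ^ (a j) * (iteratedDeriv 2 f x) ^ (b j) *
    (deriv f x) ^ (c j) * (f x) ^ (d j)

/-- The functional `P_N(f) = Σ_j (λ_j b_j / 2π) ∫_𝕋 (∂_x³f)^{a_j}(∂_x²f)^{b_j-1}(∂_xf)^{c_j}f^{d_j} dx`. -/
noncomputable def PN (j0 : ℕ) (lam : Fin j0 → ℝ) (a b c d : Fin j0 → ℕ) (f : ℝ → ℝ) : ℝ :=
  ∑ j : Fin j0, (lam j * (b j : ℝ) / (2 * Real.pi)) *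
    ∫ x in (0:ℝ)..(2 * Real.pi),
      (iteratedDeriv 3 f x) ^ (a j) * (iteratedDeriv 2 f x) ^ (b j - 1) *
        (deriv f x) ^ (c j) * (f x) ^ (d j)

/-- `u` is a (distributional) solution of
`∂_t u + γ₀∂_x⁵u + γ₁∂_x³u + γ₂∂_x u = N(∂_x³u,∂_x²u,∂_xu,u)` on `[T₁,T₂] × 𝕋`:
each `u(t)` is `2π`-periodic and `C³` in `x` (so that `N(u)` is defined pointwise), and for every
smooth test function `ψ`, `2π`-periodic in `x` and compactly supported in time inside `(T₁,T₂)`,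
the integrated-by-parts identity holds. -/
def IsSolution (γ0 γ1 γ2 : ℝ) (j0 : ℕ) (lam : Fin j0 → ℝ) (a b c d : Fin j0 → ℕ)
    (T1 T2 : ℝ) (u : ℝ → ℝ → ℝ) : Prop :=
  (∀ t ∈ Set.Icc T1 T2, ContDiff ℝ 3 (u t) ∧ Function.Periodic (u t) (2 * Real.pi)) ∧
  ∀ ψ : ℝ → ℝ → ℝ, ContDiff ℝ (⊤ : ℕ∞) (Function.uncurry ψ) →
    (∀ t : ℝ, Function.Periodic (ψ t) (2 * Real.pi)) →
    (∀ t : ℝ, t ∉ Set.Ioo T1 T2 → ∀ x : ℝ, ψ t x = 0) →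
    (∫ t in T1..T2, ∫ x in (0:ℝ)..(2 * Real.pi),
      (u t x * (deriv (fun τ : ℝ => ψ τ x) t
        + γ0 * iteratedDeriv 5 (ψ t) x
        + γ1 * iteratedDeriv 3 (ψ t) x
        + γ2 * deriv (ψ t) x)
      + Nfun j0 lam a b c d (u t) x * ψ t x)) = 0

/-- `t ↦ u(t)` is continuous from `A` into `H^s(𝕋)`. -/
def ContInHs (s : ℕ) (A : Set ℝ) (u : ℝ → ℝ → ℝ) : Prop :=
  ∀ t₀ ∈ A, ∀ ε > 0, ∃ δ > 0, ∀ t ∈ A, |t - t₀| < δ →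
    hsNorm s (fun x => u t x - u t₀ x) < ε

/-!
Differentiating the equation `m` times, `W = ∂ₓᵐu` solves
`∂ₜW + γ₀∂ₓ⁵W + γ₁∂ₓ³W + γ₂∂ₓW = α₀∂ₓ³W + α₁∂ₓ²W + …`, where only a derivative of `u` of low order
enters the coefficients and the mean of `α₁` is `P_N(u)`, which stays below some `-c < 0` for a
short time. So the mean of `α₁` acts as a backward heat operator, and the energy `Σₖ χ(k)²|Ŵ(k)|²`,
truncated by a tent `χ`, should grow at least at the rate `2c Σₖ k²χ(k)²|Ŵ(k)|²`. All other terms of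
order two or three couple distinct frequencies `k ≠ l`; they are cancelled by the time derivative of
a normal form correction with denominators `γ₀(k⁵ - l⁵)`, and `|k⁵ - l⁵| ≳ k⁴ + l⁴` keeps that
correction bounded by the energy. Integrating in time, and letting the truncation tend to infinity,
bounds `∫ ‖∂ₓW‖²` by the energy at the final time: a backward parabolic flow that exists forward
in time is smoother than it was assumed to be. Hence `∂ₓW` is square summable at some later time,
and running the estimate backward from there makes it so on a whole interval starting at `t = 0`.
Iterating, `φ` is smooth.
-/

/-! ### The Schur test and convolution with a decaying kernel -/

section Schur

/-- Schur's test for the bilinear form of a nonnegative matrix. -/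
lemma sum_sum_mul_le_of_row_col_sum_le {ι κ : Type*} {A : ι → κ → ℝ} {S θ : ℝ} (s : Finset ι)
    (t : Finset κ) (hA : ∀ i j, 0 ≤ A i j) (hrow : ∀ i ∈ s, ∑ j ∈ t, A i j ≤ S)
    (hcol : ∀ j ∈ t, ∑ i ∈ s, A i j ≤ S) (x : ι → ℝ) (y : κ → ℝ) (hθ : 0 < θ) :
    ∑ i ∈ s, ∑ j ∈ t, A i j * (x i * y j) ≤
      S / 2 * (θ * ∑ i ∈ s, x i ^ 2 + θ⁻¹ * ∑ j ∈ t, y j ^ 2) := by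
  have hxy (i j) : A i j * (x i * y j) ≤
      A i j * (θ / 2 * x i ^ 2) + A i j * (θ⁻¹ / 2 * y j ^ 2) := by
    rw [← mul_add]
    exact mul_le_mul_of_nonneg_left
      (by linarith [two_mul_le_add_mul_sq (a := x i) (b := y j) hθ]) (hA i j)
  calc _ ≤ ∑ i ∈ s, ∑ j ∈ t, (A i j * (θ / 2 * x i ^ 2) + A i j * (θ⁻¹ / 2 * y j ^ 2)) :=
        Finset.sum_le_sum fun i _ => Finset.sum_le_sum fun j _ => hxy i j
    _ = ∑ i ∈ s, (∑ j ∈ t, A i j) * (θ / 2 * x i ^ 2) +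
        ∑ j ∈ t, (∑ i ∈ s, A i j) * (θ⁻¹ / 2 * y j ^ 2) := by
        simp only [Finset.sum_add_distrib, Finset.sum_mul]
        rw [Finset.sum_comm (s := t)]
    _ ≤ ∑ i ∈ s, S * (θ / 2 * x i ^ 2) + ∑ j ∈ t, S * (θ⁻¹ / 2 * y j ^ 2) := by
        gcongr with i hi j hj
        · exact hrow i hi
        · exact hcol j hj
    _ = _ := by
        rw [← Finset.mul_sum, ← Finset.mul_sum, ← Finset.mul_sum, ← Finset.mul_sum]; ring

lemma sq_tsum_mul_le_tsum_mul_tsum {ι : Type*} {w y : ι → ℝ} (hw : ∀ i, 0 ≤ w i)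
    (hws : Summable w) (hwy : Summable fun i => w i * y i)
    (hwy2 : Summable fun i => w i * y i ^ 2) :
    (∑' i, w i * y i) ^ 2 ≤ (∑' i, w i) * ∑' i, w i * y i ^ 2 := by
  refine le_of_tendsto_of_tendsto' (Filter.Tendsto.pow hwy.hasSum 2)
    (Filter.Tendsto.mul hws.hasSum hwy2.hasSum) fun s => ?_
  exact Finset.sum_sq_le_sum_mul_sum_of_sq_le_mul s (fun i _ => hw i)
    (fun i _ => mul_nonneg (hw i) (sq_nonneg _)) fun i _ => by rw [mul_pow, sq (w i), mul_assoc]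

end Schur

section Convolution

variable {G : Type*} [AddCommGroup G] {a y : G → ℝ}

lemma summable_comp_sub_left (ha : Summable a) (k : G) : Summable fun l => a (k - l) :=
  (Equiv.subLeft k).summable_iff.2 ha

lemma sum_comp_sub_left_le_tsum (ha0 : ∀ k, 0 ≤ a k) (ha : Summable a) (s : Finset G) (k : G) :
    ∑ l ∈ s, a (k - l) ≤ ∑' n, a n := by
  rw [← (Equiv.subLeft k).tsum_eq a]
  exact (summable_comp_sub_left ha k).sum_le_tsum s fun l _ => ha0 _

lemma sum_comp_sub_right_le_tsum (ha0 : ∀ k, 0 ≤ a k) (ha : Summable a) (s : Finset G) (l : G) :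
    ∑ k ∈ s, a (k - l) ≤ ∑' n, a n := by
  rw [← (Equiv.subRight l).tsum_eq a]
  exact ((Equiv.subRight l).summable_iff.2 ha).sum_le_tsum s fun k _ => ha0 _

lemma summable_comp_sub_mul_sq (ha0 : ∀ k, 0 ≤ a k) (ha : Summable a)
    (hy : Summable fun l => y l ^ 2) (k : G) : Summable fun l => a (k - l) * y l ^ 2 :=
  Summable.of_nonneg_of_le (fun _ => mul_nonneg (ha0 _) (sq_nonneg _))
    (fun _ => mul_le_mul_of_nonneg_right (ha.le_tsum _ fun _ _ => ha0 _) (sq_nonneg _))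
    (hy.mul_left _)

lemma summable_comp_sub_mul (ha0 : ∀ k, 0 ≤ a k) (ha : Summable a)
    (hy : Summable fun l => y l ^ 2) (k : G) : Summable fun l => a (k - l) * y l := by
  refine Summable.of_norm_bounded
    ((summable_comp_sub_left ha k).add (summable_comp_sub_mul_sq ha0 ha hy k)) fun l => ?_
  have h : |y l| ≤ 1 + y l ^ 2 := abs_le.2 ⟨by nlinarith, by nlinarith⟩
  rw [Real.norm_eq_abs, abs_mul, abs_of_nonneg (ha0 _)]
  linarith [mul_le_mul_of_nonneg_left h (ha0 (k - l))]

/-- Young's inequality `ℓ¹ * ℓ² ⊆ ℓ²`. -/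
lemma sum_sq_tsum_comp_sub_mul_le (ha0 : ∀ k, 0 ≤ a k) (ha : Summable a)
    (hy : Summable fun l => y l ^ 2) (s : Finset G) :
    ∑ k ∈ s, (∑' l, a (k - l) * y l) ^ 2 ≤ (∑' n, a n) ^ 2 * ∑' l, y l ^ 2 := by
  have hya (k) := summable_comp_sub_mul_sq ha0 ha hy k
  calc _ ≤ ∑ k ∈ s, (∑' n, a n) * ∑' l, a (k - l) * y l ^ 2 :=
        Finset.sum_le_sum fun k _ => by
          rw [← (Equiv.subLeft k).tsum_eq a]
          exact sq_tsum_mul_le_tsum_mul_tsum (fun _ => ha0 _) (summable_comp_sub_left ha k)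
            (summable_comp_sub_mul ha0 ha hy k) (hya k)
    _ = (∑' n, a n) * ∑' l, (∑ k ∈ s, a (k - l)) * y l ^ 2 := by
        simp only [Finset.sum_mul, ← Finset.mul_sum]
        rw [Summable.tsum_finsetSum fun k _ => hya k]
    _ ≤ (∑' n, a n) * ∑' l, (∑' n, a n) * y l ^ 2 := by
        refine mul_le_mul_of_nonneg_left (Summable.tsum_le_tsum (fun l => ?_) ?_
          (hy.mul_left _)) (tsum_nonneg ha0)
        · exact mul_le_mul_of_nonneg_right (sum_comp_sub_right_le_tsum ha0 ha s l) (sq_nonneg _)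
        · simp only [Finset.sum_mul]
          exact summable_sum fun k _ => hya k
    _ = _ := by rw [tsum_mul_left]; ring

end Convolution

section Kernel

/-- The weight `1 + |n|` on frequencies, used instead of `(1 + n²)^{1/2}`. -/
noncomputable def bracket (n : ℤ) : ℝ := 1 + |(n : ℝ)|

lemma one_le_bracket (n : ℤ) : 1 ≤ bracket n := by
  unfold bracket; linarith [abs_nonneg (n : ℝ)]

lemma bracket_pos (n : ℤ) : 0 < bracket n := one_pos.trans_le (one_le_bracket n)

lemma abs_le_bracket (n : ℤ) : |(n : ℝ)| ≤ bracket n := by unfold bracket; linarith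

lemma bracket_neg (n : ℤ) : bracket (-n) = bracket n := by simp [bracket]

lemma bracket_sub_comm (k l : ℤ) : bracket (k - l) = bracket (l - k) := by
  rw [← bracket_neg, neg_sub]

lemma abs_le_abs_mul_bracket_sub {k l : ℤ} (hl : l ≠ 0) :
    |(k : ℝ)| ≤ |(l : ℝ)| * bracket (l - k) := by
  have hl1 : (1 : ℝ) ≤ |(l : ℝ)| := by exact_mod_cast Int.one_le_abs hl
  have htri : |(k : ℝ)| ≤ |(l : ℝ)| + |((l - k : ℤ) : ℝ)| := by
    push_cast
    linarith [abs_sub_abs_le_abs_sub (k : ℝ) l, abs_sub_comm (k : ℝ) l]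
  unfold bracket
  nlinarith [abs_nonneg ((l - k : ℤ) : ℝ)]

/-- The summable convolution kernel `(1 + |n|)⁻²`, which dominates all off-diagonal decay. -/
noncomputable def decayKernel (n : ℤ) : ℝ := (bracket n ^ 2)⁻¹

lemma decayKernel_pos (n : ℤ) : 0 < decayKernel n := inv_pos.2 (pow_pos (bracket_pos n) 2)

lemma decayKernel_nonneg (n : ℤ) : 0 ≤ decayKernel n := (decayKernel_pos n).le

lemma summable_decayKernel : Summable decayKernel := by
  have h : Summable fun n : ℕ => (((n : ℝ) + 1) ^ 2)⁻¹ := by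
    simpa only [Nat.cast_add_one] using
      (summable_nat_add_iff 1).2 (Real.summable_nat_pow_inv.2 one_lt_two)
  refine Summable.of_nat_of_neg ?_ ?_ <;>
  · refine h.congr fun n => ?_
    simp [decayKernel, bracket, add_comm]

/-- The total mass `Σₙ (1 + |n|)⁻²` of the kernel. -/
noncomputable def kernelMass : ℝ := ∑' n, decayKernel n

lemma kernelMass_pos : 0 < kernelMass :=
  summable_decayKernel.tsum_pos decayKernel_nonneg 0 (decayKernel_pos 0)

lemma sum_decayKernel_mul_le (s : Finset ℤ) (x y : ℤ → ℝ) {θ : ℝ} (hθ : 0 < θ) :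
    ∑ k ∈ s, ∑ l ∈ s, decayKernel (k - l) * (x k * y l) ≤
      kernelMass / 2 * (θ * ∑ k ∈ s, x k ^ 2 + θ⁻¹ * ∑ k ∈ s, y k ^ 2) :=
  sum_sum_mul_le_of_row_col_sum_le s s (fun _ _ => decayKernel_nonneg _)
    (fun k _ => sum_comp_sub_left_le_tsum decayKernel_nonneg summable_decayKernel s k)
    (fun l _ => sum_comp_sub_right_le_tsum decayKernel_nonneg summable_decayKernel s l) x y hθ

/-- Convolution of a sequence with `decayKernel`. -/
noncomputable def kernelConv (y : ℤ → ℝ) (k : ℤ) : ℝ := ∑' l, decayKernel (k - l) * y l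

variable {y : ℤ → ℝ}

lemma summable_decayKernel_mul (hy : Summable fun l => y l ^ 2) (k : ℤ) :
    Summable fun l => decayKernel (k - l) * y l :=
  summable_comp_sub_mul decayKernel_nonneg summable_decayKernel hy k

lemma kernelConv_nonneg (hy : ∀ l, 0 ≤ y l) (k : ℤ) : 0 ≤ kernelConv y k :=
  tsum_nonneg fun l => mul_nonneg (decayKernel_nonneg _) (hy l)

lemma sum_kernelConv_sq_le (hy : Summable fun l => y l ^ 2) (s : Finset ℤ) :
    ∑ k ∈ s, kernelConv y k ^ 2 ≤ kernelMass ^ 2 * ∑' l, y l ^ 2 :=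
  sum_sq_tsum_comp_sub_mul_le decayKernel_nonneg summable_decayKernel hy s

end Kernel

open Complex ComplexConjugate

/-! ### Symbols -/

section Tent

/-- The tent cutoff `max 0 (1 - |k| / K)`. It is Lipschitz with constant `1 / K`, so that its
commutator with `∂³` is of second order. -/
noncomputable def tent (K : ℕ) (k : ℤ) : ℝ := max 0 (1 - |(k : ℝ)| / K)

variable {K : ℕ} {k l : ℤ}

lemma tent_nonneg (K : ℕ) (k : ℤ) : 0 ≤ tent K k := le_max_left _ _

lemma tent_le_one (K : ℕ) (k : ℤ) : tent K k ≤ 1 :=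
  max_le zero_le_one (sub_le_self _ (by positivity))

lemma tent_sq_le (K : ℕ) (k : ℤ) : tent K k ^ 2 ≤ tent K k :=
  pow_le_of_le_one (tent_nonneg K k) (tent_le_one K k) two_ne_zero

lemma tent_eq_zero (hK : 1 ≤ K) (h : (K : ℝ) ≤ |(k : ℝ)|) : tent K k = 0 := by
  have hK' : (0 : ℝ) < K := by exact_mod_cast hK
  exact max_eq_left (sub_nonpos.2 ((one_le_div hK').2 h))

lemma half_le_tent (hK : 1 ≤ K) (h : |(k : ℝ)| ≤ K / 2) : 1 / 2 ≤ tent K k := by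
  have hK' : (0 : ℝ) < K := by exact_mod_cast hK
  have hle : |(k : ℝ)| / K ≤ 1 / 2 := by
    rw [div_le_iff₀ hK']
    linarith
  exact le_max_of_le_right (by linarith)

lemma abs_tent_sub_tent_le (K : ℕ) (k l : ℤ) :
    |tent K k - tent K l| ≤ |((k - l : ℤ) : ℝ)| / K := by
  refine (abs_max_sub_max_le_max _ _ _ _).trans ?_
  rw [sub_self, abs_zero, sub_sub_sub_cancel_left, ← sub_div, abs_div, Nat.abs_cast]
  refine max_le (by positivity) (div_le_div_of_nonneg_right ?_ (Nat.cast_nonneg K))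
  push_cast
  rw [abs_sub_comm (k : ℝ)]
  exact abs_abs_sub_abs_le _ _

/-- The nonzero frequencies of modulus at most `2K`: the support of `tent K` lies well inside, so
that the remaining frequencies are separated from it. -/
noncomputable def frequencies (K : ℕ) : Finset ℤ := (Finset.Icc (-(2 * K : ℤ)) (2 * K)).erase 0

lemma mem_frequencies : k ∈ frequencies K ↔ k ≠ 0 ∧ |(k : ℝ)| ≤ 2 * K := by
  rw [frequencies, Finset.mem_erase, Finset.mem_Icc, ← abs_le]
  refine and_congr_right fun _ => ?_
  exact_mod_cast Iff.rfl

end Tent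

section Polynomials

lemma abs_sq_add_mul_add_sq_le (x y : ℝ) : |y ^ 2 + y * x + x ^ 2| ≤ 3 / 2 * (x ^ 2 + y ^ 2) :=
  abs_le.2 ⟨by nlinarith [sq_nonneg (x + y)], by nlinarith [sq_nonneg (x - y)]⟩

lemma abs_sub_mul_sq_le_abs_pow_five_sub (x y : ℝ) :
    |x - y| * (x ^ 2 + y ^ 2) ^ 2 ≤ 4 * |x ^ 5 - y ^ 5| := by
  have hfactor : x ^ 5 - y ^ 5 =
      (x - y) * (x ^ 4 + x ^ 3 * y + x ^ 2 * y ^ 2 + x * y ^ 3 + y ^ 4) := by ring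
  have hquartic : (x ^ 2 + y ^ 2) ^ 2 ≤
      4 * (x ^ 4 + x ^ 3 * y + x ^ 2 * y ^ 2 + x * y ^ 3 + y ^ 4) := by
    have : 0 ≤ (x + y) ^ 2 * (2 * x ^ 2 + 2 * y ^ 2 + (x - y) ^ 2) := by positivity
    nlinarith
  rw [hfactor, abs_mul, mul_left_comm]
  exact mul_le_mul_of_nonneg_left
    (hquartic.trans (mul_le_mul_of_nonneg_left (le_abs_self _) (by norm_num))) (abs_nonneg _)

variable {k l : ℤ}

lemma one_le_abs_intCast_sub (h : k ≠ l) : (1 : ℝ) ≤ |((k - l : ℤ) : ℝ)| := by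
  exact_mod_cast Int.one_le_abs (sub_ne_zero.2 h)

lemma one_le_sq_add_sq (h : k ≠ l) : (1 : ℝ) ≤ (k : ℝ) ^ 2 + (l : ℝ) ^ 2 := by
  have hpos : 0 < k ^ 2 + l ^ 2 := by
    by_contra hc
    have hk : k = 0 := by nlinarith [sq_nonneg k, sq_nonneg l]
    have hl : l = 0 := by nlinarith [sq_nonneg k, sq_nonneg l]
    exact h (hk.trans hl.symm)
  exact_mod_cast hpos

lemma abs_pow_five_sub_pos (h : k ≠ l) : 0 < |(k : ℝ) ^ 5 - (l : ℝ) ^ 5| := by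
  have hle := abs_sub_mul_sq_le_abs_pow_five_sub (k : ℝ) l
  have hsub := one_le_abs_intCast_sub h
  have hsq := one_le_sq_add_sq h
  push_cast at hsub
  have : 0 < |(k : ℝ) - l| * ((k : ℝ) ^ 2 + (l : ℝ) ^ 2) ^ 2 := by positivity
  linarith

end Polynomials

section CommutatorSymbol

/-- The symbol `χ(k)² l³ - χ(l)² k³` which symmetrisation of the energy identity makes out of a
third order term. -/
noncomputable def commutatorSymbol (K : ℕ) (k l : ℤ) : ℝ :=
  tent K k ^ 2 * l ^ 3 - tent K l ^ 2 * k ^ 3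

variable {K : ℕ}

lemma commutatorSymbol_swap (K : ℕ) (k l : ℤ) :
    commutatorSymbol K l k = -commutatorSymbol K k l := by
  unfold commutatorSymbol; ring

lemma abs_commutatorSymbol_le_of_abs_le (hK : 1 ≤ K) {k : ℤ} (l : ℤ) (h : |(k : ℝ)| ≤ K) :
    |commutatorSymbol K k l| ≤
      4 * |((k - l : ℤ) : ℝ)| * (tent K k + tent K l) * ((k : ℝ) ^ 2 + (l : ℝ) ^ 2) := by
  have hK' : (0 : ℝ) < K := by exact_mod_cast hK
  have h0 := tent_nonneg K k
  have h1 := tent_nonneg K l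
  have hsplit : commutatorSymbol K k l =
      tent K k ^ 2 * (-((k - l : ℤ) : ℝ) * ((l : ℝ) ^ 2 + l * k + k ^ 2)) +
        k ^ 3 * ((tent K k - tent K l) * (tent K k + tent K l)) := by
    unfold commutatorSymbol; push_cast; ring
  have hlip := abs_tent_sub_tent_le K k l
  set n : ℝ := |((k - l : ℤ) : ℝ)| with hn
  have hn0 : 0 ≤ n := abs_nonneg _
  have hcube : |(k : ℝ) ^ 3| * (n / K) ≤ k ^ 2 * n := by
    rw [abs_pow, pow_succ, sq_abs, mul_assoc]
    refine mul_le_mul_of_nonneg_left ?_ (sq_nonneg _)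
    rw [mul_div_assoc', div_le_iff₀ hK', mul_comm]
    exact mul_le_mul_of_nonneg_left h hn0
  have hfirst : |tent K k ^ 2 * (-((k - l : ℤ) : ℝ) * ((l : ℝ) ^ 2 + l * k + k ^ 2))| ≤
      (tent K k + tent K l) * (n * (3 / 2 * ((k : ℝ) ^ 2 + l ^ 2))) := by
    rw [abs_mul, abs_mul, abs_neg, ← hn, abs_of_nonneg (sq_nonneg _)]
    gcongr
    · linarith [tent_sq_le K k]
    · exact abs_sq_add_mul_add_sq_le _ _
  have hsecond : |(k : ℝ) ^ 3 * ((tent K k - tent K l) * (tent K k + tent K l))| ≤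
      (tent K k + tent K l) * (k ^ 2 * n) := by
    rw [abs_mul, abs_mul, abs_of_nonneg (add_nonneg h0 h1)]
    calc _ ≤ |(k : ℝ) ^ 3| * (n / K * (tent K k + tent K l)) := by gcongr
      _ = (tent K k + tent K l) * (|(k : ℝ) ^ 3| * (n / K)) := by ring
      _ ≤ _ := by gcongr
  rw [hsplit]
  have hk : 0 ≤ (tent K k + tent K l) * (n * (k : ℝ) ^ 2) := by positivity
  have hl : 0 ≤ (tent K k + tent K l) * (n * (l : ℝ) ^ 2) := by positivity
  linarith [abs_add_le (tent K k ^ 2 * (-((k - l : ℤ) : ℝ) * ((l : ℝ) ^ 2 + l * k + k ^ 2)))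
    ((k : ℝ) ^ 3 * ((tent K k - tent K l) * (tent K k + tent K l)))]

lemma abs_commutatorSymbol_le (hK : 1 ≤ K) (k l : ℤ) :
    |commutatorSymbol K k l| ≤
      4 * |((k - l : ℤ) : ℝ)| * (tent K k + tent K l) * ((k : ℝ) ^ 2 + (l : ℝ) ^ 2) := by
  rcases le_total |(k : ℝ)| K with hk | hk
  · exact abs_commutatorSymbol_le_of_abs_le hK l hk
  rcases le_total |(l : ℝ)| K with hl | hl
  · have h := abs_commutatorSymbol_le_of_abs_le hK k hl
    rw [commutatorSymbol_swap, abs_neg] at h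
    refine h.trans_eq ?_
    push_cast
    rw [abs_sub_comm (l : ℝ)]
    ring
  · simp [commutatorSymbol, tent_eq_zero hK hk, tent_eq_zero hK hl]

end CommutatorSymbol

section EnergySymbol

/-- The symbol of the bilinear form `d/dt Σₖ χ(k)² |W k|²` when the leading symbol of the equation
for `W` is `i α₀(k - l) l³ + α₁(k - l) l²` and `α₀(-n) = conj α₀(n)`. -/
noncomputable def energySymbol (K : ℕ) (α₀ α₁ : ℤ → ℂ) (k l : ℤ) : ℂ :=
  -I * α₀ (k - l) * (commutatorSymbol K k l : ℝ) -
    2 * α₁ (k - l) * (tent K k ^ 2 * (l : ℝ) ^ 2 : ℝ)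

/-- The symbol of the normal form correction of the energy. Its time derivative produces the factor
`-i γ₀ (k⁵ - l⁵)`, which turns it into `energySymbol`. It vanishes on the diagonal, by `x / 0 = 0`.
-/
noncomputable def correctionSymbol (γ0 : ℝ) (K : ℕ) (α₀ α₁ : ℤ → ℂ) (k l : ℤ) : ℂ :=
  I * energySymbol K α₀ α₁ k l / (γ0 * ((k : ℝ) ^ 5 - (l : ℝ) ^ 5) : ℝ)

/-- The dispersion relation: `∂ₜ + γ₀∂⁵ + γ₁∂³ + γ₂∂` acts on `e^{ikx}` as `∂ₜ + i ω(k)`. -/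
def dispersion (γ0 γ1 γ2 : ℝ) (k : ℤ) : ℝ := γ0 * k ^ 5 - γ1 * k ^ 3 + γ2 * k

variable {γ0 : ℝ} {K : ℕ} {α₀ α₁ : ℤ → ℂ} {k l : ℤ} {B : ℝ}

lemma correctionSymbol_self (γ0 : ℝ) (K : ℕ) (α₀ α₁ : ℤ → ℂ) (k : ℤ) :
    correctionSymbol γ0 K α₀ α₁ k k = 0 := by
  simp [correctionSymbol]

lemma norm_energySymbol_le (hK : 1 ≤ K) (hkl : k ≠ l) (h0 : ‖α₀ (k - l)‖ ≤ B)
    (h1 : ‖α₁ (k - l)‖ ≤ B) :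
    ‖energySymbol K α₀ α₁ k l‖ ≤
      6 * B * (tent K k + tent K l) * |((k - l : ℤ) : ℝ)| * ((k : ℝ) ^ 2 + (l : ℝ) ^ 2) := by
  have hcomm := abs_commutatorSymbol_le hK k l
  have hn := one_le_abs_intCast_sub hkl
  have hk := tent_nonneg K k
  have hl := tent_nonneg K l
  have hB : 0 ≤ B := (norm_nonneg _).trans h0
  set n : ℝ := |((k - l : ℤ) : ℝ)|
  unfold energySymbol
  refine (norm_sub_le _ _).trans ?_
  simp only [norm_mul, norm_neg, norm_I, one_mul, Complex.norm_real, Real.norm_eq_abs,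
    Complex.norm_ofNat]
  have hthird : ‖α₀ (k - l)‖ * |commutatorSymbol K k l| ≤
      B * (4 * n * (tent K k + tent K l) * ((k : ℝ) ^ 2 + (l : ℝ) ^ 2)) := by gcongr
  have hsecond : 2 * ‖α₁ (k - l)‖ * (|tent K k ^ 2| * |(l : ℝ) ^ 2|) ≤
      2 * B * ((tent K k + tent K l) * (n * ((k : ℝ) ^ 2 + (l : ℝ) ^ 2))) := by
    rw [← abs_mul, abs_of_nonneg (by positivity)]
    gcongr
    · linarith [tent_sq_le K k]
    · nlinarith [sq_nonneg (k : ℝ), sq_nonneg (l : ℝ)]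
  linarith

lemma norm_correctionSymbol_mul_le (hγ : γ0 ≠ 0) (hK : 1 ≤ K) (h0 : ‖α₀ (k - l)‖ ≤ B)
    (h1 : ‖α₁ (k - l)‖ ≤ B) :
    ‖correctionSymbol γ0 K α₀ α₁ k l‖ * ((k : ℝ) ^ 2 + (l : ℝ) ^ 2) ≤
      24 / |γ0| * B * (tent K k + tent K l) := by
  have hk := tent_nonneg K k
  have hl := tent_nonneg K l
  have hB : 0 ≤ B := (norm_nonneg _).trans h0
  have : 0 < |γ0| := abs_pos.2 hγ
  rcases eq_or_ne k l with rfl | hkl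
  · rw [correctionSymbol_self, norm_zero, zero_mul]
    positivity
  have henergy := norm_energySymbol_le (α₀ := α₀) (α₁ := α₁) hK hkl h0 h1
  have hfive := abs_sub_mul_sq_le_abs_pow_five_sub (k : ℝ) l
  have hpos := abs_pow_five_sub_pos hkl
  rw [← Int.cast_sub] at hfive
  set n : ℝ := |((k - l : ℤ) : ℝ)|
  set p : ℝ := (k : ℝ) ^ 2 + (l : ℝ) ^ 2
  unfold correctionSymbol
  rw [norm_div, norm_mul, norm_I, one_mul, Complex.norm_real, Real.norm_eq_abs, abs_mul,
    div_mul_eq_mul_div, div_le_iff₀ (by positivity)]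
  calc _ ≤ 6 * B * (tent K k + tent K l) * n * p * p := by gcongr
    _ = 6 * B * (tent K k + tent K l) * (n * p ^ 2) := by ring
    _ ≤ 6 * B * (tent K k + tent K l) * (4 * |(k : ℝ) ^ 5 - (l : ℝ) ^ 5|) := by gcongr
    _ = _ := by field_simp; ring

lemma energySymbol_eq_neg_correctionSymbol_mul (hγ : γ0 ≠ 0) (hkl : k ≠ l) :
    energySymbol K α₀ α₁ k l =
      -(correctionSymbol γ0 K α₀ α₁ k l * (I * (γ0 * ((k : ℝ) ^ 5 - (l : ℝ) ^ 5) : ℝ))) := by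
  have hne : ((γ0 * ((k : ℝ) ^ 5 - (l : ℝ) ^ 5) : ℝ) : ℂ) ≠ 0 :=
    ofReal_ne_zero.2 (mul_ne_zero hγ (abs_pos.1 (abs_pow_five_sub_pos hkl)))
  rw [correctionSymbol, mul_comm I ((_ : ℝ) : ℂ), ← mul_assoc, div_mul_cancel₀ _ hne]
  linear_combination energySymbol K α₀ α₁ k l * I_mul_I

lemma dispersion_sub_dispersion (γ0 γ1 γ2 : ℝ) (k l : ℤ) :
    dispersion γ0 γ1 γ2 k - dispersion γ0 γ1 γ2 l = γ0 * ((k : ℝ) ^ 5 - (l : ℝ) ^ 5) +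
      ((k - l : ℤ) : ℝ) * (-γ1 * ((l : ℝ) ^ 2 + l * k + k ^ 2) + γ2) := by
  unfold dispersion; push_cast; ring

/-- The correction cancels the energy symbol up to the lower order part of the dispersion. -/
lemma norm_energySymbol_add_correctionSymbol_mul_le (hγ : γ0 ≠ 0) (γ1 γ2 : ℝ) (hK : 1 ≤ K)
    (hkl : k ≠ l) (h0 : ‖α₀ (k - l)‖ ≤ B) (h1 : ‖α₁ (k - l)‖ ≤ B) :
    ‖energySymbol K α₀ α₁ k l + correctionSymbol γ0 K α₀ α₁ k l *
        (I * (dispersion γ0 γ1 γ2 k - dispersion γ0 γ1 γ2 l : ℝ))‖ ≤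
      48 / |γ0| * (2 * |γ1| + |γ2|) * (B * |((k - l : ℤ) : ℝ)|) := by
  have hcorr := norm_correctionSymbol_mul_le hγ hK h0 h1
  have hsq := one_le_sq_add_sq hkl
  have hB : 0 ≤ B := (norm_nonneg _).trans h0
  have hcancel : energySymbol K α₀ α₁ k l + correctionSymbol γ0 K α₀ α₁ k l *
        (I * (dispersion γ0 γ1 γ2 k - dispersion γ0 γ1 γ2 l : ℝ)) =
      correctionSymbol γ0 K α₀ α₁ k l * (I * (((k - l : ℤ) : ℝ) *
        (-γ1 * ((l : ℝ) ^ 2 + l * k + k ^ 2) + γ2) : ℝ)) := by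
    rw [dispersion_sub_dispersion, ofReal_add]
    linear_combination energySymbol_eq_neg_correctionSymbol_mul (K := K) (α₀ := α₀) (α₁ := α₁)
      hγ hkl
  have hlower : |-γ1 * ((l : ℝ) ^ 2 + l * k + k ^ 2) + γ2| ≤
      (2 * |γ1| + |γ2|) * ((k : ℝ) ^ 2 + (l : ℝ) ^ 2) := by
    refine (abs_add_le _ _).trans ?_
    rw [abs_mul, abs_neg]
    nlinarith [abs_nonneg γ1, abs_nonneg γ2, abs_sq_add_mul_add_sq_le (k : ℝ) l]
  rw [hcancel, norm_mul, norm_mul, norm_I, one_mul, Complex.norm_real, Real.norm_eq_abs, abs_mul]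
  set n : ℝ := |((k - l : ℤ) : ℝ)|
  set p : ℝ := (k : ℝ) ^ 2 + (l : ℝ) ^ 2
  calc _ ≤ ‖correctionSymbol γ0 K α₀ α₁ k l‖ * (n * ((2 * |γ1| + |γ2|) * p)) := by gcongr
    _ = ‖correctionSymbol γ0 K α₀ α₁ k l‖ * p * (n * (2 * |γ1| + |γ2|)) := by ring
    _ ≤ 24 / |γ0| * B * (1 + 1) * (n * (2 * |γ1| + |γ2|)) := by
        refine mul_le_mul_of_nonneg_right (hcorr.trans ?_) (by positivity)
        gcongr <;> exact tent_le_one _ _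
    _ = _ := by ring

end EnergySymbol

section LeadingSymbol

/-- The `(k, l)` entry of `α₀ ∂³ + α₁ ∂²` on the Fourier side, `α₀` and `α₁` being given by their
Fourier coefficients. -/
noncomputable def leadingSymbol (α₀ α₁ : ℤ → ℂ) (k l : ℤ) : ℂ :=
  α₀ (k - l) * (-I * (l : ℂ) ^ 3) - α₁ (k - l) * (l : ℂ) ^ 2

variable {C₀ : ℝ} {α₀ α₁ : ℤ → ℂ} {k l : ℤ}

lemma inv_bracket_pow_five (n : ℤ) :
    (bracket n ^ 5)⁻¹ = decayKernel n * (bracket n ^ 3)⁻¹ := by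
  rw [decayKernel, ← mul_inv, ← pow_add]

lemma norm_leadingSymbol_le (h0 : ∀ n, ‖α₀ n‖ ≤ C₀ * (bracket n ^ 5)⁻¹)
    (h1 : ∀ n, ‖α₁ n‖ ≤ C₀ * (bracket n ^ 5)⁻¹) (k l : ℤ) :
    ‖leadingSymbol α₀ α₁ k l‖ ≤
      C₀ * (bracket (k - l) ^ 5)⁻¹ * (|(l : ℝ)| ^ 3 + |(l : ℝ)| ^ 2) := by
  unfold leadingSymbol
  refine (norm_sub_le _ _).trans ?_
  simp only [norm_mul, norm_neg, norm_I, one_mul, norm_pow, Complex.norm_intCast]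
  rw [mul_add]
  gcongr
  · exact h0 _
  · exact h1 _

lemma nonneg_of_norm_le_mul_bracket (h0 : ∀ n, ‖α₀ n‖ ≤ C₀ * (bracket n ^ 5)⁻¹) : 0 ≤ C₀ := by
  simpa [bracket] using (norm_nonneg _).trans (h0 0)

lemma norm_leadingSymbol_le_abs_pow_mul_decayKernel
    (h0 : ∀ n, ‖α₀ n‖ ≤ C₀ * (bracket n ^ 5)⁻¹) (h1 : ∀ n, ‖α₁ n‖ ≤ C₀ * (bracket n ^ 5)⁻¹)
    (hk : k ≠ 0) (l : ℤ) :
    ‖leadingSymbol α₀ α₁ k l‖ ≤ 2 * C₀ * |(k : ℝ)| ^ 3 * decayKernel (k - l) := by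
  have hC := nonneg_of_norm_le_mul_bracket h0
  have hb := one_le_bracket (k - l)
  have := bracket_pos (k - l)
  have hl := abs_le_abs_mul_bracket_sub (k := l) hk
  have hk1 : (1 : ℝ) ≤ |(k : ℝ)| := by exact_mod_cast Int.one_le_abs hk
  have hcube : |(l : ℝ)| ^ 3 ≤ |(k : ℝ)| ^ 3 * bracket (k - l) ^ 3 := by
    rw [← mul_pow]; gcongr
  have hsq : |(l : ℝ)| ^ 2 ≤ |(k : ℝ)| ^ 3 * bracket (k - l) ^ 3 := by
    calc |(l : ℝ)| ^ 2 ≤ (|(k : ℝ)| * bracket (k - l)) ^ 2 := by gcongr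
      _ ≤ (|(k : ℝ)| * bracket (k - l)) ^ 3 :=
          pow_le_pow_right₀ (one_le_mul_of_one_le_of_one_le hk1 hb) (by norm_num)
      _ = _ := mul_pow _ _ _
  calc _ ≤ C₀ * (bracket (k - l) ^ 5)⁻¹ * (|(l : ℝ)| ^ 3 + |(l : ℝ)| ^ 2) :=
        norm_leadingSymbol_le h0 h1 k l
    _ ≤ C₀ * (bracket (k - l) ^ 5)⁻¹ *
        (|(k : ℝ)| ^ 3 * bracket (k - l) ^ 3 + |(k : ℝ)| ^ 3 * bracket (k - l) ^ 3) := by gcongr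
    _ = _ := by rw [inv_bracket_pow_five]; field_simp; ring

/-- Frequencies outside `frequencies K` are so far from the support of `tent K` that the decay of
the coefficients absorbs the three derivatives. -/
lemma norm_leadingSymbol_le_of_separated (h0 : ∀ n, ‖α₀ n‖ ≤ C₀ * (bracket n ^ 5)⁻¹)
    (h1 : ∀ n, ‖α₁ n‖ ≤ C₀ * (bracket n ^ 5)⁻¹) (hkl : 2 * |(k : ℝ)| ≤ |(l : ℝ)|) :
    ‖leadingSymbol α₀ α₁ k l‖ ≤ 12 * C₀ * decayKernel (k - l) := by
  have hC := nonneg_of_norm_le_mul_bracket h0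
  have hb := one_le_bracket (k - l)
  have := bracket_pos (k - l)
  have hl : |(l : ℝ)| ≤ 2 * bracket (k - l) := by
    have hle := abs_le_bracket (k - l)
    push_cast at hle
    linarith [abs_sub_abs_le_abs_sub (l : ℝ) k, abs_sub_comm (k : ℝ) l]
  calc _ ≤ C₀ * (bracket (k - l) ^ 5)⁻¹ * (|(l : ℝ)| ^ 3 + |(l : ℝ)| ^ 2) :=
        norm_leadingSymbol_le h0 h1 k l
    _ ≤ C₀ * (bracket (k - l) ^ 5)⁻¹ *
        ((2 * bracket (k - l)) ^ 3 + (2 * bracket (k - l)) ^ 2) := by gcongr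
    _ ≤ C₀ * (bracket (k - l) ^ 5)⁻¹ * (12 * bracket (k - l) ^ 3) := by
        gcongr
        linarith [pow_le_pow_right₀ hb (show 2 ≤ 3 by norm_num)]
    _ = _ := by rw [inv_bracket_pow_five]; field_simp

/-- Symmetrisation in `(k, l)` turns the leading part of the energy identity into
`energySymbol`. -/
lemma two_mul_re_sum_tent_sq_mul_leadingSymbol (hherm : ∀ n, α₀ (-n) = conj (α₀ n)) (K : ℕ)
    (s : Finset ℤ) (W : ℤ → ℂ) :
    2 * (∑ k ∈ s, ∑ l ∈ s,
        (tent K k ^ 2 : ℝ) * leadingSymbol α₀ α₁ k l * (conj (W k) * W l)).re =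
      (∑ k ∈ s, ∑ l ∈ s, energySymbol K α₀ α₁ k l * (conj (W k) * W l)).re := by
  set T : ℤ → ℤ → ℂ := fun k l =>
    (tent K k ^ 2 : ℝ) * (α₀ (k - l) * (-I * (l : ℂ) ^ 3)) * (conj (W k) * W l) with hT
  set T' : ℤ → ℤ → ℂ := fun k l =>
    (tent K k ^ 2 : ℝ) * (α₁ (k - l) * (l : ℂ) ^ 2) * (conj (W k) * W l) with hT'
  have hleading (k l) : ((tent K k ^ 2 : ℝ) : ℂ) * leadingSymbol α₀ α₁ k l *
      (conj (W k) * W l) = T k l - T' k l := by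
    simp only [hT, hT', leadingSymbol]; ring
  have henergy (k l) : energySymbol K α₀ α₁ k l * (conj (W k) * W l) =
      T k l + conj (T l k) - 2 * T' k l := by
    have hh := hherm (k - l)
    rw [neg_sub] at hh
    simp only [hT, hT', energySymbol, commutatorSymbol, map_mul, hh, conj_conj, map_neg, conj_I,
      map_pow, conj_ofReal, map_intCast]
    push_cast; ring
  have hswap : (∑ k ∈ s, ∑ l ∈ s, conj (T l k)).re = (∑ k ∈ s, ∑ l ∈ s, T k l).re := by
    rw [Finset.sum_comm]
    simp only [Complex.re_sum, conj_re]
  simp only [hleading, henergy, Finset.sum_sub_distrib, Finset.sum_add_distrib, Complex.sub_re,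
    Complex.add_re, hswap, ← Finset.mul_sum]
  simp only [Complex.mul_re, Complex.re_ofNat, Complex.im_ofNat, zero_mul, sub_zero]
  ring

end LeadingSymbol

lemma norm_tsum_sub_sum_le {ι E : Type*} [NormedAddCommGroup E] [CompleteSpace E] {f : ι → E}
    {b : ι → ℝ} (s : Finset ι) (hb : Summable b) (hb0 : ∀ i, 0 ≤ b i) (hf : Summable f)
    (hfb : ∀ i ∉ s, ‖f i‖ ≤ b i) : ‖∑' i, f i - ∑ i ∈ s, f i‖ ≤ ∑' i, b i := by
  rw [← hf.sum_add_tsum_compl (s := s), add_sub_cancel_left, _root_.tsum_subtype]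
  refine tsum_of_norm_bounded hb.hasSum fun i => ?_
  by_cases hi : i ∈ s
  · simpa [hi] using hb0 i
  · simpa [hi] using hfb i hi

section LinearizedBounds

/-- Quantitative assumptions at a fixed time on the Fourier side of the linear equation
`∂ₜ W + i ω W = H` with `H = α₀ ∂³W + α₁ ∂²W + (first order) + e`. The sequences `β₀`, `β₁` are the
time derivatives of `α₀`, `α₁`, and `Re α₁(0) ≤ -c` makes the second order part backward parabolic
on average. -/
structure LinearizedBounds (C₀ c : ℝ) (α₀ α₁ β₀ β₁ W H : ℤ → ℂ) (e : ℤ → ℝ) : Prop where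
  norm_α₀_le : ∀ n, ‖α₀ n‖ ≤ C₀ * (bracket n ^ 5)⁻¹
  norm_α₁_le : ∀ n, ‖α₁ n‖ ≤ C₀ * (bracket n ^ 5)⁻¹
  conj_α₀ : ∀ n, α₀ (-n) = conj (α₀ n)
  re_α₁_zero_le : (α₁ 0).re ≤ -c
  norm_β₀_le : ∀ n, ‖β₀ n‖ ≤ C₀
  norm_β₁_le : ∀ n, ‖β₁ n‖ ≤ C₀
  W_zero : W 0 = 0
  summable_W : Summable fun k => ‖W k‖ ^ 2
  norm_sub_tsum_le : ∀ k, k ≠ 0 → ‖H k - ∑' l, leadingSymbol α₀ α₁ k l * W l‖ ≤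
    C₀ * |(k : ℝ)| * kernelConv (fun l => ‖W l‖) k + e k
  e_nonneg : ∀ k, 0 ≤ e k
  sum_e_sq_le : ∀ s : Finset ℤ, ∑ k ∈ s, e k ^ 2 ≤ C₀

namespace LinearizedBounds

variable {C₀ c : ℝ} {α₀ α₁ β₀ β₁ W H : ℤ → ℂ} {e : ℤ → ℝ} {k : ℤ}
  (h : LinearizedBounds C₀ c α₀ α₁ β₀ β₁ W H e)
include h

lemma const_nonneg : 0 ≤ C₀ := (norm_nonneg _).trans (h.norm_β₀_le 0)

lemma sum_le_tsum (s : Finset ℤ) : ∑ k ∈ s, ‖W k‖ ^ 2 ≤ ∑' k, ‖W k‖ ^ 2 :=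
  h.summable_W.sum_le_tsum s fun _ _ => sq_nonneg _

lemma norm_leadingSymbol_mul_le (hk : k ≠ 0) (l : ℤ) :
    ‖leadingSymbol α₀ α₁ k l * W l‖ ≤
      2 * C₀ * |(k : ℝ)| ^ 3 * (decayKernel (k - l) * ‖W l‖) := by
  rw [norm_mul, ← mul_assoc]
  exact mul_le_mul_of_nonneg_right
    (norm_leadingSymbol_le_abs_pow_mul_decayKernel h.norm_α₀_le h.norm_α₁_le hk l) (norm_nonneg _)

lemma summable_leadingSymbol_mul (hk : k ≠ 0) : Summable fun l => leadingSymbol α₀ α₁ k l * W l :=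
  Summable.of_norm_bounded ((summable_decayKernel_mul h.summable_W k).mul_left _)
    (h.norm_leadingSymbol_mul_le hk)

lemma norm_H_le (hk : k ≠ 0) :
    ‖H k‖ ≤ |(k : ℝ)| ^ 3 * (3 * C₀ * kernelConv (fun l => ‖W l‖) k + e k) := by
  have hC := h.const_nonneg
  have hk1 : (1 : ℝ) ≤ |(k : ℝ)| := by exact_mod_cast Int.one_le_abs hk
  have hz : 0 ≤ kernelConv (fun l => ‖W l‖) k := kernelConv_nonneg (fun _ => norm_nonneg _) k
  have hleading : ‖∑' l, leadingSymbol α₀ α₁ k l * W l‖ ≤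
      2 * C₀ * |(k : ℝ)| ^ 3 * kernelConv (fun l => ‖W l‖) k :=
    tsum_of_norm_bounded ((summable_decayKernel_mul h.summable_W k).hasSum.mul_left _)
      (h.norm_leadingSymbol_mul_le hk)
  have hfirst : C₀ * |(k : ℝ)| * kernelConv (fun l => ‖W l‖) k ≤
      C₀ * |(k : ℝ)| ^ 3 * kernelConv (fun l => ‖W l‖) k := by
    gcongr
    exact le_self_pow₀ hk1 (by norm_num)
  have he : e k ≤ |(k : ℝ)| ^ 3 * e k :=
    le_mul_of_one_le_left (h.e_nonneg k) (one_le_pow₀ hk1)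
  linarith [h.norm_sub_tsum_le k hk, norm_sub_norm_le (H k) (∑' l, leadingSymbol α₀ α₁ k l * W l)]

lemma norm_tsum_sub_sum_frequencies_le {K : ℕ} (hk : k ≠ 0) (hkK : |(k : ℝ)| < K) :
    ‖∑' l, leadingSymbol α₀ α₁ k l * W l - ∑ l ∈ frequencies K, leadingSymbol α₀ α₁ k l * W l‖ ≤
      12 * C₀ * kernelConv (fun l => ‖W l‖) k := by
  have hC := h.const_nonneg
  rw [kernelConv, ← tsum_mul_left]
  refine norm_tsum_sub_sum_le _ ((summable_decayKernel_mul h.summable_W k).mul_left _)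
    (fun l => ?_) (h.summable_leadingSymbol_mul hk) fun l hl => ?_
  · have := decayKernel_nonneg (k - l)
    positivity
  rcases eq_or_ne l 0 with rfl | hl0
  · simp [h.W_zero]
  have hlK : 2 * (K : ℝ) < |(l : ℝ)| := not_le.1 fun hc => hl (mem_frequencies.2 ⟨hl0, hc⟩)
  rw [norm_mul, ← mul_assoc]
  exact mul_le_mul_of_nonneg_right
    (norm_leadingSymbol_le_of_separated h.norm_α₀_le h.norm_α₁_le (by linarith)) (norm_nonneg _)

lemma tent_mul_norm_sub_sum_frequencies_le {K : ℕ} (hK : 1 ≤ K) (hk : k ≠ 0) :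
    tent K k * ‖H k - ∑ l ∈ frequencies K, leadingSymbol α₀ α₁ k l * W l‖ ≤
      12 * C₀ * kernelConv (fun l => ‖W l‖) k +
        (C₀ * (tent K k * |(k : ℝ)|) * kernelConv (fun l => ‖W l‖) k + e k) := by
  have hC := h.const_nonneg
  have he := h.e_nonneg k
  have hz : 0 ≤ kernelConv (fun l => ‖W l‖) k := kernelConv_nonneg (fun _ => norm_nonneg _) k
  have ht0 := tent_nonneg K k
  have ht1 := tent_le_one K k
  rcases le_or_gt (K : ℝ) |(k : ℝ)| with hkK | hkK
  · rw [tent_eq_zero hK hkK]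
    simp only [zero_mul, mul_zero, zero_add]
    positivity
  calc _ ≤ tent K k * (12 * C₀ * kernelConv (fun l => ‖W l‖) k +
        (C₀ * |(k : ℝ)| * kernelConv (fun l => ‖W l‖) k + e k)) := by
        refine mul_le_mul_of_nonneg_left ?_ ht0
        linarith [h.norm_tsum_sub_sum_frequencies_le hk hkK, h.norm_sub_tsum_le k hk,
          norm_sub_le_norm_sub_add_norm_sub (H k) (∑' l, leadingSymbol α₀ α₁ k l * W l)
            (∑ l ∈ frequencies K, leadingSymbol α₀ α₁ k l * W l)]
    _ = tent K k * (12 * C₀ * kernelConv (fun l => ‖W l‖) k) +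
        (C₀ * (tent K k * |(k : ℝ)|) * kernelConv (fun l => ‖W l‖) k + tent K k * e k) := by ring
    _ ≤ _ := add_le_add (mul_le_of_le_one_left (by positivity) ht1)
        (add_le_add le_rfl (mul_le_of_le_one_left he ht1))

end LinearizedBounds

end LinearizedBounds

section TruncatedEnergy

/-- The tent-truncated `L²` energy together with its normal form correction. -/
noncomputable def truncatedEnergy (γ0 : ℝ) (K : ℕ) (α₀ α₁ W : ℤ → ℂ) : ℝ :=
  ∑ k ∈ frequencies K, tent K k ^ 2 * ‖W k‖ ^ 2 +
    (∑ k ∈ frequencies K, ∑ l ∈ frequencies K,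
      correctionSymbol γ0 K α₀ α₁ k l * (conj (W k) * W l)).re

/-- The time derivative of `truncatedEnergy` when `β₀`, `β₁`, `V` are the time derivatives of
`α₀`, `α₁`, `W`. -/
noncomputable def truncatedEnergyDeriv (γ0 : ℝ) (K : ℕ) (α₀ α₁ β₀ β₁ W V : ℤ → ℂ) : ℝ :=
  ∑ k ∈ frequencies K, tent K k ^ 2 * (2 * (conj (W k) * V k).re) +
    (∑ k ∈ frequencies K, ∑ l ∈ frequencies K,
      (correctionSymbol γ0 K β₀ β₁ k l * (conj (W k) * W l) +
        correctionSymbol γ0 K α₀ α₁ k l * (conj (V k) * W l + conj (W k) * V l))).re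

end TruncatedEnergy

/-! ### The energy estimate -/

section CorrectionBounds

variable {K : ℕ} {k l : ℤ}

lemma inv_bracket_pow_five_mul_bracket_le (n : ℤ) :
    (bracket n ^ 5)⁻¹ * bracket n ≤ decayKernel n := by
  have hb := bracket_pos n
  have hb2 : 1 ≤ bracket n ^ 2 := one_le_pow₀ (one_le_bracket n)
  calc _ = decayKernel n * (bracket n ^ 2)⁻¹ := by rw [inv_bracket_pow_five]; field_simp
    _ ≤ decayKernel n := mul_le_of_le_one_right (decayKernel_nonneg n) (inv_le_one_of_one_le₀ hb2)

lemma inv_bracket_pow_five_le_decayKernel (n : ℤ) : (bracket n ^ 5)⁻¹ ≤ decayKernel n :=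
  (le_mul_of_one_le_right (inv_nonneg.2 (pow_pos (bracket_pos n) 5).le) (one_le_bracket n)).trans
    (inv_bracket_pow_five_mul_bracket_le n)

lemma tent_add_tent_mul_abs_le (hK : 1 ≤ K) (hk : k ∈ frequencies K) (hl : l ∈ frequencies K) :
    (tent K k + tent K l) * |(l : ℝ)| ≤ 2 * (tent K k * |(k : ℝ)| + 1) * bracket (k - l) := by
  have : (0 : ℝ) < K := by exact_mod_cast hK
  have htent := tent_nonneg K k
  have hlk : |(l : ℝ)| ≤ |(k : ℝ)| * bracket (k - l) :=
    abs_le_abs_mul_bracket_sub (mem_frequencies.1 hk).1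
  have hlK := (mem_frequencies.1 hl).2
  have hlip := (abs_le.1 (abs_tent_sub_tent_le K k l)).1
  have hdiff : (tent K l - tent K k) * |(l : ℝ)| ≤ 2 * |((k - l : ℤ) : ℝ)| :=
    calc _ ≤ |((k - l : ℤ) : ℝ)| / K * (2 * K) :=
          mul_le_mul (by linarith) hlK (abs_nonneg _) (by positivity)
      _ = _ := by field_simp
  nlinarith [abs_le_bracket (k - l), mul_le_mul_of_nonneg_left hlk htent]

lemma mul_abs_pow_three_le (hK : 1 ≤ K) (hk : k ∈ frequencies K) (hl : l ∈ frequencies K)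
    {g C : ℝ} (hg : 0 ≤ g) (hC : 0 ≤ C) (h : g * ((k : ℝ) ^ 2 + (l : ℝ) ^ 2) ≤
      C * (bracket (k - l) ^ 5)⁻¹ * (tent K k + tent K l)) :
    g * |(l : ℝ)| ^ 3 ≤ C * decayKernel (k - l) * (2 * (tent K k * |(k : ℝ)| + 1)) := by
  have hb := bracket_pos (k - l)
  have htent := tent_nonneg K k
  calc g * |(l : ℝ)| ^ 3 = g * (l : ℝ) ^ 2 * |(l : ℝ)| := by rw [pow_succ, sq_abs]; ring
    _ ≤ g * ((k : ℝ) ^ 2 + (l : ℝ) ^ 2) * |(l : ℝ)| := by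
        gcongr
        linarith [sq_nonneg (k : ℝ)]
    _ ≤ C * (bracket (k - l) ^ 5)⁻¹ * (tent K k + tent K l) * |(l : ℝ)| := by gcongr
    _ = C * (bracket (k - l) ^ 5)⁻¹ * ((tent K k + tent K l) * |(l : ℝ)|) := by ring
    _ ≤ C * (bracket (k - l) ^ 5)⁻¹ * (2 * (tent K k * |(k : ℝ)| + 1) * bracket (k - l)) := by
        exact mul_le_mul_of_nonneg_left (tent_add_tent_mul_abs_le hK hk hl) (by positivity)
    _ = C * ((bracket (k - l) ^ 5)⁻¹ * bracket (k - l)) * (2 * (tent K k * |(k : ℝ)| + 1)) := by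
        ring
    _ ≤ _ := by
        gcongr
        exact inv_bracket_pow_five_mul_bracket_le _

lemma sum_inv_abs_sq_le (K : ℕ) : ∑ k ∈ frequencies K, (|(k : ℝ)|⁻¹) ^ 2 ≤ 4 * kernelMass := by
  calc _ ≤ ∑ k ∈ frequencies K, 4 * decayKernel (0 - k) := by
        refine Finset.sum_le_sum fun k hk => ?_
        have hk1 : (1 : ℝ) ≤ |(k : ℝ)| := by
          exact_mod_cast Int.one_le_abs (mem_frequencies.1 hk).1
        have hle : bracket (0 - k) ≤ 2 * |(k : ℝ)| := by
          rw [zero_sub, bracket_neg]; unfold bracket; linarith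
        have hb := bracket_pos (0 - k)
        unfold decayKernel
        rw [inv_pow, ← div_eq_mul_inv, inv_le_comm₀ (by positivity) (by positivity), inv_div,
          div_le_iff₀ (by norm_num)]
        nlinarith
    _ ≤ _ := by
        rw [← Finset.mul_sum]
        gcongr
        exact sum_comp_sub_left_le_tsum decayKernel_nonneg summable_decayKernel _ _

lemma sum_mul_le_half {ι : Type*} (s : Finset ι) (x y : ι → ℝ) {θ : ℝ} (hθ : 0 < θ) :
    ∑ k ∈ s, x k * y k ≤ (θ * ∑ k ∈ s, x k ^ 2 + θ⁻¹ * ∑ k ∈ s, y k ^ 2) / 2 := by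
  rw [Finset.mul_sum, Finset.mul_sum, ← Finset.sum_add_distrib, Finset.sum_div]
  refine Finset.sum_le_sum fun k _ => ?_
  linarith [two_mul_le_add_mul_sq hθ (a := x k) (b := y k)]

lemma norm_correctionSymbol_le {γ0 B : ℝ} (hγ : γ0 ≠ 0) (hK : 1 ≤ K) {α₀ α₁ : ℤ → ℂ}
    (hk : k ≠ 0) (hl : l ≠ 0) (h0 : ‖α₀ (k - l)‖ ≤ B) (h1 : ‖α₁ (k - l)‖ ≤ B) :
    ‖correctionSymbol γ0 K α₀ α₁ k l‖ ≤ 24 / |γ0| * B * (|(k : ℝ)|⁻¹ * |(l : ℝ)|⁻¹) := by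
  have hB : 0 ≤ B := (norm_nonneg _).trans h0
  have : 0 < |γ0| := abs_pos.2 hγ
  have hkl : 0 < |(k : ℝ)| * |(l : ℝ)| := by
    have : (k : ℝ) ≠ 0 := by exact_mod_cast hk
    have : (l : ℝ) ≠ 0 := by exact_mod_cast hl
    positivity
  have hcorr := norm_correctionSymbol_mul_le hγ hK h0 h1
  have htent : 24 / |γ0| * B * (tent K k + tent K l) ≤ 24 / |γ0| * B * (1 + 1) := by
    gcongr <;> exact tent_le_one _ _
  have hamgm : 2 * (|(k : ℝ)| * |(l : ℝ)|) ≤ (k : ℝ) ^ 2 + (l : ℝ) ^ 2 := by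
    rw [← sq_abs (k : ℝ), ← sq_abs (l : ℝ), ← mul_assoc]
    exact two_mul_le_add_sq _ _
  rw [← mul_inv, ← div_eq_mul_inv, le_div_iff₀ hkl]
  linarith [mul_le_mul_of_nonneg_left hamgm (norm_nonneg (correctionSymbol γ0 K α₀ α₁ k l))]

lemma norm_sum_correctionSymbol_le {γ0 B : ℝ} (hγ : γ0 ≠ 0) (hK : 1 ≤ K) {β₀ β₁ : ℤ → ℂ}
    (h0 : ∀ n, ‖β₀ n‖ ≤ B) (h1 : ∀ n, ‖β₁ n‖ ≤ B) (W : ℤ → ℂ) :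
    ‖∑ k ∈ frequencies K, ∑ l ∈ frequencies K,
        correctionSymbol γ0 K β₀ β₁ k l * (conj (W k) * W l)‖ ≤
      24 / |γ0| * B * (4 * kernelMass) * ∑ k ∈ frequencies K, ‖W k‖ ^ 2 := by
  have hB : 0 ≤ B := (norm_nonneg _).trans (h0 0)
  calc _ ≤ ∑ k ∈ frequencies K, ∑ l ∈ frequencies K, 24 / |γ0| * B *
        ((‖W k‖ * |(k : ℝ)|⁻¹) * (‖W l‖ * |(l : ℝ)|⁻¹)) := by
        refine norm_sum_le_of_le _ fun k hk => norm_sum_le_of_le _ fun l hl => ?_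
        rw [norm_mul, norm_mul, RCLike.norm_conj]
        refine (mul_le_mul_of_nonneg_right (norm_correctionSymbol_le hγ hK (mem_frequencies.1 hk).1
          (mem_frequencies.1 hl).1 (h0 _) (h1 _)) (by positivity)).trans_eq (by ring)
    _ = 24 / |γ0| * B * (∑ k ∈ frequencies K, ‖W k‖ * |(k : ℝ)|⁻¹) ^ 2 := by
        rw [sq, Finset.sum_mul_sum]
        simp only [Finset.mul_sum]
    _ ≤ 24 / |γ0| * B * ((∑ k ∈ frequencies K, ‖W k‖ ^ 2) * (4 * kernelMass)) := by
        gcongr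
        exact (Finset.sum_mul_sq_le_sq_mul_sq _ _ _).trans (by gcongr; exact sum_inv_abs_sq_le K)
    _ = _ := by ring

end CorrectionBounds

section EnergyBound

/-- The truncated `Ḣ¹` norm gained from the backward parabolic term. -/
noncomputable def dissipation (K : ℕ) (W : ℤ → ℂ) : ℝ :=
  ∑ k ∈ frequencies K, (tent K k * |(k : ℝ)| * ‖W k‖) ^ 2

lemma dissipation_nonneg (K : ℕ) (W : ℤ → ℂ) : 0 ≤ dissipation K W :=
  Finset.sum_nonneg fun _ _ => sq_nonneg _

lemma re_energySymbol_self_mul (K : ℕ) (α₀ α₁ : ℤ → ℂ) (k : ℤ) (w : ℂ) :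
    (energySymbol K α₀ α₁ k k * (conj w * w)).re =
      -2 * (α₁ 0).re * (tent K k * |(k : ℝ)| * ‖w‖) ^ 2 := by
  rw [← Complex.normSq_eq_conj_mul_self, re_mul_ofReal, Complex.normSq_eq_norm_sq, energySymbol,
    commutatorSymbol, sub_self, sub_self, ofReal_zero, mul_zero, zero_sub, neg_re, re_mul_ofReal,
    mul_pow, mul_pow, sq_abs]
  simp only [Complex.mul_re, Complex.re_ofNat, Complex.im_ofNat, zero_mul, sub_zero]
  ring

lemma sum_tent_sq_mul_re_eq {α₀ α₁ W H V : ℤ → ℂ} {ω : ℤ → ℝ} {K : ℕ}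
    (hherm : ∀ n, α₀ (-n) = conj (α₀ n)) (hV : ∀ k, V k = -(I * ω k * W k) + H k) :
    ∑ k ∈ frequencies K, tent K k ^ 2 * (2 * (conj (W k) * V k).re) =
      2 * ∑ k ∈ frequencies K, tent K k ^ 2 *
        (conj (W k) * (H k - ∑ l ∈ frequencies K, leadingSymbol α₀ α₁ k l * W l)).re +
      (∑ k ∈ frequencies K, ∑ l ∈ frequencies K,
        energySymbol K α₀ α₁ k l * (conj (W k) * W l)).re := by
  rw [← two_mul_re_sum_tent_sq_mul_leadingSymbol hherm, ← mul_add, Complex.re_sum,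
    ← Finset.sum_add_distrib, Finset.mul_sum]
  refine Finset.sum_congr rfl fun k _ => ?_
  have hskew : (conj (W k) * V k).re = (conj (W k) * H k).re := by
    have : conj (W k) * V k = I * (-(ω k * normSq (W k)) : ℝ) + conj (W k) * H k := by
      rw [hV, ofReal_neg, ofReal_mul, normSq_eq_conj_mul_self]; ring
    rw [this, add_re, I_mul_re, ofReal_im, neg_zero, zero_add]
  have hsum : ∑ l ∈ frequencies K,
      ((tent K k ^ 2 : ℝ) : ℂ) * leadingSymbol α₀ α₁ k l * (conj (W k) * W l) =
      (tent K k ^ 2 : ℝ) *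
        (conj (W k) * ∑ l ∈ frequencies K, leadingSymbol α₀ α₁ k l * W l) := by
    simp only [Finset.mul_sum]
    exact Finset.sum_congr rfl fun l _ => by ring
  rw [hskew, hsum, re_ofReal_mul, mul_sub, sub_re]
  ring

lemma truncatedEnergyDeriv_eq (γ0 : ℝ) (K : ℕ) {α₀ α₁ β₀ β₁ W H V : ℤ → ℂ} {ω : ℤ → ℝ}
    (hherm : ∀ n, α₀ (-n) = conj (α₀ n)) (hV : ∀ k, V k = -(I * ω k * W k) + H k) :
    truncatedEnergyDeriv γ0 K α₀ α₁ β₀ β₁ W V =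
      2 * ∑ k ∈ frequencies K, tent K k ^ 2 *
        (conj (W k) * (H k - ∑ l ∈ frequencies K, leadingSymbol α₀ α₁ k l * W l)).re +
      ∑ k ∈ frequencies K, ∑ l ∈ frequencies K, ((energySymbol K α₀ α₁ k l +
        correctionSymbol γ0 K α₀ α₁ k l * (I * (ω k - ω l : ℝ))) * (conj (W k) * W l)).re +
      (∑ k ∈ frequencies K, ∑ l ∈ frequencies K,
        correctionSymbol γ0 K β₀ β₁ k l * (conj (W k) * W l)).re +
      (∑ k ∈ frequencies K, ∑ l ∈ frequencies K,
        correctionSymbol γ0 K α₀ α₁ k l * (conj (W k) * H l)).re +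
      (∑ k ∈ frequencies K, ∑ l ∈ frequencies K,
        correctionSymbol γ0 K α₀ α₁ k l * (conj (H k) * W l)).re := by
  rw [truncatedEnergyDeriv, sum_tent_sq_mul_re_eq (α₁ := α₁) hherm hV, add_assoc]
  simp only [add_assoc, ← Complex.re_sum]
  simp only [← add_re, ← Finset.sum_add_distrib]
  congr 2
  refine Finset.sum_congr rfl fun k _ => Finset.sum_congr rfl fun l _ => ?_
  simp only [hV, map_add, map_neg, map_mul, conj_I, conj_ofReal, ofReal_sub]
  ring

namespace LinearizedBounds

variable {C₀ c : ℝ} {α₀ α₁ β₀ β₁ W H : ℤ → ℂ} {e : ℤ → ℝ} {γ0 θ : ℝ} {K : ℕ}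
  (h : LinearizedBounds C₀ c α₀ α₁ β₀ β₁ W H e)
include h

lemma sum_kernelConv_sq_le (s : Finset ℤ) :
    ∑ k ∈ s, kernelConv (fun l => ‖W l‖) k ^ 2 ≤ kernelMass ^ 2 * ∑' k, ‖W k‖ ^ 2 :=
  FifthOrderStmt4.sum_kernelConv_sq_le h.summable_W s

lemma tent_sq_mul_re_ge (hK : 1 ≤ K) {k : ℤ} (hk : k ≠ 0) :
    -(12 * C₀ * (‖W k‖ * kernelConv (fun l => ‖W l‖) k) +
        C₀ * ((tent K k * |(k : ℝ)| * ‖W k‖) * kernelConv (fun l => ‖W l‖) k) + ‖W k‖ * e k) ≤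
      tent K k ^ 2 *
        (conj (W k) * (H k - ∑ l ∈ frequencies K, leadingSymbol α₀ α₁ k l * W l)).re := by
  set D := H k - ∑ l ∈ frequencies K, leadingSymbol α₀ α₁ k l * W l
  have hre := (abs_le.1 (Complex.abs_re_le_norm (conj (W k) * D))).1
  rw [norm_mul, RCLike.norm_conj] at hre
  have hD := mul_le_mul_of_nonneg_left
    (h.tent_mul_norm_sub_sum_frequencies_le hK hk) (norm_nonneg (W k))
  have htent : tent K k ^ 2 * (‖W k‖ * ‖D‖) ≤ tent K k * (‖W k‖ * ‖D‖) := by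
    gcongr
    exact tent_sq_le K k
  linarith [mul_le_mul_of_nonneg_left hre (sq_nonneg (tent K k))]

lemma tail_ge (hK : 1 ≤ K) (hθ : 0 < θ) :
    -(C₀ * θ * dissipation K W + C₀ + (12 * C₀ * (1 + kernelMass ^ 2) +
        C₀ * θ⁻¹ * kernelMass ^ 2 + 1) * ∑' k, ‖W k‖ ^ 2) ≤
      2 * ∑ k ∈ frequencies K, tent K k ^ 2 *
        (conj (W k) * (H k - ∑ l ∈ frequencies K, leadingSymbol α₀ α₁ k l * W l)).re := by
  have hC := h.const_nonneg
  have hwz := sum_mul_le_half (frequencies K) (fun k => ‖W k‖)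
    (kernelConv fun l => ‖W l‖) one_pos
  have hxz := sum_mul_le_half (frequencies K) (fun k => tent K k * |(k : ℝ)| * ‖W k‖)
    (kernelConv fun l => ‖W l‖) hθ
  have hwe := sum_mul_le_half (frequencies K) (fun k => ‖W k‖) e one_pos
  have hw := h.sum_le_tsum (frequencies K)
  have hz := h.sum_kernelConv_sq_le (frequencies K)
  have hsum := Finset.sum_le_sum fun k (hk : k ∈ frequencies K) =>
    h.tent_sq_mul_re_ge hK (mem_frequencies.1 hk).1
  simp only [Finset.sum_neg_distrib, Finset.sum_add_distrib, ← Finset.mul_sum] at hsum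
  rw [← dissipation] at hxz
  rw [inv_one, one_mul, one_mul] at hwz hwe
  have hθ' : 0 ≤ C₀ * θ⁻¹ := by positivity
  linarith [h.sum_e_sq_le (frequencies K), mul_le_mul_of_nonneg_left hwz hC,
    mul_le_mul_of_nonneg_left hxz hC, mul_le_mul_of_nonneg_left hw hC,
    mul_le_mul_of_nonneg_left hz hC, mul_le_mul_of_nonneg_left hz hθ']

lemma main_pair_ge (hγ : γ0 ≠ 0) (γ1 γ2 : ℝ) (hK : 1 ≤ K) (k l : ℤ) :
    (if k = l then 2 * c * (tent K k * |(k : ℝ)| * ‖W k‖) ^ 2 else 0) -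
        48 / |γ0| * (2 * |γ1| + |γ2|) * C₀ * (decayKernel (k - l) * (‖W k‖ * ‖W l‖)) ≤
      ((energySymbol K α₀ α₁ k l + correctionSymbol γ0 K α₀ α₁ k l *
        (I * (dispersion γ0 γ1 γ2 k - dispersion γ0 γ1 γ2 l : ℝ))) * (conj (W k) * W l)).re := by
  have hC := h.const_nonneg
  have hker := decayKernel_nonneg (k - l)
  split_ifs with hkl
  · subst hkl
    have hmean := mul_le_mul_of_nonneg_right h.re_α₁_zero_le
      (sq_nonneg (tent K k * |(k : ℝ)| * ‖W k‖))
    have hpos : 0 ≤ 48 / |γ0| * (2 * |γ1| + |γ2|) * C₀ *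
        (decayKernel (k - k) * (‖W k‖ * ‖W k‖)) := by positivity
    rw [correctionSymbol_self, zero_mul, add_zero, re_energySymbol_self_mul]
    linarith
  · set Q := energySymbol K α₀ α₁ k l + correctionSymbol γ0 K α₀ α₁ k l *
      (I * (dispersion γ0 γ1 γ2 k - dispersion γ0 γ1 γ2 l : ℝ))
    have hQ : ‖Q‖ ≤ 48 / |γ0| * (2 * |γ1| + |γ2|) * C₀ * decayKernel (k - l) :=
      calc ‖Q‖ ≤ 48 / |γ0| * (2 * |γ1| + |γ2|) *
            (C₀ * (bracket (k - l) ^ 5)⁻¹ * |((k - l : ℤ) : ℝ)|) :=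
            norm_energySymbol_add_correctionSymbol_mul_le hγ γ1 γ2 hK hkl (h.norm_α₀_le (k - l))
              (h.norm_α₁_le (k - l))
        _ ≤ 48 / |γ0| * (2 * |γ1| + |γ2|) *
            (C₀ * (bracket (k - l) ^ 5)⁻¹ * bracket (k - l)) := by
            have := bracket_pos (k - l)
            gcongr
            exact abs_le_bracket _
        _ = 48 / |γ0| * (2 * |γ1| + |γ2|) * C₀ *
            ((bracket (k - l) ^ 5)⁻¹ * bracket (k - l)) := by ring
        _ ≤ _ := by
            gcongr
            exact inv_bracket_pow_five_mul_bracket_le _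
    have hre := (abs_le.1 (Complex.abs_re_le_norm (Q * (conj (W k) * W l)))).1
    rw [norm_mul, norm_mul, RCLike.norm_conj] at hre
    linarith [mul_le_mul_of_nonneg_right hQ (mul_nonneg (norm_nonneg (W k)) (norm_nonneg (W l)))]

lemma main_ge (hγ : γ0 ≠ 0) (γ1 γ2 : ℝ) (hK : 1 ≤ K) :
    2 * c * dissipation K W -
        48 / |γ0| * (2 * |γ1| + |γ2|) * C₀ * kernelMass * ∑' k, ‖W k‖ ^ 2 ≤
      ∑ k ∈ frequencies K, ∑ l ∈ frequencies K, ((energySymbol K α₀ α₁ k l +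
        correctionSymbol γ0 K α₀ α₁ k l *
          (I * (dispersion γ0 γ1 γ2 k - dispersion γ0 γ1 γ2 l : ℝ))) * (conj (W k) * W l)).re := by
  have hC := h.const_nonneg
  have hsum := Finset.sum_le_sum fun k (_ : k ∈ frequencies K) =>
    Finset.sum_le_sum fun l (_ : l ∈ frequencies K) => h.main_pair_ge hγ γ1 γ2 hK k l
  refine le_trans ?_ hsum
  have hdiag : ∑ k ∈ frequencies K, ∑ l ∈ frequencies K,
      (if k = l then 2 * c * (tent K k * |(k : ℝ)| * ‖W k‖) ^ 2 else 0) =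
      2 * c * dissipation K W := by
    rw [dissipation, Finset.mul_sum]
    exact Finset.sum_congr rfl fun k hk => by rw [Finset.sum_ite_eq, if_pos hk]
  have hkernel := sum_decayKernel_mul_le (frequencies K) (fun k => ‖W k‖) (fun k => ‖W k‖) one_pos
  rw [inv_one, one_mul] at hkernel
  have hw := h.sum_le_tsum (frequencies K)
  simp only [Finset.sum_sub_distrib, hdiag, ← Finset.mul_sum]
  rw [mul_assoc (_ * C₀)]
  gcongr
  have hS := kernelMass_pos
  calc _ ≤ _ := hkernel
    _ ≤ kernelMass / 2 * (∑' k, ‖W k‖ ^ 2 + ∑' k, ‖W k‖ ^ 2) := by gcongr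
    _ = _ := by ring

lemma sum_majorant_H_sq_le (s : Finset ℤ) :
    ∑ k ∈ s, (3 * C₀ * kernelConv (fun l => ‖W l‖) k + e k) ^ 2 ≤
      18 * C₀ ^ 2 * kernelMass ^ 2 * ∑' k, ‖W k‖ ^ 2 + 2 * C₀ := by
  calc _ ≤ ∑ k ∈ s, (18 * C₀ ^ 2 * kernelConv (fun l => ‖W l‖) k ^ 2 + 2 * e k ^ 2) :=
        Finset.sum_le_sum fun k _ => add_sq_le.trans_eq (by ring)
    _ = 18 * C₀ ^ 2 * ∑ k ∈ s, kernelConv (fun l => ‖W l‖) k ^ 2 + 2 * ∑ k ∈ s, e k ^ 2 := by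
        rw [Finset.sum_add_distrib, ← Finset.mul_sum, ← Finset.mul_sum]
    _ ≤ 18 * C₀ ^ 2 * (kernelMass ^ 2 * ∑' k, ‖W k‖ ^ 2) + 2 * C₀ := by
        gcongr
        exacts [h.sum_kernelConv_sq_le s, h.sum_e_sq_le s]
    _ = _ := by ring

lemma sum_tent_mul_add_sq_le :
    ∑ k ∈ frequencies K, ((tent K k * |(k : ℝ)| + 1) * ‖W k‖) ^ 2 ≤
      2 * dissipation K W + 2 * ∑' k, ‖W k‖ ^ 2 := by
  calc _ ≤ ∑ k ∈ frequencies K, (2 * (tent K k * |(k : ℝ)| * ‖W k‖) ^ 2 + 2 * ‖W k‖ ^ 2) := by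
        refine Finset.sum_le_sum fun k _ => ?_
        rw [add_mul, one_mul, ← mul_add]
        exact add_sq_le
    _ = 2 * dissipation K W + 2 * ∑ k ∈ frequencies K, ‖W k‖ ^ 2 := by
        rw [Finset.sum_add_distrib, ← Finset.mul_sum, ← Finset.mul_sum, dissipation]
    _ ≤ _ := by gcongr; exact h.sum_le_tsum _

/-- One factor `|l|³` of the majorant of `H` is absorbed by `F`, up to a single derivative on `W`.
-/
lemma sum_mul_norm_mul_norm_H_le {F : ℤ → ℤ → ℝ} {D : ℝ} (hD : 0 ≤ D) (hF0 : ∀ k l, 0 ≤ F k l)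
    (hF : ∀ k ∈ frequencies K, ∀ l ∈ frequencies K, F k l * |(l : ℝ)| ^ 3 ≤
      D * decayKernel (k - l) * (2 * (tent K k * |(k : ℝ)| + 1))) (hθ : 0 < θ) :
    ∑ k ∈ frequencies K, ∑ l ∈ frequencies K, F k l * (‖W k‖ * ‖H l‖) ≤
      D * kernelMass * (θ * (2 * dissipation K W + 2 * ∑' k, ‖W k‖ ^ 2) +
        θ⁻¹ * (18 * C₀ ^ 2 * kernelMass ^ 2 * ∑' k, ‖W k‖ ^ 2 + 2 * C₀)) := by
  have hC := h.const_nonneg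
  have hS := kernelMass_pos
  set majorant : ℤ → ℝ := fun k => 3 * C₀ * kernelConv (fun l => ‖W l‖) k + e k
  have hmaj0 (k : ℤ) : 0 ≤ majorant k := by
    have := h.e_nonneg k
    have := kernelConv_nonneg (y := fun l => ‖W l‖) (fun _ => norm_nonneg _) k
    positivity
  calc _ ≤ ∑ k ∈ frequencies K, ∑ l ∈ frequencies K, 2 * D *
        (decayKernel (k - l) * (((tent K k * |(k : ℝ)| + 1) * ‖W k‖) * majorant l)) := by
        refine Finset.sum_le_sum fun k hk => Finset.sum_le_sum fun l hl => ?_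
        calc _ ≤ F k l * (‖W k‖ * (|(l : ℝ)| ^ 3 * majorant l)) := by
              have := hF0 k l
              gcongr
              exact h.norm_H_le (mem_frequencies.1 hl).1
          _ = F k l * |(l : ℝ)| ^ 3 * (‖W k‖ * majorant l) := by ring
          _ ≤ D * decayKernel (k - l) * (2 * (tent K k * |(k : ℝ)| + 1)) *
              (‖W k‖ * majorant l) :=
              mul_le_mul_of_nonneg_right (hF k hk l hl) (mul_nonneg (norm_nonneg _) (hmaj0 l))
          _ = _ := by ring
    _ ≤ 2 * D * (kernelMass / 2 *
        (θ * ∑ k ∈ frequencies K, ((tent K k * |(k : ℝ)| + 1) * ‖W k‖) ^ 2 +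
          θ⁻¹ * ∑ k ∈ frequencies K, majorant k ^ 2)) := by
        simp only [← Finset.mul_sum]
        gcongr
        exact sum_decayKernel_mul_le _ _ _ hθ
    _ ≤ 2 * D * (kernelMass / 2 * (θ * (2 * dissipation K W + 2 * ∑' k, ‖W k‖ ^ 2) +
          θ⁻¹ * (18 * C₀ ^ 2 * kernelMass ^ 2 * ∑' k, ‖W k‖ ^ 2 + 2 * C₀))) := by
        gcongr
        exacts [h.sum_tent_mul_add_sq_le, h.sum_majorant_H_sq_le _]
    _ = _ := by ring

lemma norm_correctionSymbol_mul_abs_pow_three_le (hγ : γ0 ≠ 0) (hK : 1 ≤ K) {k l : ℤ}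
    (hk : k ∈ frequencies K) (hl : l ∈ frequencies K) :
    ‖correctionSymbol γ0 K α₀ α₁ k l‖ * |(l : ℝ)| ^ 3 ≤
      24 / |γ0| * C₀ * decayKernel (k - l) * (2 * (tent K k * |(k : ℝ)| + 1)) := by
  have hC := h.const_nonneg
  exact mul_abs_pow_three_le hK hk hl (norm_nonneg _) (by positivity)
    ((norm_correctionSymbol_mul_le hγ hK (h.norm_α₀_le _) (h.norm_α₁_le _)).trans_eq (by ring))

lemma norm_correctionSymbol_swap_mul_abs_pow_three_le (hγ : γ0 ≠ 0) (hK : 1 ≤ K) {k l : ℤ}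
    (hk : k ∈ frequencies K) (hl : l ∈ frequencies K) :
    ‖correctionSymbol γ0 K α₀ α₁ l k‖ * |(l : ℝ)| ^ 3 ≤
      24 / |γ0| * C₀ * decayKernel (k - l) * (2 * (tent K k * |(k : ℝ)| + 1)) := by
  have hC := h.const_nonneg
  have hcorr := norm_correctionSymbol_mul_le hγ hK (h.norm_α₀_le (l - k)) (h.norm_α₁_le (l - k))
  refine mul_abs_pow_three_le hK hk hl (norm_nonneg _) (by positivity) ?_
  rw [bracket_sub_comm k l]
  linarith

lemma norm_sum_correctionSymbol_conj_mul_H_le (hγ : γ0 ≠ 0) (hK : 1 ≤ K) (hθ : 0 < θ) :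
    ‖∑ k ∈ frequencies K, ∑ l ∈ frequencies K,
        correctionSymbol γ0 K α₀ α₁ k l * (conj (W k) * H l)‖ ≤
      24 / |γ0| * C₀ * kernelMass * (θ * (2 * dissipation K W + 2 * ∑' k, ‖W k‖ ^ 2) +
        θ⁻¹ * (18 * C₀ ^ 2 * kernelMass ^ 2 * ∑' k, ‖W k‖ ^ 2 + 2 * C₀)) := by
  have hC := h.const_nonneg
  refine (norm_sum_le_of_le _ fun k _ => norm_sum_le_of_le _ fun l _ => ?_).trans
    (h.sum_mul_norm_mul_norm_H_le (by positivity) (fun _ _ => norm_nonneg _)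
      (fun k hk l hl => h.norm_correctionSymbol_mul_abs_pow_three_le hγ hK hk hl) hθ)
  rw [norm_mul, norm_mul, RCLike.norm_conj]

lemma norm_sum_correctionSymbol_conj_H_mul_le (hγ : γ0 ≠ 0) (hK : 1 ≤ K) (hθ : 0 < θ) :
    ‖∑ k ∈ frequencies K, ∑ l ∈ frequencies K,
        correctionSymbol γ0 K α₀ α₁ k l * (conj (H k) * W l)‖ ≤
      24 / |γ0| * C₀ * kernelMass * (θ * (2 * dissipation K W + 2 * ∑' k, ‖W k‖ ^ 2) +
        θ⁻¹ * (18 * C₀ ^ 2 * kernelMass ^ 2 * ∑' k, ‖W k‖ ^ 2 + 2 * C₀)) := by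
  have hC := h.const_nonneg
  rw [Finset.sum_comm]
  refine (norm_sum_le_of_le _ fun k _ => norm_sum_le_of_le _ fun l _ => ?_).trans
    (h.sum_mul_norm_mul_norm_H_le (by positivity)
      (F := fun k l => ‖correctionSymbol γ0 K α₀ α₁ l k‖) (fun _ _ => norm_nonneg _)
      (fun k hk l hl => h.norm_correctionSymbol_swap_mul_abs_pow_three_le hγ hK hk hl) hθ)
  rw [norm_mul, norm_mul, RCLike.norm_conj, mul_comm ‖H l‖]

end LinearizedBounds

theorem exists_energy_bound {γ0 : ℝ} (hγ : γ0 ≠ 0) (γ1 γ2 : ℝ) {c C₀ : ℝ} (hc : 0 < c)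
    (hC : 0 ≤ C₀) : ∃ C : ℝ, 0 ≤ C ∧ ∀ (K : ℕ) (α₀ α₁ β₀ β₁ W H V : ℤ → ℂ) (e : ℤ → ℝ),
      1 ≤ K → LinearizedBounds C₀ c α₀ α₁ β₀ β₁ W H e →
      (∀ k, V k = -(I * dispersion γ0 γ1 γ2 k * W k) + H k) →
      c * dissipation K W - C * (1 + ∑' k, ‖W k‖ ^ 2) ≤
        truncatedEnergyDeriv γ0 K α₀ α₁ β₀ β₁ W V := by
  set S := kernelMass with hS
  have hS0 : 0 < S := kernelMass_pos
  set Cβ := 24 / |γ0| * C₀ with hCβ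
  set Cmain := 48 / |γ0| * (2 * |γ1| + |γ2|) * C₀ with hCmain
  have : 0 ≤ Cβ := by positivity
  have : 0 ≤ Cmain := by positivity
  set θ := c / (C₀ + 4 * Cβ * S + 1) with hθ
  have hθ0 : 0 < θ := by positivity
  have hθc : (C₀ + 4 * Cβ * S) * θ ≤ c := by
    rw [hθ, mul_div_assoc', div_le_iff₀ (by positivity)]
    linarith
  set A := C₀ + 4 * Cβ * S * θ⁻¹ * C₀ with hA
  set B := 12 * C₀ * (1 + S ^ 2) + C₀ * θ⁻¹ * S ^ 2 + 1 + Cmain * S + 4 * Cβ * S +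
    2 * Cβ * S * (2 * θ + θ⁻¹ * (18 * C₀ ^ 2 * S ^ 2)) with hB
  have hA0 : 0 ≤ A := by positivity
  have hB0 : 0 ≤ B := by positivity
  refine ⟨A + B, by positivity, fun K α₀ α₁ β₀ β₁ W H V e hK h hV => ?_⟩
  have htail := h.tail_ge hK hθ0
  have hmain := h.main_ge hγ γ1 γ2 hK
  have hβ := (norm_sum_correctionSymbol_le hγ hK h.norm_β₀_le h.norm_β₁_le W).trans
    (mul_le_mul_of_nonneg_left (h.sum_le_tsum _) (by positivity))
  have hWH := h.norm_sum_correctionSymbol_conj_mul_H_le hγ hK hθ0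
  have hHW := h.norm_sum_correctionSymbol_conj_H_mul_le hγ hK hθ0
  rw [truncatedEnergyDeriv_eq γ0 K h.conj_α₀ hV]
  simp only [← hS, ← hCβ, ← hCmain] at htail hmain hβ hWH hHW
  replace hβ := neg_le_of_abs_le ((Complex.abs_re_le_norm _).trans hβ)
  replace hWH := neg_le_of_abs_le ((Complex.abs_re_le_norm _).trans hWH)
  replace hHW := neg_le_of_abs_le ((Complex.abs_re_le_norm _).trans hHW)
  set M := ∑' k, ‖W k‖ ^ 2
  have hM : 0 ≤ M := tsum_nonneg fun _ => sq_nonneg _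
  have hAB : A + B * M ≤ (A + B) * (1 + M) := by
    linarith [mul_nonneg hA0 hM]
  have habsorb := mul_le_mul_of_nonneg_right hθc (dissipation_nonneg K W)
  rw [hA, hB] at hAB
  linarith

end EnergyBound

section EnergyInTime

lemma abs_re_sum_correctionSymbol_le {γ0 : ℝ} (hγ : γ0 ≠ 0) {K : ℕ} (hK : 1 ≤ K)
    {α₀ α₁ W : ℤ → ℂ} {C₀ C₁ : ℝ} (h0 : ∀ n, ‖α₀ n‖ ≤ C₀ * (bracket n ^ 5)⁻¹)
    (h1 : ∀ n, ‖α₁ n‖ ≤ C₀ * (bracket n ^ 5)⁻¹)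
    (hW : ∑ k ∈ frequencies K, (‖W k‖ * |(k : ℝ)|⁻¹) ^ 2 ≤ C₁) :
    |(∑ k ∈ frequencies K, ∑ l ∈ frequencies K,
        correctionSymbol γ0 K α₀ α₁ k l * (conj (W k) * W l)).re| ≤
      24 / |γ0| * C₀ * (kernelMass * C₁) := by
  have hC := nonneg_of_norm_le_mul_bracket h0
  have hmass := kernelMass_pos
  have hdecay : ∀ n, C₀ * (bracket n ^ 5)⁻¹ ≤ C₀ * decayKernel n := fun n =>
    mul_le_mul_of_nonneg_left (inv_bracket_pow_five_le_decayKernel n) hC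
  calc _ ≤ ∑ k ∈ frequencies K, ∑ l ∈ frequencies K, 24 / |γ0| * C₀ *
        (decayKernel (k - l) * ((‖W k‖ * |(k : ℝ)|⁻¹) * (‖W l‖ * |(l : ℝ)|⁻¹))) := by
        refine (Complex.abs_re_le_norm _).trans
          (norm_sum_le_of_le _ fun k hk => norm_sum_le_of_le _ fun l hl => ?_)
        rw [norm_mul, norm_mul, RCLike.norm_conj]
        refine (mul_le_mul_of_nonneg_right (norm_correctionSymbol_le hγ hK (mem_frequencies.1 hk).1
          (mem_frequencies.1 hl).1 ((h0 _).trans (hdecay _)) ((h1 _).trans (hdecay _)))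
          (by positivity)).trans_eq (by ring)
    _ = 24 / |γ0| * C₀ * ∑ k ∈ frequencies K, ∑ l ∈ frequencies K,
        (decayKernel (k - l) * ((‖W k‖ * |(k : ℝ)|⁻¹) * (‖W l‖ * |(l : ℝ)|⁻¹))) := by
        simp only [Finset.mul_sum]
    _ ≤ _ := by
        have hschur := sum_decayKernel_mul_le (frequencies K) (fun k => ‖W k‖ * |(k : ℝ)|⁻¹)
          (fun k => ‖W k‖ * |(k : ℝ)|⁻¹) one_pos
        rw [inv_one, one_mul] at hschur
        refine mul_le_mul_of_nonneg_left (hschur.trans ?_) (by positivity)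
        nlinarith

lemma hasDerivAt_correctionSymbol (γ0 : ℝ) (K : ℕ) {α₀ α₁ : ℝ → ℤ → ℂ} {β₀ β₁ : ℤ → ℂ} {t : ℝ}
    (h0 : ∀ n, HasDerivAt (fun t => α₀ t n) (β₀ n) t)
    (h1 : ∀ n, HasDerivAt (fun t => α₁ t n) (β₁ n) t) (k l : ℤ) :
    HasDerivAt (fun t => correctionSymbol γ0 K (α₀ t) (α₁ t) k l)
      (correctionSymbol γ0 K β₀ β₁ k l) t := by
  unfold correctionSymbol energySymbol
  exact (((((h0 (k - l)).const_mul (-I)).mul_const _).sub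
    (((h1 (k - l)).const_mul 2).mul_const _)).const_mul I).div_const _

lemma hasDerivAt_truncatedEnergy (γ0 : ℝ) (K : ℕ) {α₀ α₁ W : ℝ → ℤ → ℂ} {β₀ β₁ V : ℤ → ℂ} {t : ℝ}
    (h0 : ∀ n, HasDerivAt (fun t => α₀ t n) (β₀ n) t)
    (h1 : ∀ n, HasDerivAt (fun t => α₁ t n) (β₁ n) t)
    (hW : ∀ n, HasDerivAt (fun t => W t n) (V n) t) :
    HasDerivAt (fun t => truncatedEnergy γ0 K (α₀ t) (α₁ t) (W t))
      (truncatedEnergyDeriv γ0 K (α₀ t) (α₁ t) β₀ β₁ (W t) V) t := by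
  unfold truncatedEnergy truncatedEnergyDeriv
  refine HasDerivAt.add (HasDerivAt.fun_sum fun k _ => ?_) ?_
  · have hnorm := (hW k).norm_sq
    rw [Complex.inner, mul_comm _ (conj (W t k))] at hnorm
    exact hnorm.const_mul _
  · refine Complex.reCLM.hasFDerivAt.comp_hasDerivAt t (HasDerivAt.fun_sum fun k _ =>
      HasDerivAt.fun_sum fun l _ => ?_)
    exact (hasDerivAt_correctionSymbol γ0 K h0 h1 k l).mul ((hW k).star.mul (hW l))

lemma continuousOn_truncatedEnergy (γ0 : ℝ) (K : ℕ) {α₀ α₁ W : ℝ → ℤ → ℂ} {A : Set ℝ}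
    (h0 : ∀ n, ContinuousOn (fun t => α₀ t n) A) (h1 : ∀ n, ContinuousOn (fun t => α₁ t n) A)
    (hW : ∀ n, ContinuousOn (fun t => W t n) A) :
    ContinuousOn (fun t => truncatedEnergy γ0 K (α₀ t) (α₁ t) (W t)) A := by
  unfold truncatedEnergy correctionSymbol energySymbol
  refine ContinuousOn.add (by fun_prop) (Complex.continuous_re.comp_continuousOn
    (continuousOn_finsetSum _ fun k _ => continuousOn_finsetSum _ fun l _ => ?_))
  exact ContinuousOn.mul (by fun_prop)
    ((Complex.continuous_conj.comp_continuousOn (hW k)).mul (hW l))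

lemma continuousOn_dissipation (K : ℕ) {W : ℝ → ℤ → ℂ} {A : Set ℝ}
    (hW : ∀ n, ContinuousOn (fun t => W t n) A) :
    ContinuousOn (fun t => dissipation K (W t)) A := by
  unfold dissipation
  fun_prop

end EnergyInTime

section FrequencyExhaustion

lemma frequencies_mono {K L : ℕ} (h : K ≤ L) : frequencies K ⊆ frequencies L := fun k hk => by
  have hKL : (K : ℝ) ≤ L := by exact_mod_cast h
  exact mem_frequencies.2 ⟨(mem_frequencies.1 hk).1, (mem_frequencies.1 hk).2.trans (by linarith)⟩

lemma exists_erase_zero_subset_frequencies (s : Finset ℤ) : ∃ K, s.erase 0 ⊆ frequencies K := by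
  refine ⟨∑ k ∈ s, k.natAbs, fun k hk => mem_frequencies.2 ⟨(Finset.mem_erase.1 hk).1, ?_⟩⟩
  have hle : k.natAbs ≤ ∑ k ∈ s, k.natAbs :=
    Finset.single_le_sum (f := Int.natAbs) (fun _ _ => Nat.zero_le _) (Finset.mem_erase.1 hk).2
  have hle' : |(k : ℝ)| ≤ (∑ k ∈ s, k.natAbs : ℕ) := by
    rw [← Int.cast_abs, ← Nat.cast_natAbs]
    exact_mod_cast hle
  linarith [abs_nonneg (k : ℝ)]

lemma sum_le_of_sum_frequencies_le {f : ℤ → ℝ} (hf : ∀ k, 0 ≤ f k) (hf0 : f 0 = 0) {M : ℝ}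
    (h : ∀ K, ∑ k ∈ frequencies K, f k ≤ M) (s : Finset ℤ) : ∑ k ∈ s, f k ≤ M := by
  obtain ⟨K, hK⟩ := exists_erase_zero_subset_frequencies s
  rw [← Finset.sum_erase s hf0]
  exact (Finset.sum_le_sum_of_subset_of_nonneg hK fun k _ _ => hf k).trans (h K)

lemma one_fourth_le_tent_sq {K : ℕ} {k : ℤ} (hk : k ∈ frequencies K) :
    1 / 4 ≤ tent (4 * (K + 1)) k ^ 2 := by
  have hhalf : 1 / 2 ≤ tent (4 * (K + 1)) k := by
    refine half_le_tent (by omega) ?_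
    push_cast
    linarith [(mem_frequencies.1 hk).2]
  nlinarith

lemma sum_le_four_mul_sum_tent_sq (K : ℕ) {f : ℤ → ℝ} (hf : ∀ k, 0 ≤ f k) :
    ∑ k ∈ frequencies K, f k ≤
      4 * ∑ k ∈ frequencies (4 * (K + 1)), tent (4 * (K + 1)) k ^ 2 * f k := by
  rw [Finset.mul_sum]
  refine le_trans (Finset.sum_le_sum fun k hk => ?_)
    (Finset.sum_le_sum_of_subset_of_nonneg (frequencies_mono (by omega : K ≤ 4 * (K + 1)))
      fun k _ _ => mul_nonneg zero_le_four (mul_nonneg (sq_nonneg _) (hf k)))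
  linarith [mul_le_mul_of_nonneg_right (one_fourth_le_tent_sq hk) (hf k)]

lemma sum_sq_le_four_mul_dissipation (K : ℕ) (W : ℤ → ℂ) :
    ∑ k ∈ frequencies K, (|(k : ℝ)| * ‖W k‖) ^ 2 ≤ 4 * dissipation (4 * (K + 1)) W := by
  unfold dissipation
  simp only [mul_assoc, mul_pow (tent _ _)]
  exact sum_le_four_mul_sum_tent_sq K fun k => sq_nonneg _

end FrequencyExhaustion

section IntegralLemmas

open MeasureTheory Set

lemma exists_integrableOn_forall_le_of_monotone {T C : ℝ} (hT : 0 ≤ T) {f : ℕ → ℝ → ℝ}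
    (hf : ∀ n, ContinuousOn (f n) (Icc 0 T)) (h0 : ∀ n t, 0 ≤ f n t)
    (hm : ∀ t, Monotone fun n => f n t) (hC : ∀ n, ∫ t in (0)..T, f n t ≤ C) :
    ∃ g : ℝ → ℝ, IntegrableOn g (Icc 0 T) ∧
      ∀ᵐ t ∂(volume.restrict (Icc 0 T)), ∀ n, f n t ≤ g t := by
  set μ : Measure ℝ := volume.restrict (Icc 0 T)
  have hmeas : ∀ n, AEMeasurable (fun t => ENNReal.ofReal (f n t)) μ := fun n =>
    ((hf n).aemeasurable measurableSet_Icc).ennreal_ofReal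
  have hint : ∫⁻ t, ⨆ n, ENNReal.ofReal (f n t) ∂μ ≤ ENNReal.ofReal C := by
    rw [lintegral_iSup' hmeas (Filter.Eventually.of_forall fun t n n' h =>
      ENNReal.ofReal_le_ofReal (hm t h))]
    refine iSup_le fun n => ?_
    rw [← ofReal_integral_eq_lintegral_ofReal ((hf n).integrableOn_Icc)
      (Filter.Eventually.of_forall (h0 n))]
    refine ENNReal.ofReal_le_ofReal ?_
    rw [integral_Icc_eq_integral_Ioc, ← intervalIntegral.integral_of_le hT]
    exact hC n
  have hfin : ∫⁻ t, ⨆ n, ENNReal.ofReal (f n t) ∂μ ≠ ⊤ := (hint.trans_lt ENNReal.ofReal_lt_top).ne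
  refine ⟨fun t => (⨆ n, ENNReal.ofReal (f n t)).toReal,
    integrable_toReal_of_lintegral_ne_top (.iSup hmeas) hfin, ?_⟩
  filter_upwards [ae_lt_top' (.iSup hmeas) hfin] with t ht n
  rw [← ENNReal.ofReal_le_iff_le_toReal ht.ne]
  exact le_iSup (fun n => ENNReal.ofReal (f n t)) n

lemma ae_restrict_Icc_mem_Ioo (a b : ℝ) : ∀ᵐ t ∂(volume.restrict (Icc a b)), t ∈ Ioo a b := by
  rw [restrict_Ioo_eq_restrict_Icc.symm]
  exact ae_restrict_mem measurableSet_Ioo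

lemma exists_mem_Ioo_of_ae {a b : ℝ} (hab : a < b) {P : ℝ → Prop}
    (hP : ∀ᵐ t ∂(volume.restrict (Icc a b)), P t) : ∃ t ∈ Ioo a b, P t := by
  have hne : volume.restrict (Icc a b) ≠ 0 := by
    rw [Ne, Measure.restrict_eq_zero, Real.volume_Icc]
    simpa using hab
  have : (ae (volume.restrict (Icc a b))).NeBot := ae_neBot.2 hne
  exact ((ae_restrict_Icc_mem_Ioo a b).and hP).exists

lemma add_integral_le_of_sub_le_deriv {a b : ℝ} (hab : a ≤ b) {E E' X g : ℝ → ℝ}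
    (hE : ContinuousOn E (Icc a b)) (hE' : ∀ t ∈ Ioo a b, HasDerivAt E (E' t) t)
    (hX : IntegrableOn X (Icc a b)) (hg : IntegrableOn g (Icc a b))
    (h : ∀ᵐ t ∂(volume.restrict (Icc a b)), t ∈ Ioo a b → X t - g t ≤ E' t) :
    E a + ∫ t in a..b, X t ≤ E b + ∫ t in a..b, g t := by
  classical
  -- The library inequality needs a bound at every point, so `g - X` is altered on a null set.
  set φ : ℝ → ℝ := fun t => if X t - g t ≤ E' t then g t - X t else - E' t
  have hae : (fun t => g t - X t) =ᵐ[volume.restrict (Icc a b)] φ := by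
    filter_upwards [h, ae_restrict_Icc_mem_Ioo a b] with t hle ht
    exact (if_pos (hle ht)).symm
  have hφle : ∀ t, -E' t ≤ φ t := fun t => by
    simp only [φ]
    split_ifs with hle <;> linarith
  have hle := intervalIntegral.sub_le_integral_of_hasDeriv_right_of_le hab hE.neg
    (fun t ht => (hE' t ht).neg.hasDerivWithinAt) ((hg.sub hX).congr hae) fun t _ => hφle t
  have hintegral : ∫ t in a..b, φ t = (∫ t in a..b, g t) - ∫ t in a..b, X t := by
    rw [← intervalIntegral.integral_sub
      ((intervalIntegrable_iff_integrableOn_Icc_of_le hab).2 hg)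
      ((intervalIntegrable_iff_integrableOn_Icc_of_le hab).2 hX),
      intervalIntegral.integral_of_le hab, intervalIntegral.integral_of_le hab,
      ← integral_Icc_eq_integral_Ioc, ← integral_Icc_eq_integral_Ioc]
    exact (integral_congr_ae hae).symm
  rw [hintegral] at hle
  simp only [Pi.neg_apply] at hle
  linarith

end IntegralLemmas

/-! ### The smoothing step -/

section SmoothingStep

open MeasureTheory Set

/-- A time dependent version of `LinearizedBounds`: `W` solves `∂ₜ W + i ω W = H` on `(0, T)`, and
the linearized bounds hold at every time at which `W` is square summable. -/
structure LinearizedFlow (γ0 γ1 γ2 C₀ c T : ℝ) (α₀ α₁ β₀ β₁ W H : ℝ → ℤ → ℂ)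
    (e : ℝ → ℤ → ℝ) : Prop where
  continuousOn_α₀ : ∀ n, ContinuousOn (fun t => α₀ t n) (Icc 0 T)
  continuousOn_α₁ : ∀ n, ContinuousOn (fun t => α₁ t n) (Icc 0 T)
  continuousOn_W : ∀ k, ContinuousOn (fun t => W t k) (Icc 0 T)
  hasDerivAt_α₀ : ∀ t ∈ Ioo 0 T, ∀ n, HasDerivAt (fun t => α₀ t n) (β₀ t n) t
  hasDerivAt_α₁ : ∀ t ∈ Ioo 0 T, ∀ n, HasDerivAt (fun t => α₁ t n) (β₁ t n) t
  hasDerivAt_W : ∀ t ∈ Ioo 0 T, ∀ k,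
    HasDerivAt (fun t => W t k) (-(I * dispersion γ0 γ1 γ2 k * W t k) + H t k) t
  norm_α₀_le : ∀ t ∈ Icc 0 T, ∀ n, ‖α₀ t n‖ ≤ C₀ * (bracket n ^ 5)⁻¹
  norm_α₁_le : ∀ t ∈ Icc 0 T, ∀ n, ‖α₁ t n‖ ≤ C₀ * (bracket n ^ 5)⁻¹
  W_zero : ∀ t, W t 0 = 0
  linearizedBounds : ∀ t ∈ Ioo 0 T, (Summable fun k => ‖W t k‖ ^ 2) →
    LinearizedBounds C₀ c (α₀ t) (α₁ t) (β₀ t) (β₁ t) (W t) (H t) (e t)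

namespace LinearizedFlow

variable {γ0 γ1 γ2 C₀ C₁ c T T' : ℝ} {α₀ α₁ β₀ β₁ W H : ℝ → ℤ → ℂ} {e : ℝ → ℤ → ℝ}
  (h : LinearizedFlow γ0 γ1 γ2 C₀ c T α₀ α₁ β₀ β₁ W H e)
include h

lemma abs_truncatedEnergy_sub_le (hγ : γ0 ≠ 0)
    (hlow : ∀ t ∈ Icc 0 T, ∀ K, ∑ k ∈ frequencies K, (‖W t k‖ * |(k : ℝ)|⁻¹) ^ 2 ≤ C₁)
    {t : ℝ} (ht : t ∈ Icc 0 T) {K : ℕ} (hK : 1 ≤ K) :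
    |truncatedEnergy γ0 K (α₀ t) (α₁ t) (W t) -
        ∑ k ∈ frequencies K, tent K k ^ 2 * ‖W t k‖ ^ 2| ≤
      24 / |γ0| * C₀ * (kernelMass * C₁) := by
  rw [truncatedEnergy, add_sub_cancel_left]
  exact abs_re_sum_correctionSymbol_le hγ hK (h.norm_α₀_le t ht) (h.norm_α₁_le t ht) (hlow t ht K)

lemma exists_integrable_majorant (hT : 0 ≤ T)
    (hint : ∀ K, ∫ t in (0)..T, ∑ k ∈ frequencies K, ‖W t k‖ ^ 2 ≤ C₁) :
    ∃ g : ℝ → ℝ, IntegrableOn g (Icc 0 T) ∧ ∀ᵐ t ∂(volume.restrict (Icc 0 T)),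
      ∀ s : Finset ℤ, ∑ k ∈ s, ‖W t k‖ ^ 2 ≤ g t := by
  obtain ⟨g, hg, hle⟩ := exists_integrableOn_forall_le_of_monotone hT
    (f := fun K t => ∑ k ∈ frequencies K, ‖W t k‖ ^ 2)
    (fun K => continuousOn_finsetSum _ fun k _ => (h.continuousOn_W k).norm.pow 2)
    (fun K t => Finset.sum_nonneg fun _ _ => sq_nonneg _)
    (fun t K L hKL => Finset.sum_le_sum_of_subset_of_nonneg (frequencies_mono hKL)
      fun _ _ _ => sq_nonneg _) hint
  refine ⟨g, hg, hle.mono fun t ht => ?_⟩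
  exact sum_le_of_sum_frequencies_le (fun k => sq_nonneg _) (by simp [h.W_zero]) ht

lemma truncatedEnergy_add_integral_le {C : ℝ} (hC : 0 ≤ C)
    (hbound : ∀ K α₀ α₁ β₀ β₁ W H V e, 1 ≤ K → LinearizedBounds C₀ c α₀ α₁ β₀ β₁ W H e →
      (∀ k, V k = -(I * dispersion γ0 γ1 γ2 k * W k) + H k) →
      c * dissipation K W - C * (1 + ∑' k, ‖W k‖ ^ 2) ≤ truncatedEnergyDeriv γ0 K α₀ α₁ β₀ β₁ W V)
    {g : ℝ → ℝ} (hg : IntegrableOn g (Icc 0 T))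
    (hWg : ∀ᵐ t ∂(volume.restrict (Icc 0 T)), ∀ s : Finset ℤ, ∑ k ∈ s, ‖W t k‖ ^ 2 ≤ g t)
    (hT' : T' ∈ Icc 0 T) {t : ℝ} (ht : t ∈ Icc 0 T') {K : ℕ} (hK : 1 ≤ K) :
    truncatedEnergy γ0 K (α₀ t) (α₁ t) (W t) + c * ∫ r in t..T', dissipation K (W r) ≤
      truncatedEnergy γ0 K (α₀ T') (α₁ T') (W T') + ∫ r in (0)..T, C * (1 + |g r|) := by
  have hsub : Icc t T' ⊆ Icc 0 T := Icc_subset_Icc ht.1 hT'.2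
  have hmem : ∀ r ∈ Ioo t T', r ∈ Ioo 0 T := fun r hr => ⟨ht.1.trans_lt hr.1, hr.2.trans_le hT'.2⟩
  have hG : IntegrableOn (fun r => C * (1 + |g r|)) (Icc 0 T) :=
    ((integrableOn_const measure_Icc_lt_top.ne).add hg.abs).const_mul C
  have hderiv : ∀ᵐ r ∂(volume.restrict (Icc t T')), r ∈ Ioo t T' →
      c * dissipation K (W r) - C * (1 + |g r|) ≤ truncatedEnergyDeriv γ0 K (α₀ r) (α₁ r)
        (β₀ r) (β₁ r) (W r) fun k => -(I * dispersion γ0 γ1 γ2 k * W r k) + H r k := by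
    filter_upwards [ae_restrict_of_ae_restrict_of_subset hsub hWg] with r hle hr
    have hsum := summable_of_sum_le (fun _ => sq_nonneg _) hle
    refine le_trans ?_ (hbound K _ _ _ _ _ _ _ _ hK
      (h.linearizedBounds r (hmem r hr) hsum) fun _ => rfl)
    gcongr
    exact (hsum.tsum_le_of_sum_le hle).trans (le_abs_self _)
  have henergy := add_integral_le_of_sub_le_deriv (X := fun r => c * dissipation K (W r)) ht.2
    ((continuousOn_truncatedEnergy γ0 K h.continuousOn_α₀ h.continuousOn_α₁
      h.continuousOn_W).mono hsub)
    (fun r hr => hasDerivAt_truncatedEnergy γ0 K (h.hasDerivAt_α₀ r (hmem r hr))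
      (h.hasDerivAt_α₁ r (hmem r hr)) (h.hasDerivAt_W r (hmem r hr)))
    ((continuousOn_const.mul (continuousOn_dissipation K h.continuousOn_W)).mono
      hsub).integrableOn_Icc (hG.mono_set hsub) hderiv
  rw [intervalIntegral.integral_const_mul c] at henergy
  have hmono : ∫ r in t..T', C * (1 + |g r|) ≤ ∫ r in (0)..T, C * (1 + |g r|) :=
    intervalIntegral.integral_mono_interval ht.1 ht.2 hT'.2
      (Filter.Eventually.of_forall fun r => mul_nonneg hC (by positivity))
      ((intervalIntegrable_iff_integrableOn_Icc_of_le (ht.1.trans (ht.2.trans hT'.2))).2 hG)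
  linarith

lemma exists_truncated_bound (hγ : γ0 ≠ 0) (hc : 0 < c) (hT : 0 < T)
    (hlow : ∀ t ∈ Icc 0 T, ∀ K, ∑ k ∈ frequencies K, (‖W t k‖ * |(k : ℝ)|⁻¹) ^ 2 ≤ C₁)
    (hint : ∀ K, ∫ t in (0)..T, ∑ k ∈ frequencies K, ‖W t k‖ ^ 2 ≤ C₁) :
    ∃ T' ∈ Ioo 0 T, ∃ B, ∀ t ∈ Icc 0 T', ∀ K, 1 ≤ K →
      ∑ k ∈ frequencies K, tent K k ^ 2 * ‖W t k‖ ^ 2 +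
        c * ∫ r in t..T', dissipation K (W r) ≤ B := by
  have hC₀ := nonneg_of_norm_le_mul_bracket (h.norm_α₀_le 0 ⟨le_rfl, hT.le⟩)
  obtain ⟨C, hC, hbound⟩ := exists_energy_bound hγ γ1 γ2 hc hC₀
  obtain ⟨g, hg, hWg⟩ := h.exists_integrable_majorant hT.le hint
  obtain ⟨T', hT', hWT'⟩ := exists_mem_Ioo_of_ae hT hWg
  set D := 24 / |γ0| * C₀ * (kernelMass * C₁)
  refine ⟨T', hT', g T' + 2 * D + ∫ r in (0)..T, C * (1 + |g r|), fun t ht K hK => ?_⟩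
  have henergy :=
    h.truncatedEnergy_add_integral_le hC hbound hg hWg ⟨hT'.1.le, hT'.2.le⟩ ht hK
  have hstart := (abs_le.1 (h.abs_truncatedEnergy_sub_le hγ hlow
    (Icc_subset_Icc_right hT'.2.le ht) hK)).1
  have hend := (abs_le.1 (h.abs_truncatedEnergy_sub_le hγ hlow ⟨hT'.1.le, hT'.2.le⟩ hK)).2
  have hfinal : ∑ k ∈ frequencies K, tent K k ^ 2 * ‖W T' k‖ ^ 2 ≤ g T' :=
    (Finset.sum_le_sum fun k _ => mul_le_of_le_one_left (sq_nonneg _)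
      (pow_le_one₀ (tent_nonneg _ _) (tent_le_one _ _))).trans (hWT' _)
  linarith

theorem exists_smoothing (hγ : γ0 ≠ 0) (hc : 0 < c) (hT : 0 < T)
    (hlow : ∀ t ∈ Icc 0 T, ∀ K, ∑ k ∈ frequencies K, (‖W t k‖ * |(k : ℝ)|⁻¹) ^ 2 ≤ C₁)
    (hint : ∀ K, ∫ t in (0)..T, ∑ k ∈ frequencies K, ‖W t k‖ ^ 2 ≤ C₁) :
    ∃ T' ∈ Ioo 0 T, ∃ C₂, (∀ t ∈ Icc 0 T', ∀ K, ∑ k ∈ frequencies K, ‖W t k‖ ^ 2 ≤ C₂) ∧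
      ∀ K, ∫ t in (0)..T', ∑ k ∈ frequencies K, (|(k : ℝ)| * ‖W t k‖) ^ 2 ≤ C₂ := by
  obtain ⟨T', hT', B, hB⟩ := h.exists_truncated_bound hγ hc hT hlow hint
  have hsum_nonneg : ∀ t K, 0 ≤ ∑ k ∈ frequencies K, tent K k ^ 2 * ‖W t k‖ ^ 2 := fun t K =>
    Finset.sum_nonneg fun k _ => by positivity
  have hdiss_nonneg : ∀ t ∈ Icc 0 T', ∀ K, 0 ≤ c * ∫ r in t..T', dissipation K (W r) :=
    fun t ht K => mul_nonneg hc.le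
      (intervalIntegral.integral_nonneg ht.2 fun r _ => dissipation_nonneg K _)
  refine ⟨T', hT', max (4 * B) (4 * (B / c)), fun t ht K => le_max_of_le_left ?_,
    fun K => le_max_of_le_right ?_⟩
  · have hpointwise := sum_le_four_mul_sum_tent_sq K fun k => sq_nonneg ‖W t k‖
    linarith [hB t ht (4 * (K + 1)) (by omega), hdiss_nonneg t ht (4 * (K + 1))]
  · have hcont : ∀ k, ContinuousOn (fun t => W t k) (Icc 0 T') := fun k =>
      (h.continuousOn_W k).mono (Icc_subset_Icc_right hT'.2.le)
    have hintegral : ∫ r in (0)..T', ∑ k ∈ frequencies K, (|(k : ℝ)| * ‖W r k‖) ^ 2 ≤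
        4 * ∫ r in (0)..T', dissipation (4 * (K + 1)) (W r) := by
      rw [← intervalIntegral.integral_const_mul]
      exact intervalIntegral.integral_mono_on hT'.1.le
        (ContinuousOn.intervalIntegrable_of_Icc hT'.1.le (by fun_prop))
        (ContinuousOn.intervalIntegrable_of_Icc hT'.1.le
          (continuousOn_const.mul (continuousOn_dissipation _ hcont)))
        fun r _ => sum_sq_le_four_mul_dissipation K (W r)
    have hdiss : ∫ r in (0)..T', dissipation (4 * (K + 1)) (W r) ≤ B / c := by
      rw [le_div_iff₀ hc]
      linarith [hB 0 ⟨le_rfl, hT'.1.le⟩ (4 * (K + 1)) (by omega), hsum_nonneg 0 (4 * (K + 1))]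
    linarith

end LinearizedFlow

end SmoothingStep

/-! ### Differential polynomials -/

section DifferentialPolynomials

open MvPolynomial

/-- Differential polynomials in one function: the variable `X i` stands for its `i`-th derivative.
-/
abbrev DiffPoly := MvPolynomial ℕ ℝ

/-- Differential polynomials of order at most `r`. -/
noncomputable abbrev orderLE (r : ℕ) : Subalgebra ℝ DiffPoly := supported ℝ (Set.Iic r)

/-- The total derivative `d/dx` of differential polynomials. -/
noncomputable def totalDeriv : Derivation ℝ DiffPoly DiffPoly := mkDerivation ℝ fun i => X (i + 1)

variable {r m : ℕ} {p q : DiffPoly}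

lemma totalDeriv_X (i : ℕ) : totalDeriv (X i) = X (i + 1) := mkDerivation_X _ _ _

lemma totalDeriv_C (x : ℝ) : totalDeriv (C x) = 0 := totalDeriv.map_algebraMap x

lemma orderLE_mono {r r' : ℕ} (h : r ≤ r') : orderLE r ≤ orderLE r' :=
  supported_mono (Set.Iic_subset_Iic.2 h)

lemma X_mem_orderLE {i : ℕ} (h : i ≤ r) : (X i : DiffPoly) ∈ orderLE r := X_mem_supported.2 h

lemma monomial_mem_orderLE {s : ℕ →₀ ℕ} (h : ∀ i ∈ s.support, i ≤ r) (x : ℝ) :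
    (monomial s x : DiffPoly) ∈ orderLE r := by
  refine mem_supported.2 fun i hi => ?_
  obtain ⟨s', hs', hi'⟩ := (mem_vars_iff_mem_support _).1 hi
  rw [Finset.mem_singleton.1 (support_monomial_subset hs')] at hi'
  exact h i hi'

lemma orderLE_induction {P : DiffPoly → Prop} (hX : ∀ i ≤ r, P (X i)) (hC : ∀ x, P (C x))
    (hadd : ∀ p q, P p → P q → P (p + q))
    (hmul : ∀ p q, p ∈ orderLE r → q ∈ orderLE r → P p → P q → P (p * q)) (hp : p ∈ orderLE r) :
    P p := by
  refine Algebra.adjoin_induction (p := fun x _ => P x) ?_ hC (fun x y _ _ => hadd x y)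
    (fun x y hx hy => hmul x y hx hy) hp
  rintro _ ⟨i, hi, rfl⟩
  exact hX i hi

lemma totalDeriv_mem_orderLE (hp : p ∈ orderLE r) : totalDeriv p ∈ orderLE (r + 1) := by
  refine orderLE_induction (P := fun p => totalDeriv p ∈ orderLE (r + 1)) (fun i hi => ?_)
    (fun x => ?_) (fun p q hp hq => ?_) (fun p q hp hq hp' hq' => ?_) hp
  · rw [totalDeriv_X]
    exact X_mem_orderLE (by omega)
  · rw [totalDeriv_C]
    exact zero_mem _
  · rw [map_add]
    exact add_mem hp hq
  · rw [Derivation.leibniz, smul_eq_mul, smul_eq_mul]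
    exact add_mem (mul_mem (orderLE_mono (Nat.le_succ r) hp) hq')
      (mul_mem (orderLE_mono (Nat.le_succ r) hq) hp')

lemma iterate_totalDeriv_mem_orderLE (hp : p ∈ orderLE r) (m : ℕ) :
    totalDeriv^[m] p ∈ orderLE (r + m) := by
  induction m with
  | zero => exact hp
  | succ m ih =>
    rw [Function.iterate_succ_apply']
    exact totalDeriv_mem_orderLE ih

lemma pderiv_mem_orderLE (i : ℕ) (hp : p ∈ orderLE r) : pderiv i p ∈ orderLE r := by
  refine orderLE_induction (P := fun p => pderiv i p ∈ orderLE r) (fun j _ => ?_) (fun x => ?_)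
    (fun p q hp hq => ?_) (fun p q hp hq hp' hq' => ?_) hp
  · rw [pderiv_X, Pi.single_apply]
    split_ifs
    exacts [one_mem _, zero_mem _]
  · rw [pderiv_C]
    exact zero_mem _
  · rw [map_add]
    exact add_mem hp hq
  · rw [Derivation.leibniz, smul_eq_mul, smul_eq_mul]
    exact add_mem (mul_mem hp hq') (mul_mem hq hp')

lemma pderiv_eq_zero_of_mem_orderLE {i : ℕ} (hp : p ∈ orderLE r) (h : r < i) :
    pderiv i p = 0 :=
  pderiv_eq_zero_of_notMem_vars fun hi => (Set.mem_Iic.1 (mem_supported.1 hp hi)).not_gt h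

lemma pderiv_succ_totalDeriv (i : ℕ) (p : DiffPoly) :
    pderiv (i + 1) (totalDeriv p) = totalDeriv (pderiv (i + 1) p) + pderiv i p := by
  have hcomm : ⁅(pderiv (i + 1) : Derivation ℝ DiffPoly DiffPoly), totalDeriv⁆ = pderiv i := by
    refine derivation_ext fun j => ?_
    rw [Derivation.commutator_apply, totalDeriv_X]
    simp only [pderiv_X, Pi.single_apply, Nat.add_left_inj, apply_ite totalDeriv,
      Derivation.map_one_eq_zero, map_zero, ite_self, sub_zero]
  rw [← hcomm, Derivation.commutator_apply]
  ring

lemma pderiv_add_iterate_totalDeriv (hp : p ∈ orderLE r) (m : ℕ) :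
    pderiv (r + m) (totalDeriv^[m] p) = pderiv r p := by
  induction m with
  | zero => rfl
  | succ m ih =>
    rw [Function.iterate_succ_apply', ← add_assoc, pderiv_succ_totalDeriv, ih,
      pderiv_eq_zero_of_mem_orderLE (iterate_totalDeriv_mem_orderLE hp m) (by omega), map_zero,
      zero_add]

lemma pderiv_add_iterate_totalDeriv_of_succ (hp : p ∈ orderLE (r + 1)) (m : ℕ) :
    pderiv (r + m) (totalDeriv^[m] p) = pderiv r p + m * totalDeriv (pderiv (r + 1) p) := by
  induction m with
  | zero => simp
  | succ m ih =>
    rw [Function.iterate_succ_apply', ← add_assoc, pderiv_succ_totalDeriv, ih, add_right_comm,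
      pderiv_add_iterate_totalDeriv hp m]
    push_cast
    ring

/-- The weight of a monomial, in which the `i`-th derivative counts `i - 3` if `i ≥ 3` and `0`
otherwise (the subtraction is truncated). -/
noncomputable def excessWeight (s : ℕ →₀ ℕ) : ℕ := Finsupp.weight (fun i => i - 3) s

lemma excessWeight_add (s s' : ℕ →₀ ℕ) :
    excessWeight (s + s') = excessWeight s + excessWeight s' := map_add _ _ _

lemma excessWeight_single (i : ℕ) : excessWeight (Finsupp.single i 1) = i - 3 := by
  rw [excessWeight, Finsupp.weight_single, one_smul]

lemma sub_three_le_excessWeight {s : ℕ →₀ ℕ} {i : ℕ} (hi : i ∈ s.support) :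
    i - 3 ≤ excessWeight s :=
  Finsupp.le_weight_of_ne_zero' (fun i => i - 3) (Finsupp.mem_support_iff.1 hi)

lemma sub_single_add_single_of_mem_support {s : ℕ →₀ ℕ} {i : ℕ} (hi : i ∈ s.support) :
    s - Finsupp.single i 1 + Finsupp.single i 1 = s :=
  tsub_add_cancel_of_le <| Finsupp.single_le_iff.2 <|
    Nat.one_le_iff_ne_zero.2 (Finsupp.mem_support_iff.1 hi)

/-- All monomials of `p` have `excessWeight` at most `n`. -/
def WeightLE (n : ℕ) (p : DiffPoly) : Prop := ∀ s ∈ p.support, excessWeight s ≤ n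

namespace WeightLE

variable {n : ℕ}

lemma zero (n : ℕ) : WeightLE n 0 := by simp [WeightLE]

lemma add (hp : WeightLE n p) (hq : WeightLE n q) : WeightLE n (p + q) := by
  intro s hs
  rcases Finset.mem_union.1 (support_add hs) with h | h
  exacts [hp s h, hq s h]

lemma monomial {s : ℕ →₀ ℕ} (h : excessWeight s ≤ n) (x : ℝ) :
    WeightLE n (MvPolynomial.monomial s x) := by
  intro s' hs'
  rwa [Finset.mem_singleton.1 (support_monomial_subset hs')]

lemma smul (x : ℝ) (hp : WeightLE n p) : WeightLE n (x • p) := fun s hs => hp s (support_smul hs)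

lemma totalDeriv (hp : WeightLE n p) : WeightLE (n + 1) (FifthOrderStmt4.totalDeriv p) := by
  rw [p.as_sum, map_sum]
  refine Finset.sum_induction _ (WeightLE (n + 1)) (fun _ _ => add) (zero _) fun s hs => ?_
  rw [FifthOrderStmt4.totalDeriv, mkDerivation_monomial]
  refine smul _ (Finset.sum_induction _ (WeightLE (n + 1)) (fun _ _ => add) (zero _)
    fun i hi => ?_)
  change WeightLE (n + 1) (MvPolynomial.monomial (s - Finsupp.single i 1) ((s i : ℕ) : ℝ) •
    (X (i + 1) : DiffPoly))
  rw [smul_eq_mul, X, monomial_mul]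
  refine monomial ?_ _
  have hweight := hp s hs
  rw [← sub_single_add_single_of_mem_support hi, excessWeight_add, excessWeight_single] at hweight
  rw [excessWeight_add, excessWeight_single]
  omega

lemma of_mem_orderLE (hp : p ∈ orderLE 3) : WeightLE 0 p := by
  intro s hs
  rw [excessWeight, Finsupp.weight_apply]
  refine (Finset.sum_eq_zero fun i hi => ?_).le
  have hi3 : i ≤ 3 := mem_supported.1 hp ((mem_vars_iff_mem_support _).2 ⟨s, hs, hi⟩)
  change s i • (i - 3) = 0
  rw [Nat.sub_eq_zero_of_le hi3, smul_zero]

lemma iterate_totalDeriv (hp : p ∈ orderLE 3) (m : ℕ) :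
    WeightLE m (FifthOrderStmt4.totalDeriv^[m] p) := by
  induction m with
  | zero => exact of_mem_orderLE hp
  | succ m ih =>
    rw [Function.iterate_succ_apply']
    exact ih.totalDeriv

end WeightLE

/-- `p` is affine in the five highest variables `X (m + 3), …, X (m - 1)`, with coefficients `c` of
order at most `7` and remainder `E` of order at most `m - 2`. -/
structure IsTopDecomposition (m : ℕ) (p : DiffPoly) (c : ℕ → DiffPoly) (E : DiffPoly) : Prop where
  coeff_mem : ∀ j < 5, c j ∈ orderLE 7
  remainder_mem : E ∈ orderLE (m - 2)
  eq_sum_add : p = ∑ j ∈ Finset.range 5, c j * X (m + 3 - j) + E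

lemma IsTopDecomposition.add {c c' : ℕ → DiffPoly} {E E' : DiffPoly}
    (h : IsTopDecomposition m p c E) (h' : IsTopDecomposition m q c' E') :
    IsTopDecomposition m (p + q) (c + c') (E + E') where
  coeff_mem j hj := add_mem (h.coeff_mem j hj) (h'.coeff_mem j hj)
  remainder_mem := add_mem h.remainder_mem h'.remainder_mem
  eq_sum_add := by
    rw [h.eq_sum_add, h'.eq_sum_add]
    simp only [Pi.add_apply, add_mul, Finset.sum_add_distrib]
    ring

lemma isTopDecomposition_zero (hE : p ∈ orderLE (m - 2)) : IsTopDecomposition m p 0 p where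
  coeff_mem _ _ := zero_mem _
  remainder_mem := hE
  eq_sum_add := by simp

lemma isTopDecomposition_monomial_single {s : ℕ →₀ ℕ} {i : ℕ} (hi : i ∈ s.support)
    (him : m - 2 < i) (hm : 5 ≤ m) (hs : excessWeight s ≤ m) (x : ℝ) :
    IsTopDecomposition m (monomial s x)
      (Pi.single (m + 3 - i) (monomial (s - Finsupp.single i 1) x)) 0 := by
  have hweight := hs
  rw [← sub_single_add_single_of_mem_support hi, excessWeight_add, excessWeight_single] at hweight
  have hile := sub_three_le_excessWeight hi
  refine ⟨fun j _ => ?_, zero_mem _, ?_⟩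
  · rw [Pi.single_apply]
    split_ifs
    · refine monomial_mem_orderLE (fun i' hi' => ?_) _
      have := sub_three_le_excessWeight hi'
      omega
    · exact zero_mem _
  · rw [Finset.sum_eq_single (m + 3 - i) (fun j _ hj => by rw [Pi.single_eq_of_ne hj, zero_mul])
      fun hj => absurd (Finset.mem_range.2 (by omega)) hj, Pi.single_eq_same, add_zero, X,
      monomial_mul, mul_one, show m + 3 - (m + 3 - i) = i by omega,
      sub_single_add_single_of_mem_support hi]

-- A factor of order at least `m - 1` has weight at least `m - 4`, which leaves weight at most `4`,
-- that is order at most `7`, to the other factors.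
lemma WeightLE.exists_isTopDecomposition (hm : 5 ≤ m) (hp : WeightLE m p) :
    ∃ c E, IsTopDecomposition m p c E := by
  rw [p.as_sum]
  refine Finset.sum_induction _ (fun p => ∃ c E, IsTopDecomposition m p c E) ?_ ?_ fun s hs => ?_
  · rintro p q ⟨c, E, h⟩ ⟨c', E', h'⟩
    exact ⟨_, _, h.add h'⟩
  · exact ⟨_, _, isTopDecomposition_zero (zero_mem _)⟩
  · by_cases hlow : ∀ i ∈ s.support, i ≤ m - 2
    · exact ⟨_, _, isTopDecomposition_zero (monomial_mem_orderLE hlow (coeff s p))⟩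
    push Not at hlow
    obtain ⟨i, hi, him⟩ := hlow
    exact ⟨_, _, isTopDecomposition_monomial_single hi him hm (hp s hs) _⟩

lemma IsTopDecomposition.pderiv_eq {c : ℕ → DiffPoly} {E : DiffPoly}
    (h : IsTopDecomposition m p c E) (hm : 9 ≤ m) {i : ℕ} (hi : i < 5) :
    pderiv (m + 3 - i) p = c i := by
  have hcoeff : ∀ j < 5, pderiv (m + 3 - i) (c j) = 0 := fun j hj =>
    pderiv_eq_zero_of_mem_orderLE (h.coeff_mem j hj) (by omega)
  rw [h.eq_sum_add, map_add, map_sum, pderiv_eq_zero_of_mem_orderLE h.remainder_mem (by omega),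
    add_zero, Finset.sum_eq_single i ?_ fun hi' => absurd (Finset.mem_range.2 hi) hi',
    Derivation.leibniz, pderiv_X_self, hcoeff i hi, smul_zero, add_zero, smul_eq_mul, mul_one]
  intro j hj hji
  have hj5 := Finset.mem_range.1 hj
  rw [Derivation.leibniz, pderiv_X_of_ne (by omega), hcoeff j hj5, smul_zero, smul_zero, add_zero]

theorem exists_isTopDecomposition_iterate_totalDeriv (hp : p ∈ orderLE 3) (hm : 9 ≤ m) :
    ∃ c E, IsTopDecomposition m (totalDeriv^[m] p) c E ∧ c 0 = pderiv 3 p ∧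
      c 1 = pderiv 2 p + m * totalDeriv (pderiv 3 p) := by
  obtain ⟨c, E, h⟩ := (WeightLE.iterate_totalDeriv hp m).exists_isTopDecomposition (by omega)
  refine ⟨c, E, h, ?_, ?_⟩
  · rw [← h.pderiv_eq hm (by omega : 0 < 5), ← pderiv_add_iterate_totalDeriv hp m,
      show m + 3 - 0 = 3 + m by omega]
  · rw [← h.pderiv_eq hm (by omega : 1 < 5),
      ← pderiv_add_iterate_totalDeriv_of_succ (r := 2) hp m, show m + 3 - 1 = 2 + m by omega]

end DifferentialPolynomials

/-! ### Jets and Fourier series -/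

section Jets

open MvPolynomial

/-- The weighted `ℓ¹` bound `∑ₖ (1 + |k|)ʳ |a k| ≤ A`. -/
def WeightedSumLE (r : ℕ) (A : ℝ) (a : ℤ → ℂ) : Prop :=
  ∀ s : Finset ℤ, ∑ k ∈ s, bracket k ^ r * ‖a k‖ ≤ A

/-- The `j`-th derivative of `x ↦ a k * e^{ikx}`. -/
noncomputable def jetTerm (a : ℤ → ℂ) (j : ℕ) (x : ℝ) (k : ℤ) : ℂ :=
  (I * k) ^ j * a k * exp (I * k * x)

/-- The `j`-th derivative of the function with Fourier coefficients `a`. -/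
noncomputable def jet (a : ℤ → ℂ) (j : ℕ) (x : ℝ) : ℂ := ∑' k, jetTerm a j x k

/-- The differential polynomial `Q` evaluated at the function with Fourier coefficients `a`. -/
noncomputable def evalJet (Q : DiffPoly) (a : ℤ → ℂ) (x : ℝ) : ℂ := aeval (fun j => jet a j x) Q

variable {r : ℕ} {A : ℝ} {a : ℤ → ℂ} {Q : DiffPoly}

lemma norm_exp_I_mul (k : ℤ) (x : ℝ) : ‖exp (I * k * x)‖ = 1 := by
  rw [show I * (k : ℂ) * x = ((k * x : ℝ) : ℂ) * I by push_cast; ring, norm_exp_ofReal_mul_I]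

lemma norm_jetTerm (a : ℤ → ℂ) (j : ℕ) (x : ℝ) (k : ℤ) :
    ‖jetTerm a j x k‖ = |(k : ℝ)| ^ j * ‖a k‖ := by
  rw [jetTerm, norm_mul, norm_mul, norm_exp_I_mul, mul_one, norm_pow, norm_mul, norm_I, one_mul,
    norm_intCast]

lemma norm_jetTerm_le {j : ℕ} (hj : j ≤ r) (a : ℤ → ℂ) (x : ℝ) (k : ℤ) :
    ‖jetTerm a j x k‖ ≤ bracket k ^ r * ‖a k‖ := by
  rw [norm_jetTerm]
  refine mul_le_mul_of_nonneg_right ?_ (norm_nonneg _)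
  exact (pow_le_pow_left₀ (abs_nonneg _) (abs_le_bracket k) j).trans
    (pow_le_pow_right₀ (one_le_bracket k) hj)

lemma hasDerivAt_jetTerm (a : ℤ → ℂ) (j : ℕ) (x : ℝ) (k : ℤ) :
    HasDerivAt (fun x => jetTerm a j x k) (jetTerm a (j + 1) x k) x := by
  have hexp : HasDerivAt (fun y : ℝ => exp (I * k * y)) (exp (I * k * x) * (I * k * 1)) x :=
    ((Complex.ofRealCLM.hasDerivAt (x := x)).const_mul (I * (k : ℂ))).cexp
  refine (hexp.const_mul ((I * (k : ℂ)) ^ j * a k)).congr_deriv ?_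
  rw [jetTerm]
  ring

lemma jetTerm_periodic (a : ℤ → ℂ) (j : ℕ) (x : ℝ) (k : ℤ) :
    jetTerm a j (x + 2 * Real.pi) k = jetTerm a j x k := by
  rw [jetTerm, jetTerm]
  congr 1
  rw [exp_eq_exp_iff_exists_int]
  exact ⟨k, by push_cast; ring⟩

lemma jet_periodic (a : ℤ → ℂ) (j : ℕ) : Function.Periodic (jet a j) (2 * Real.pi) := fun x => by
  simp only [jet, jetTerm_periodic]

lemma conj_jet (ha : ∀ k, a (-k) = conj (a k)) (j : ℕ) (x : ℝ) :
    conj (jet a j x) = jet a j x := by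
  rw [jet, conj_tsum, ← (Equiv.neg ℤ).tsum_eq]
  refine tsum_congr fun k => ?_
  rw [Equiv.neg_apply, jetTerm, jetTerm, ha, map_mul, map_mul, conj_conj, map_pow, map_mul, conj_I,
    ← exp_conj, map_mul, map_mul, conj_I, conj_ofReal, Int.cast_neg, map_neg, map_intCast]
  ring_nf

section EvalJet

variable (a) (p q : DiffPoly)

lemma evalJet_X (j : ℕ) : evalJet (X j) a = jet a j := funext fun _ => aeval_X _ _

lemma evalJet_C (y : ℝ) : evalJet (C y) a = fun _ => (y : ℂ) := funext fun _ => aeval_C _ _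

lemma evalJet_add : evalJet (p + q) a = evalJet p a + evalJet q a := funext fun _ => map_add _ _ _

lemma evalJet_mul : evalJet (p * q) a = evalJet p a * evalJet q a := funext fun _ => map_mul _ _ _

lemma evalJet_sum {ι : Type*} (s : Finset ι) (f : ι → DiffPoly) (x : ℝ) :
    evalJet (∑ i ∈ s, f i) a x = ∑ i ∈ s, evalJet (f i) a x := map_sum _ _ _

lemma evalJet_periodic (Q : DiffPoly) : Function.Periodic (evalJet Q a) (2 * Real.pi) := fun x => by
  simp only [evalJet, jet_periodic a _ x]

lemma conj_evalJet {a : ℤ → ℂ} (ha : ∀ k, a (-k) = conj (a k)) (Q : DiffPoly) (x : ℝ) :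
    conj (evalJet Q a x) = evalJet Q a x := by
  induction Q using MvPolynomial.induction_on with
  | C y => rw [evalJet_C, conj_ofReal]
  | add p q hp hq => rw [evalJet_add, Pi.add_apply, map_add, hp, hq]
  | mul_X p i hp => rw [evalJet_mul, Pi.mul_apply, map_mul, hp, evalJet_X, conj_jet ha]

end EvalJet

lemma bracket_pow_mul_norm_le {C : ℝ} {z : ℂ} {k : ℤ} (h : ‖z‖ ≤ C * (bracket k ^ (r + 2))⁻¹) :
    bracket k ^ r * ‖z‖ ≤ C * decayKernel k := by
  have hb := bracket_pos k
  calc bracket k ^ r * ‖z‖ ≤ bracket k ^ r * (C * (bracket k ^ (r + 2))⁻¹) :=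
        mul_le_mul_of_nonneg_left h (pow_pos hb r).le
    _ = C * decayKernel k := by
        unfold decayKernel
        field_simp
        ring

namespace WeightedSumLE

lemma summable (h : WeightedSumLE r A a) : Summable fun k => bracket k ^ r * ‖a k‖ :=
  summable_of_sum_le (fun k => mul_nonneg (pow_nonneg (bracket_pos k).le r) (norm_nonneg _)) h

lemma mono (h : WeightedSumLE r A a) {r' : ℕ} (hr : r' ≤ r) : WeightedSumLE r' A a := fun s =>
  (Finset.sum_le_sum fun k _ => mul_le_mul_of_nonneg_right
    (pow_le_pow_right₀ (one_le_bracket k) hr) (norm_nonneg _)).trans (h s)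

lemma of_norm_le {b : ℤ → ℂ} (h : WeightedSumLE r A a) (hb : ∀ k, ‖b k‖ ≤ ‖a k‖) :
    WeightedSumLE r A b := fun s =>
  (Finset.sum_le_sum fun k _ => mul_le_mul_of_nonneg_left (hb k)
    (pow_nonneg (bracket_pos k).le r)).trans (h s)

lemma of_decay {C : ℝ} (h : ∀ k, ‖a k‖ ≤ C * (bracket k ^ (r + 2))⁻¹) :
    WeightedSumLE r (C * kernelMass) a := by
  have hC : 0 ≤ C := nonneg_of_mul_nonneg_left ((norm_nonneg _).trans (h 0))
    (inv_pos.2 (pow_pos (bracket_pos 0) _))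
  intro s
  calc ∑ k ∈ s, bracket k ^ r * ‖a k‖ ≤ ∑ k ∈ s, C * decayKernel k :=
        Finset.sum_le_sum fun k _ => bracket_pow_mul_norm_le (h k)
    _ = C * ∑ k ∈ s, decayKernel k := by rw [Finset.mul_sum]
    _ ≤ C * kernelMass := mul_le_mul_of_nonneg_left
        (summable_decayKernel.sum_le_tsum s fun k _ => decayKernel_nonneg k) hC

lemma summable_jetTerm (h : WeightedSumLE r A a) {j : ℕ} (hj : j ≤ r) (x : ℝ) :
    Summable (jetTerm a j x) :=
  Summable.of_norm_bounded h.summable (norm_jetTerm_le hj a x)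

lemma norm_jet_le (h : WeightedSumLE r A a) {j : ℕ} (hj : j ≤ r) (x : ℝ) : ‖jet a j x‖ ≤ A :=
  (tsum_of_norm_bounded h.summable.hasSum (norm_jetTerm_le hj a x)).trans
    (h.summable.tsum_le_of_sum_le h)

lemma hasDerivAt_jet (h : WeightedSumLE r A a) {j : ℕ} (hj : j + 1 ≤ r) (x : ℝ) :
    HasDerivAt (jet a j) (jet a (j + 1) x) x :=
  hasDerivAt_tsum h.summable (fun k x => hasDerivAt_jetTerm a j x k)
    (fun k x => norm_jetTerm_le hj a x k) (h.summable_jetTerm (by omega) 0) x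

lemma continuous_jet (h : WeightedSumLE r A a) {j : ℕ} (hj : j ≤ r) : Continuous (jet a j) :=
  continuous_tsum (fun k => continuous_iff_continuousAt.2 fun x =>
    (hasDerivAt_jetTerm a j x k).continuousAt) h.summable (fun k x => norm_jetTerm_le hj a x k)

lemma continuous_evalJet (h : WeightedSumLE r A a) (hQ : Q ∈ orderLE r) :
    Continuous (evalJet Q a) := by
  refine orderLE_induction (P := fun Q => Continuous (evalJet Q a)) (fun i hi => ?_) (fun y => ?_)
    (fun p q hp hq => ?_) (fun p q _ _ hp hq => ?_) hQ
  · rw [evalJet_X]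
    exact h.continuous_jet hi
  · rw [evalJet_C]
    exact continuous_const
  · rw [evalJet_add]
    exact hp.add hq
  · rw [evalJet_mul]
    exact hp.mul hq

lemma hasDerivAt_evalJet (h : WeightedSumLE (r + 1) A a) (hQ : Q ∈ orderLE r) (x : ℝ) :
    HasDerivAt (evalJet Q a) (evalJet (totalDeriv Q) a x) x := by
  refine orderLE_induction (P := fun Q => HasDerivAt (evalJet Q a) (evalJet (totalDeriv Q) a x) x)
    (fun i hi => ?_) (fun y => ?_) (fun p q hp hq => ?_) (fun p q _ _ hp hq => ?_) hQ
  · rw [totalDeriv_X, evalJet_X, evalJet_X]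
    exact h.hasDerivAt_jet (by omega) x
  · rw [totalDeriv_C, evalJet_C, show evalJet 0 a x = 0 from map_zero _]
    exact hasDerivAt_const _ _
  · rw [map_add, evalJet_add, evalJet_add]
    exact hp.add hq
  · rw [Derivation.leibniz, evalJet_add, smul_eq_mul, smul_eq_mul, evalJet_mul, evalJet_mul,
      evalJet_mul]
    exact (hp.mul hq).congr_deriv (by simp only [Pi.add_apply, Pi.mul_apply]; ring)

end WeightedSumLE

lemma exists_norm_evalJet_le (hQ : Q ∈ orderLE r) (A : ℝ) :
    ∃ B, ∀ a, WeightedSumLE r A a → ∀ x, ‖evalJet Q a x‖ ≤ B := by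
  refine orderLE_induction (P := fun Q => ∃ B, ∀ a, WeightedSumLE r A a → ∀ x, ‖evalJet Q a x‖ ≤ B)
    (fun i hi => ⟨A, fun a h x => ?_⟩) (fun y => ⟨|y|, fun a _ x => ?_⟩) ?_ ?_ hQ
  · rw [evalJet_X]
    exact h.norm_jet_le hi x
  · rw [evalJet_C, norm_real, Real.norm_eq_abs]
  · rintro p q ⟨B, hB⟩ ⟨B', hB'⟩
    refine ⟨B + B', fun a h x => ?_⟩
    rw [evalJet_add]
    exact (norm_add_le _ _).trans (add_le_add (hB a h x) (hB' a h x))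
  · rintro p q - - ⟨B, hB⟩ ⟨B', hB'⟩
    refine ⟨B * B', fun a h x => ?_⟩
    rw [evalJet_mul, Pi.mul_apply, norm_mul]
    exact mul_le_mul (hB a h x) (hB' a h x) (norm_nonneg _) ((norm_nonneg _).trans (hB a h x))

end Jets

section FourierCoefficients

open MeasureTheory Filter Topology

/-- The Fourier coefficients of a complex-valued function, integrated over `[0, 2π]` as in `fc`. -/
noncomputable def fourierCoef (f : ℝ → ℂ) (k : ℤ) : ℂ :=
  (Complex.ofReal (2 * Real.pi))⁻¹ *
    ∫ x in (0 : ℝ)..(2 * Real.pi), f x * exp (-I * (k : ℂ) * (x : ℂ))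

lemma fc_eq_fourierCoef (f : ℝ → ℝ) (k : ℤ) : fc f k = fourierCoef (fun x => (f x : ℂ)) k := rfl

variable {f g : ℝ → ℂ} {B : ℝ}

lemma norm_exp_neg_I_mul (k : ℤ) (x : ℝ) : ‖exp (-I * k * x)‖ = 1 := by
  rw [← norm_exp_I_mul (-k) x]
  push_cast
  ring_nf

lemma norm_fourierCoef_le (hB : ∀ x, ‖f x‖ ≤ B) (k : ℤ) : ‖fourierCoef f k‖ ≤ B := by
  have hint := intervalIntegral.norm_integral_le_of_norm_le_const (a := 0) (b := 2 * Real.pi)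
    (f := fun x => f x * exp (-I * (k : ℂ) * (x : ℂ))) (C := B) fun x _ => by
      rw [norm_mul, norm_exp_neg_I_mul, mul_one]
      exact hB x
  have hpi := Real.two_pi_pos
  rw [sub_zero, abs_of_pos hpi] at hint
  rw [fourierCoef, norm_mul, norm_inv, norm_real, Real.norm_eq_abs, abs_of_pos hpi]
  calc _ ≤ (2 * Real.pi)⁻¹ * (B * (2 * Real.pi)) :=
        mul_le_mul_of_nonneg_left hint (inv_pos.2 hpi).le
    _ = B := by field_simp

lemma intervalIntegrable_mul_exp (hf : Continuous f) (k : ℤ) (x y : ℝ) :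
    IntervalIntegrable (fun x : ℝ => f x * exp (-I * (k : ℂ) * (x : ℂ))) volume x y :=
  (hf.mul (by fun_prop)).intervalIntegrable _ _

lemma fourierCoef_add (hf : Continuous f) (hg : Continuous g) (k : ℤ) :
    fourierCoef (fun x => f x + g x) k = fourierCoef f k + fourierCoef g k := by
  simp only [fourierCoef, add_mul]
  rw [intervalIntegral.integral_add (intervalIntegrable_mul_exp hf k _ _)
    (intervalIntegrable_mul_exp hg k _ _), mul_add]

lemma fourierCoef_const_mul (c : ℂ) (f : ℝ → ℂ) (k : ℤ) :
    fourierCoef (fun x => c * f x) k = c * fourierCoef f k := by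
  simp only [fourierCoef, mul_assoc c, intervalIntegral.integral_const_mul]
  ring

lemma fourierCoef_sum {ι : Type*} (s : Finset ι) {F : ι → ℝ → ℂ}
    (hF : ∀ i ∈ s, Continuous (F i)) (k : ℤ) :
    fourierCoef (fun x => ∑ i ∈ s, F i x) k = ∑ i ∈ s, fourierCoef (F i) k := by
  simp only [fourierCoef, Finset.sum_mul]
  rw [intervalIntegral.integral_finsetSum fun i hi => intervalIntegrable_mul_exp (hF i hi) k _ _,
    Finset.mul_sum]

lemma fourierCoef_mul_exp (f : ℝ → ℂ) (k l : ℤ) :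
    fourierCoef (fun x => f x * exp (I * l * x)) k = fourierCoef f (k - l) := by
  simp only [fourierCoef]
  congr 2
  ext x
  rw [mul_assoc, ← exp_add]
  congr 2
  push_cast
  ring

lemma fourierCoef_deriv {f' : ℝ → ℂ} (hf : ∀ x, HasDerivAt f (f' x) x) (hf' : Continuous f')
    (hper : Function.Periodic f (2 * Real.pi)) (k : ℤ) :
    fourierCoef f' k = I * k * fourierCoef f k := by
  have hexp : ∀ x : ℝ, HasDerivAt (fun y : ℝ => exp (-I * k * y))
      (exp (-I * k * x) * (-I * k * 1)) x := fun x =>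
    ((Complex.ofRealCLM.hasDerivAt (x := x)).const_mul (-I * (k : ℂ))).cexp
  have hparts := intervalIntegral.integral_mul_deriv_eq_deriv_mul (a := 0) (b := 2 * Real.pi)
    (fun x _ => hf x) (fun x _ => hexp x) (hf'.intervalIntegrable _ _)
    (Continuous.intervalIntegrable (by fun_prop) _ _)
  have hf_ends : f (2 * Real.pi) = f 0 := by simpa using hper 0
  have hexp_end : exp (-I * k * ((2 * Real.pi : ℝ) : ℂ)) = 1 :=
    exp_eq_one_iff.2 ⟨-k, by push_cast; ring⟩
  have hfactor : ∫ x in (0 : ℝ)..(2 * Real.pi), f x * (exp (-I * k * x) * (-I * k * 1)) =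
      (-I * k) * ∫ x in (0 : ℝ)..(2 * Real.pi), f x * exp (-I * k * x) := by
    rw [← intervalIntegral.integral_const_mul]
    exact intervalIntegral.integral_congr fun x _ => by ring
  rw [hf_ends, hexp_end, hfactor] at hparts
  simp only [ofReal_zero, mul_zero, exp_zero, sub_self, zero_sub] at hparts
  rw [fourierCoef, fourierCoef]
  linear_combination (Complex.ofReal (2 * Real.pi))⁻¹ * hparts

lemma fourierCoef_neg (hf : ∀ x, conj (f x) = f x) (k : ℤ) :
    fourierCoef f (-k) = conj (fourierCoef f k) := by
  rw [fourierCoef, fourierCoef, map_mul, map_inv₀, conj_ofReal,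
    intervalIntegral.integral_of_le Real.two_pi_pos.le,
    intervalIntegral.integral_of_le Real.two_pi_pos.le, ← integral_conj]
  congr 2
  ext x
  rw [map_mul, hf, ← exp_conj, map_mul, map_mul, conj_ofReal, map_neg, conj_I, map_intCast]
  push_cast
  ring_nf

lemma tendsto_fourierCoef {ι : Type*} {l : Filter ι} [l.IsCountablyGenerated] {F : ι → ℝ → ℂ}
    (hF : ∀ᶠ i in l, Continuous (F i)) (hB : ∀ᶠ i in l, ∀ x, ‖F i x‖ ≤ B)
    (hlim : ∀ x, Tendsto (fun i => F i x) l (𝓝 (f x))) (k : ℤ) :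
    Tendsto (fun i => fourierCoef (F i) k) l (𝓝 (fourierCoef f k)) := by
  refine Tendsto.const_mul _ (intervalIntegral.tendsto_integral_filter_of_dominated_convergence
    (fun _ => B) ?_ ?_ (continuous_const.intervalIntegrable _ _)
    (Eventually.of_forall fun x _ => (hlim x).mul_const _))
  · filter_upwards [hF] with i hi
    exact (hi.mul (by fun_prop)).aestronglyMeasurable
  · filter_upwards [hB] with i hi
    refine Eventually.of_forall fun x _ => ?_
    rw [norm_mul, norm_exp_neg_I_mul, mul_one]
    exact hi x

-- The period is a variable because `fourierCoeffOn` on `[0, 2π]` lives on `AddCircle (2π - 0)`.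
lemma fourier_apply_of_eq_two_pi {T : ℝ} (hT : T = 2 * Real.pi) (k : ℤ) (x : ℝ) :
    fourier k (x : AddCircle T) = exp (I * k * x) := by
  rw [hT, fourier_coe_apply]
  have hpi : (Real.pi : ℂ) ≠ 0 := ofReal_ne_zero.2 Real.pi_ne_zero
  push_cast
  congr 1
  field_simp

lemma fourier_neg_smul_eq {T : ℝ} (hT : T = 2 * Real.pi) (f : ℝ → ℂ) (k : ℤ) (x : ℝ) :
    fourier (-k) (x : AddCircle T) • f x = f x * exp (-I * k * x) := by
  rw [fourier_apply_of_eq_two_pi hT, smul_eq_mul, mul_comm, Int.cast_neg, mul_neg, neg_mul I]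

lemma fourierCoeffOn_two_pi (f : ℝ → ℂ) (k : ℤ) :
    fourierCoeffOn Real.two_pi_pos f k = fourierCoef f k := by
  rw [fourierCoeffOn_eq_integral, fourierCoef, Complex.real_smul]
  congr 1
  · push_cast
    rw [one_div, sub_zero]
  · exact intervalIntegral.integral_congr fun x _ => fourier_neg_smul_eq (sub_zero _) f k x

lemma fourierCoeff_lift [Fact (0 < 2 * Real.pi)] (hper : Function.Periodic f (2 * Real.pi))
    (k : ℤ) : fourierCoeff hper.lift k = fourierCoef f k := by
  rw [fourierCoeff_eq_intervalIntegral _ k 0, zero_add, fourierCoef, Complex.real_smul]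
  congr 1
  · push_cast
    rw [one_div]
  · exact intervalIntegral.integral_congr fun x _ => fourier_neg_smul_eq rfl f k x

lemma sum_norm_fourierCoef_sq_le (hf : Continuous f) (hB : ∀ x, ‖f x‖ ≤ B) (s : Finset ℤ) :
    ∑ k ∈ s, ‖fourierCoef f k‖ ^ 2 ≤ B ^ 2 := by
  have hpi := Real.two_pi_pos
  have hmem : MemLp f 2 (volume.restrict (Set.Ioc 0 (2 * Real.pi))) :=
    MemLp.of_bound hf.aestronglyMeasurable B (Eventually.of_forall hB)
  have hparseval := hasSum_sq_fourierCoeffOn hpi hmem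
  simp only [fourierCoeffOn_two_pi, sub_zero] at hparseval
  refine (sum_le_hasSum s (fun _ _ => sq_nonneg _) hparseval).trans ?_
  have hint : ∫ x in (0 : ℝ)..(2 * Real.pi), ‖f x‖ ^ 2 ≤ ∫ x in (0 : ℝ)..(2 * Real.pi), B ^ 2 :=
    intervalIntegral.integral_mono_on hpi.le ((hf.norm.pow 2).intervalIntegrable _ _)
      (continuous_const.intervalIntegrable _ _)
      fun x _ => pow_le_pow_left₀ (norm_nonneg _) (hB x) 2
  rw [intervalIntegral.integral_const, sub_zero] at hint
  calc _ ≤ (2 * Real.pi)⁻¹ • ((2 * Real.pi) • B ^ 2) :=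
        mul_le_mul_of_nonneg_left hint (inv_pos.2 hpi).le
    _ = B ^ 2 := inv_smul_smul₀ hpi.ne' _

lemma eq_jet_fourierCoef (hf : Continuous f) (hper : Function.Periodic f (2 * Real.pi))
    (hs : Summable (fourierCoef f)) (x : ℝ) : f x = jet (fourierCoef f) 0 x := by
  have : Fact (0 < 2 * Real.pi) := ⟨Real.two_pi_pos⟩
  let F : C(AddCircle (2 * Real.pi), ℂ) := ⟨hper.lift, continuous_quot_lift _ hf⟩
  have hcoeff : fourierCoeff F = fourierCoef f := funext (fourierCoeff_lift hper)
  have hsum := has_pointwise_sum_fourier_series_of_summable (f := F) (by rwa [hcoeff])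
    (x : AddCircle (2 * Real.pi))
  calc f x = ∑' k, fourierCoeff F k • fourier k (x : AddCircle (2 * Real.pi)) := hsum.tsum_eq.symm
    _ = jet (fourierCoef f) 0 x := tsum_congr fun k => by
      rw [hcoeff, jetTerm, pow_zero, one_mul, smul_eq_mul, fourier_apply_of_eq_two_pi rfl]

end FourierCoefficients

/-! ### Paralinearization -/

section Paralinearization

open Filter Topology MvPolynomial

variable {r m : ℕ} {A : ℝ} {a : ℤ → ℂ} {p Q N E : DiffPoly} {c : ℕ → DiffPoly} {k : ℤ}

namespace WeightedSumLE

lemma fourierCoef_totalDeriv (h : WeightedSumLE (r + 1) A a) (hQ : Q ∈ orderLE r) (k : ℤ) :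
    fourierCoef (evalJet (totalDeriv Q) a) k = I * k * fourierCoef (evalJet Q a) k :=
  fourierCoef_deriv (h.hasDerivAt_evalJet hQ) (h.continuous_evalJet (totalDeriv_mem_orderLE hQ))
    (evalJet_periodic a Q) k

lemma fourierCoef_iterate_totalDeriv (h : WeightedSumLE (r + m) A a) (hQ : Q ∈ orderLE r) (k : ℤ) :
    fourierCoef (evalJet (totalDeriv^[m] Q) a) k = (I * k) ^ m * fourierCoef (evalJet Q a) k := by
  induction m with
  | zero => rw [Function.iterate_zero, id, pow_zero, one_mul]
  | succ m ih =>
    rw [Function.iterate_succ_apply',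
      fourierCoef_totalDeriv (by rwa [add_assoc]) (iterate_totalDeriv_mem_orderLE hQ m),
      ih (h.mono (by omega)), pow_succ', mul_assoc (I * (k : ℂ))]

end WeightedSumLE

lemma bracket_pow_le (n : ℤ) (p : ℕ) : bracket n ^ p ≤ 2 ^ p * (1 + |(n : ℝ)| ^ p) := by
  rcases le_total 1 |(n : ℝ)| with hn | hn
  · calc bracket n ^ p ≤ (2 * |(n : ℝ)|) ^ p :=
          pow_le_pow_left₀ (bracket_pos n).le (by unfold bracket; linarith) p
      _ ≤ 2 ^ p * (1 + |(n : ℝ)| ^ p) := by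
          rw [mul_pow]
          gcongr
          linarith
  · calc bracket n ^ p ≤ 2 ^ p :=
          pow_le_pow_left₀ (bracket_pos n).le (by unfold bracket; linarith) p
      _ ≤ 2 ^ p * (1 + |(n : ℝ)| ^ p) :=
          le_mul_of_one_le_right (by positivity) (by linarith [pow_nonneg (abs_nonneg (n : ℝ)) p])

lemma exists_norm_fourierCoef_evalJet_le (hQ : Q ∈ orderLE r) (p : ℕ) (A : ℝ) :
    ∃ B, 0 ≤ B ∧ ∀ a, WeightedSumLE (r + p) A a →
      ∀ n, ‖fourierCoef (evalJet Q a) n‖ ≤ B * (bracket n ^ p)⁻¹ := by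
  obtain ⟨B₀, hB₀⟩ := exists_norm_evalJet_le hQ A
  obtain ⟨B₁, hB₁⟩ := exists_norm_evalJet_le (iterate_totalDeriv_mem_orderLE hQ p) A
  refine ⟨|2 ^ p * (B₀ + B₁)|, abs_nonneg _, fun a ha n => ?_⟩
  rw [← div_eq_mul_inv, le_div_iff₀ (pow_pos (bracket_pos n) p)]
  have hlow : ‖fourierCoef (evalJet Q a) n‖ ≤ B₀ :=
    norm_fourierCoef_le (hB₀ a (ha.mono (by omega))) n
  have hhigh : |(n : ℝ)| ^ p * ‖fourierCoef (evalJet Q a) n‖ ≤ B₁ := by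
    have := norm_fourierCoef_le (hB₁ a ha) n
    rwa [ha.fourierCoef_iterate_totalDeriv hQ, norm_mul, norm_pow, norm_mul, norm_I, one_mul,
      norm_intCast] at this
  calc ‖fourierCoef (evalJet Q a) n‖ * bracket n ^ p
      ≤ ‖fourierCoef (evalJet Q a) n‖ * (2 ^ p * (1 + |(n : ℝ)| ^ p)) :=
        mul_le_mul_of_nonneg_left (bracket_pow_le n p) (norm_nonneg _)
    _ = 2 ^ p * (‖fourierCoef (evalJet Q a) n‖ +
          |(n : ℝ)| ^ p * ‖fourierCoef (evalJet Q a) n‖) := by ring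
    _ ≤ 2 ^ p * (B₀ + B₁) := by gcongr
    _ ≤ |2 ^ p * (B₀ + B₁)| := le_abs_self _

section Truncation

variable (s : Finset ℤ)

lemma exists_weightedSumLE_indicator (a : ℤ → ℂ) (r : ℕ) :
    ∃ A, WeightedSumLE r A ((s : Set ℤ).indicator a) := by
  refine ⟨∑ k ∈ s, bracket k ^ r * ‖a k‖, fun s' => ?_⟩
  calc ∑ k ∈ s', bracket k ^ r * ‖(s : Set ℤ).indicator a k‖
      = ∑ k ∈ s', if k ∈ s then bracket k ^ r * ‖a k‖ else 0 := by
        refine Finset.sum_congr rfl fun k _ => ?_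
        by_cases hk : k ∈ s <;> simp [hk]
    _ = ∑ k ∈ s' ∩ s, bracket k ^ r * ‖a k‖ := by rw [Finset.sum_ite_mem]
    _ ≤ ∑ k ∈ s, bracket k ^ r * ‖a k‖ :=
        Finset.sum_le_sum_of_subset_of_nonneg Finset.inter_subset_right fun k _ _ =>
          mul_nonneg (pow_nonneg (bracket_pos k).le r) (norm_nonneg _)

lemma WeightedSumLE.indicator (h : WeightedSumLE r A a) :
    WeightedSumLE r A ((s : Set ℤ).indicator a) :=
  h.of_norm_le fun _ => norm_indicator_le_norm_self _ _

lemma jet_indicator (a : ℤ → ℂ) (j : ℕ) (x : ℝ) :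
    jet ((s : Set ℤ).indicator a) j x = ∑ k ∈ s, jetTerm a j x k := by
  rw [jet, tsum_eq_sum (s := s)]
  · refine Finset.sum_congr rfl fun k hk => ?_
    rw [jetTerm, Set.indicator_of_mem (Finset.mem_coe.2 hk), jetTerm]
  · intro k hk
    rw [jetTerm, Set.indicator_of_notMem (mt Finset.mem_coe.1 hk), mul_zero, zero_mul]

lemma fourierCoef_mul_jet_indicator {f : ℝ → ℂ} (hf : Continuous f) (a : ℤ → ℂ) (j : ℕ) (k : ℤ) :
    fourierCoef (fun x => f x * jet ((s : Set ℤ).indicator a) j x) k =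
      ∑ l ∈ s, fourierCoef f (k - l) * ((I * l) ^ j * a l) := by
  have hexpand : (fun x => f x * jet ((s : Set ℤ).indicator a) j x) =
      fun x => ∑ l ∈ s, ((I * l) ^ j * a l) * (f x * exp (I * l * x)) := by
    ext x
    rw [jet_indicator, Finset.mul_sum]
    refine Finset.sum_congr rfl fun l _ => ?_
    rw [jetTerm]
    ring
  rw [hexpand, fourierCoef_sum _ fun l _ => by fun_prop]
  refine Finset.sum_congr rfl fun l _ => ?_
  rw [fourierCoef_const_mul, fourierCoef_mul_exp, mul_comm]

lemma IsTopDecomposition.fourierCoef_indicator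
    (h : IsTopDecomposition m (totalDeriv^[m] N) c E) (hm : 9 ≤ m) (hN : N ∈ orderLE 3)
    (a : ℤ → ℂ) (k : ℤ) :
    (I * k) ^ m * fourierCoef (evalJet N ((s : Set ℤ).indicator a)) k =
      ∑ j ∈ Finset.range 5, ∑ l ∈ s,
        fourierCoef (evalJet (c j) ((s : Set ℤ).indicator a)) (k - l) *
          ((I * l) ^ (m + 3 - j) * a l) +
      fourierCoef (evalJet E ((s : Set ℤ).indicator a)) k := by
  set b := (s : Set ℤ).indicator a
  obtain ⟨A, hA⟩ := exists_weightedSumLE_indicator s a (3 + m)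
  have hcoeff : ∀ j ∈ Finset.range 5, Continuous (evalJet (c j) b) := fun j hj =>
    hA.continuous_evalJet (orderLE_mono (by omega) (h.coeff_mem j (Finset.mem_range.1 hj)))
  have hterm : ∀ j ∈ Finset.range 5,
      Continuous fun x => evalJet (c j) b x * jet b (m + 3 - j) x := fun j hj =>
    (hcoeff j hj).mul (hA.continuous_jet (by omega))
  have heval : evalJet (totalDeriv^[m] N) b = fun x =>
      ∑ j ∈ Finset.range 5, evalJet (c j) b x * jet b (m + 3 - j) x + evalJet E b x := by
    ext x
    rw [h.eq_sum_add, evalJet_add, Pi.add_apply, evalJet_sum]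
    simp only [evalJet_mul, Pi.mul_apply, evalJet_X]
  rw [← hA.fourierCoef_iterate_totalDeriv hN, heval,
    fourierCoef_add (continuous_finsetSum _ hterm)
      (hA.continuous_evalJet (orderLE_mono (by omega) h.remainder_mem)),
    fourierCoef_sum _ hterm]
  exact congrArg (· + _) (Finset.sum_congr rfl fun j hj =>
    fourierCoef_mul_jet_indicator s (hcoeff j hj) a (m + 3 - j) k)

lemma leadingSymbol_mul_eq (α₀ α₁ : ℤ → ℂ) (k l : ℤ) (m : ℕ) (z : ℂ) :
    leadingSymbol α₀ α₁ k l * ((I * l) ^ m * z) =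
      α₀ (k - l) * ((I * l) ^ (m + 3) * z) + α₁ (k - l) * ((I * l) ^ (m + 2) * z) := by
  rw [leadingSymbol, pow_add _ m 3, pow_add _ m 2, mul_pow I _ 3, mul_pow I _ 2, I_sq,
    pow_succ I 2, I_sq]
  ring

lemma tsum_leadingSymbol_indicator (α₀ α₁ a : ℤ → ℂ) (k : ℤ) (m : ℕ) :
    ∑' l, leadingSymbol α₀ α₁ k l * ((I * l) ^ m * (s : Set ℤ).indicator a l) =
      ∑ l ∈ s, α₀ (k - l) * ((I * l) ^ (m + 3) * a l) +
      ∑ l ∈ s, α₁ (k - l) * ((I * l) ^ (m + 2) * a l) := by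
  rw [tsum_eq_sum (s := s), ← Finset.sum_add_distrib]
  · refine Finset.sum_congr rfl fun l hl => ?_
    rw [Set.indicator_of_mem (Finset.mem_coe.2 hl), leadingSymbol_mul_eq]
  · intro l hl
    rw [Set.indicator_of_notMem (mt Finset.mem_coe.1 hl), mul_zero, mul_zero]

lemma norm_I_mul_pow_mul (k : ℤ) (m : ℕ) (z : ℂ) :
    ‖(I * k) ^ m * z‖ = |(k : ℝ)| ^ m * ‖z‖ := by
  rw [norm_mul, norm_pow, norm_mul, norm_I, one_mul, norm_intCast]

lemma norm_mul_I_mul_pow_le {α : ℤ → ℂ} {B : ℝ} (hB : ∀ n, ‖α n‖ ≤ B * (bracket n ^ 3)⁻¹)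
    (hk : k ≠ 0) (l : ℤ) {j : ℕ} (hj : 2 ≤ j) (hjm : j < m) (z : ℂ) :
    ‖α (k - l) * ((I * l) ^ (m + 3 - j) * z)‖ ≤
      B * |(k : ℝ)| * (decayKernel (k - l) * ‖(I * l) ^ m * z‖) := by
  have hB0 : 0 ≤ B := by simpa [bracket] using (norm_nonneg _).trans (hB 0)
  rcases eq_or_ne l 0 with rfl | hl
  · rw [Int.cast_zero, mul_zero, zero_pow (by omega), zero_mul, mul_zero, norm_zero]
    exact mul_nonneg (by positivity) (mul_nonneg (decayKernel_nonneg _) (norm_nonneg _))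
  have hl1 : (1 : ℝ) ≤ |(l : ℝ)| := by exact_mod_cast Int.one_le_abs hl
  have hpow : |(l : ℝ)| ^ (m + 3 - j) ≤ |(k : ℝ)| * bracket (k - l) * |(l : ℝ)| ^ m :=
    calc |(l : ℝ)| ^ (m + 3 - j) ≤ |(l : ℝ)| ^ (m + 1) := pow_le_pow_right₀ hl1 (by omega)
      _ = |(l : ℝ)| * |(l : ℝ)| ^ m := pow_succ' _ _
      _ ≤ _ := mul_le_mul_of_nonneg_right (abs_le_abs_mul_bracket_sub hk) (by positivity)
  have hb := bracket_pos (k - l)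
  rw [norm_mul, norm_I_mul_pow_mul, norm_I_mul_pow_mul]
  calc ‖α (k - l)‖ * (|(l : ℝ)| ^ (m + 3 - j) * ‖z‖)
      ≤ B * (bracket (k - l) ^ 3)⁻¹ * (|(k : ℝ)| * bracket (k - l) * |(l : ℝ)| ^ m * ‖z‖) :=
        mul_le_mul (hB _) (mul_le_mul_of_nonneg_right hpow (norm_nonneg _)) (by positivity)
          (by positivity)
    _ = B * |(k : ℝ)| * (decayKernel (k - l) * (|(l : ℝ)| ^ m * ‖z‖)) := by
        unfold decayKernel
        field_simp

lemma norm_sum_mul_I_mul_pow_le {α : ℤ → ℂ} {B : ℝ} (hB : ∀ n, ‖α n‖ ≤ B * (bracket n ^ 3)⁻¹)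
    (hk : k ≠ 0) {j : ℕ} (hj : 2 ≤ j) (hjm : j < m)
    (hs : Summable fun l : ℤ => ‖(I * l) ^ m * a l‖ ^ 2) :
    ‖∑ l ∈ s, α (k - l) * ((I * l) ^ (m + 3 - j) * a l)‖ ≤
      B * |(k : ℝ)| * kernelConv (fun l => ‖(I * l) ^ m * a l‖) k := by
  have hB0 : 0 ≤ B := by simpa [bracket] using (norm_nonneg _).trans (hB 0)
  calc _ ≤ ∑ l ∈ s, B * |(k : ℝ)| * (decayKernel (k - l) * ‖(I * l) ^ m * a l‖) :=
        norm_sum_le_of_le _ fun l _ => norm_mul_I_mul_pow_le hB hk l hj hjm (a l)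
    _ = B * |(k : ℝ)| * ∑ l ∈ s, decayKernel (k - l) * ‖(I * l) ^ m * a l‖ := by
        rw [Finset.mul_sum]
    _ ≤ B * |(k : ℝ)| * kernelConv (fun l => ‖(I * l) ^ m * a l‖) k :=
        mul_le_mul_of_nonneg_left ((summable_decayKernel_mul hs k).sum_le_tsum s fun l _ =>
          mul_nonneg (decayKernel_nonneg _) (norm_nonneg _)) (by positivity)

end Truncation

lemma WeightedSumLE.tendsto_evalJet (h : WeightedSumLE r A a) (hQ : Q ∈ orderLE r) (x : ℝ) :
    Tendsto (fun s : Finset ℤ => evalJet Q ((s : Set ℤ).indicator a) x) atTop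
      (𝓝 (evalJet Q a x)) := by
  refine orderLE_induction
    (P := fun Q => Tendsto (fun s : Finset ℤ => evalJet Q ((s : Set ℤ).indicator a) x) atTop
      (𝓝 (evalJet Q a x)))
    (fun i hi => ?_) (fun y => ?_) (fun p q hp hq => ?_) (fun p q _ _ hp hq => ?_) hQ
  · simp only [evalJet_X, jet_indicator]
    exact (h.summable_jetTerm hi x).hasSum
  · simp only [evalJet_C]
    exact tendsto_const_nhds
  · simp only [evalJet_add, Pi.add_apply]
    exact hp.add hq
  · simp only [evalJet_mul, Pi.mul_apply]
    exact hp.mul hq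

lemma WeightedSumLE.tendsto_fourierCoef_evalJet (h : WeightedSumLE r A a) (hQ : Q ∈ orderLE r)
    (k : ℤ) :
    Tendsto (fun s : Finset ℤ => fourierCoef (evalJet Q ((s : Set ℤ).indicator a)) k) atTop
      (𝓝 (fourierCoef (evalJet Q a) k)) := by
  obtain ⟨B, hB⟩ := exists_norm_evalJet_le hQ A
  exact tendsto_fourierCoef (Eventually.of_forall fun s => (h.indicator s).continuous_evalJet hQ)
    (Eventually.of_forall fun s => hB _ (h.indicator s)) (h.tendsto_evalJet hQ) k

/-- The coefficient of `∂ᵐ⁺²u` in `∂ᵐ(N(u))`; that of `∂ᵐ⁺³u` is `pderiv 3 N`. -/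
noncomputable def subleadingCoeff (N : DiffPoly) (m : ℕ) : DiffPoly :=
  pderiv 2 N + m * totalDeriv (pderiv 3 N)

lemma subleadingCoeff_mem_orderLE (hN : N ∈ orderLE 3) (m : ℕ) :
    subleadingCoeff N m ∈ orderLE 4 :=
  add_mem (orderLE_mono (by omega) (pderiv_mem_orderLE 2 hN))
    (mul_mem (natCast_mem _ m) (totalDeriv_mem_orderLE (pderiv_mem_orderLE 3 hN)))

/-- The leading part, of orders three and two, of `∂ᵐ(N(u))` as an operator acting on `∂ᵐu`,
on the Fourier side: `a` is the sequence of Fourier coefficients of `u`. -/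
noncomputable def leadingPart (N : DiffPoly) (m : ℕ) (a : ℤ → ℂ) (k : ℤ) : ℂ :=
  ∑' l : ℤ, leadingSymbol (fourierCoef (evalJet (pderiv 3 N) a))
    (fourierCoef (evalJet (subleadingCoeff N m) a)) k l * ((I * l) ^ m * a l)

lemma IsTopDecomposition.exists_norm_sub_leadingPart_indicator_le
    (h : IsTopDecomposition m (totalDeriv^[m] N) c E) (hm : 9 ≤ m) (hN : N ∈ orderLE 3)
    (h0 : c 0 = pderiv 3 N) (h1 : c 1 = subleadingCoeff N m) (A : ℝ) :
    ∃ C, 0 ≤ C ∧ ∀ a (s : Finset ℤ), WeightedSumLE 10 A ((s : Set ℤ).indicator a) →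
      (Summable fun l : ℤ => ‖(I * l) ^ m * a l‖ ^ 2) → ∀ k : ℤ, k ≠ 0 →
      ‖(I * k) ^ m * fourierCoef (evalJet N ((s : Set ℤ).indicator a)) k -
          leadingPart N m ((s : Set ℤ).indicator a) k‖ ≤
        C * |(k : ℝ)| * kernelConv (fun l => ‖(I * l) ^ m * a l‖) k +
          ‖fourierCoef (evalJet E ((s : Set ℤ).indicator a)) k‖ := by
  obtain ⟨B₂, hB₂0, hB₂⟩ := exists_norm_fourierCoef_evalJet_le (h.coeff_mem 2 (by omega)) 3 A
  obtain ⟨B₃, hB₃0, hB₃⟩ := exists_norm_fourierCoef_evalJet_le (h.coeff_mem 3 (by omega)) 3 A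
  obtain ⟨B₄, hB₄0, hB₄⟩ := exists_norm_fourierCoef_evalJet_le (h.coeff_mem 4 (by omega)) 3 A
  refine ⟨B₂ + B₃ + B₄, by positivity, fun a s ha hs k hk => ?_⟩
  rw [h.fourierCoef_indicator s hm hN, leadingPart, tsum_leadingSymbol_indicator, ← h0, ← h1]
  simp only [Finset.sum_range_succ, Finset.sum_range_zero, zero_add]
  rw [Nat.sub_zero, show m + 3 - 1 = m + 2 by omega]
  have h2 := norm_sum_mul_I_mul_pow_le s (hB₂ _ ha) hk le_rfl (by omega) hs
  have h3 := norm_sum_mul_I_mul_pow_le (j := 3) s (hB₃ _ ha) hk (by omega) (by omega) hs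
  have h4 := norm_sum_mul_I_mul_pow_le (j := 4) s (hB₄ _ ha) hk (by omega) (by omega) hs
  have hcancel : ∀ S₀ S₁ S₂ S₃ S₄ R : ℂ,
      ‖S₀ + S₁ + S₂ + S₃ + S₄ + R - (S₀ + S₁)‖ ≤ ‖S₂‖ + ‖S₃‖ + ‖S₄‖ + ‖R‖ :=
    fun S₀ S₁ S₂ S₃ S₄ R => by
      rw [show S₀ + S₁ + S₂ + S₃ + S₄ + R - (S₀ + S₁) = S₂ + S₃ + S₄ + R by ring]
      exact norm_add₄_le
  refine (hcancel _ _ _ _ _ _).trans ?_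
  linarith

lemma WeightedSumLE.tendsto_leadingPart (ha : WeightedSumLE 9 A a) (hN : N ∈ orderLE 3)
    (hs : Summable fun l : ℤ => ‖(I * l) ^ m * a l‖ ^ 2) (hk : k ≠ 0) :
    Tendsto (fun s : Finset ℤ => leadingPart N m ((s : Set ℤ).indicator a) k) atTop
      (𝓝 (leadingPart N m a k)) := by
  have htop := pderiv_mem_orderLE 3 hN
  have hsub := subleadingCoeff_mem_orderLE hN m
  obtain ⟨D₀, hD₀0, hD₀⟩ := exists_norm_fourierCoef_evalJet_le htop 5 A
  obtain ⟨D₁, hD₁0, hD₁⟩ := exists_norm_fourierCoef_evalJet_le hsub 5 A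
  have hweak : ∀ {D : ℝ}, D ≤ D₀ + D₁ → ∀ n : ℤ,
      D * (bracket n ^ 5)⁻¹ ≤ (D₀ + D₁) * (bracket n ^ 5)⁻¹ := fun hD n =>
    mul_le_mul_of_nonneg_right hD (inv_nonneg.2 (pow_nonneg (bracket_pos n).le 5))
  refine tendsto_tsum_of_dominated_convergence
    (bound := fun l => 2 * (D₀ + D₁) * |(k : ℝ)| ^ 3 *
      (decayKernel (k - l) * ‖(I * l) ^ m * a l‖))
    ((summable_decayKernel_mul hs k).mul_left _) (fun l => ?_)
    (Eventually.of_forall fun s l => ?_)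
  · refine Tendsto.mul ?_ (tendsto_const_nhds.congr' ?_)
    · unfold leadingSymbol
      exact (((ha.mono (by omega)).tendsto_fourierCoef_evalJet htop _).mul_const _).sub
        (((ha.mono (by omega)).tendsto_fourierCoef_evalJet hsub _).mul_const _)
    · filter_upwards [eventually_ge_atTop {l}] with s hl
      rw [Set.indicator_of_mem (Finset.mem_coe.2 (Finset.singleton_subset_iff.1 hl))]
  · have hsymbol := norm_leadingSymbol_le_abs_pow_mul_decayKernel
      (fun n => (hD₀ _ ((ha.indicator s).mono (by omega)) n).trans (hweak (by linarith) n))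
      (fun n => (hD₁ _ (ha.indicator s) n).trans (hweak (by linarith) n)) hk l
    rw [norm_mul, ← mul_assoc, norm_mul, norm_mul _ (a l)]
    exact mul_le_mul hsymbol
      (mul_le_mul_of_nonneg_left (norm_indicator_le_norm_self _ _) (norm_nonneg _)) (by positivity)
      (mul_nonneg (by positivity) (decayKernel_nonneg _))

/-- For truncated `a` the bound follows from the decomposition of `∂ᵐ(N(u))`. It passes to the
limit although `∂ᵐ⁺³u` itself need not exist. -/
theorem exists_norm_sub_leadingPart_le (hN : N ∈ orderLE 3) (hm : 9 ≤ m) (A : ℝ) :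
    ∃ E ∈ orderLE (m - 2), ∃ C, 0 ≤ C ∧ ∀ a A', WeightedSumLE 10 A a →
      WeightedSumLE (m - 2) A' a → (Summable fun l : ℤ => ‖(I * l) ^ m * a l‖ ^ 2) →
      ∀ k : ℤ, k ≠ 0 →
      ‖(I * k) ^ m * fourierCoef (evalJet N a) k - leadingPart N m a k‖ ≤
        C * |(k : ℝ)| * kernelConv (fun l => ‖(I * l) ^ m * a l‖) k +
          ‖fourierCoef (evalJet E a) k‖ := by
  obtain ⟨c, E, h, h0, h1⟩ := exists_isTopDecomposition_iterate_totalDeriv hN hm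
  obtain ⟨C, hC0, hC⟩ := h.exists_norm_sub_leadingPart_indicator_le hm hN h0 h1 A
  refine ⟨E, h.remainder_mem, C, hC0, fun a A' ha ha' hs k hk => ?_⟩
  have hleft := (((ha.mono (by omega)).tendsto_fourierCoef_evalJet hN k).const_mul
    ((I * k) ^ m)).sub ((ha.mono (by omega)).tendsto_leadingPart hN hs hk)
  exact le_of_tendsto_of_tendsto' hleft.norm
    (tendsto_const_nhds.add (ha'.tendsto_fourierCoef_evalJet h.remainder_mem k).norm)
    fun s => hC a s (ha.indicator s) hs k hk

end Paralinearization

section TimeDependence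

open Filter Topology MvPolynomial MeasureTheory

variable {r : ℕ} {B C : ℝ} {a a' : ℝ → ℤ → ℂ} {Q : DiffPoly} {S : Set ℝ}

section Continuity

variable (hc : ∀ k, ContinuousOn (fun t => a t k) S)
  (ha : ∀ t ∈ S, ∀ k, ‖a t k‖ ≤ C * (bracket k ^ (r + 2))⁻¹)
include hc ha

lemma continuousOn_jet {j : ℕ} (hj : j ≤ r) (x : ℝ) :
    ContinuousOn (fun t => jet (a t) j x) S :=
  continuousOn_tsum (fun k => (continuousOn_const.mul (hc k)).mul continuousOn_const)
    (summable_decayKernel.mul_left C)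
    fun k t ht => (norm_jetTerm_le hj (a t) x k).trans (bracket_pow_mul_norm_le (ha t ht k))

lemma continuousOn_evalJet (hQ : Q ∈ orderLE r) (x : ℝ) :
    ContinuousOn (fun t => evalJet Q (a t) x) S := by
  refine orderLE_induction (P := fun Q => ContinuousOn (fun t => evalJet Q (a t) x) S)
    (fun i hi => ?_) (fun y => ?_) (fun p q hp hq => ?_) (fun p q _ _ hp hq => ?_) hQ
  · simp only [evalJet_X]
    exact continuousOn_jet hc ha hi x
  · simp only [evalJet_C]
    exact continuousOn_const
  · simp only [evalJet_add, Pi.add_apply]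
    exact hp.add hq
  · simp only [evalJet_mul, Pi.mul_apply]
    exact hp.mul hq

lemma continuousOn_fourierCoef_evalJet (hQ : Q ∈ orderLE r) (n : ℤ) :
    ContinuousOn (fun t => fourierCoef (evalJet Q (a t)) n) S := by
  intro t₀ ht₀
  obtain ⟨B, hB⟩ := exists_norm_evalJet_le hQ (C * kernelMass)
  refine tendsto_fourierCoef (B := B) ?_ ?_ (fun x => continuousOn_evalJet hc ha hQ x t₀ ht₀) n
  · filter_upwards [self_mem_nhdsWithin] with t ht
    exact (WeightedSumLE.of_decay (ha t ht)).continuous_evalJet hQ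
  · filter_upwards [self_mem_nhdsWithin] with t ht
    exact hB _ (WeightedSumLE.of_decay (ha t ht))

end Continuity

/-- `D` is the derivative in `t ∈ S` of the family of functions `F t`, and both are continuous
in `x` and bounded by `B`. -/
structure IsBoundedDeriv (S : Set ℝ) (B : ℝ) (F D : ℝ → ℝ → ℂ) : Prop where
  hasDerivAt : ∀ t ∈ S, ∀ x, HasDerivAt (fun t => F t x) (D t x) t
  continuous : ∀ t ∈ S, Continuous (F t)
  continuous_deriv : ∀ t ∈ S, Continuous (D t)
  norm_le : ∀ t ∈ S, ∀ x, ‖F t x‖ ≤ B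
  norm_deriv_le : ∀ t ∈ S, ∀ x, ‖D t x‖ ≤ B

namespace IsBoundedDeriv

variable {B' : ℝ} {F F' D D' : ℝ → ℝ → ℂ}

lemma const (S : Set ℝ) (c : ℂ) : IsBoundedDeriv S ‖c‖ (fun _ _ => c) fun _ _ => 0 where
  hasDerivAt _ _ _ := hasDerivAt_const _ _
  continuous _ _ := continuous_const
  continuous_deriv _ _ := continuous_const
  norm_le _ _ _ := le_rfl
  norm_deriv_le _ _ _ := by
    rw [norm_zero]
    exact norm_nonneg c

variable (h : IsBoundedDeriv S B F D)
include h

lemma add (h' : IsBoundedDeriv S B' F' D') :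
    IsBoundedDeriv S (B + B') (fun t => F t + F' t) fun t => D t + D' t where
  hasDerivAt t ht x := (h.hasDerivAt t ht x).add (h'.hasDerivAt t ht x)
  continuous t ht := (h.continuous t ht).add (h'.continuous t ht)
  continuous_deriv t ht := (h.continuous_deriv t ht).add (h'.continuous_deriv t ht)
  norm_le t ht x := norm_add_le_of_le (h.norm_le t ht x) (h'.norm_le t ht x)
  norm_deriv_le t ht x := norm_add_le_of_le (h.norm_deriv_le t ht x) (h'.norm_deriv_le t ht x)

lemma mul (h' : IsBoundedDeriv S B' F' D') :
    IsBoundedDeriv S (B * B' + B * B') (fun t => F t * F' t)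
      fun t => D t * F' t + F t * D' t where
  hasDerivAt t ht x := (h.hasDerivAt t ht x).mul (h'.hasDerivAt t ht x)
  continuous t ht := (h.continuous t ht).mul (h'.continuous t ht)
  continuous_deriv t ht := ((h.continuous_deriv t ht).mul (h'.continuous t ht)).add
    ((h.continuous t ht).mul (h'.continuous_deriv t ht))
  norm_le t ht x := by
    have hle := norm_mul_le_of_le (h.norm_le t ht x) (h'.norm_le t ht x)
    exact hle.trans (le_add_of_nonneg_right ((norm_nonneg _).trans hle))
  norm_deriv_le t ht x := norm_add_le_of_le
    (norm_mul_le_of_le (h.norm_deriv_le t ht x) (h'.norm_le t ht x))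
    (norm_mul_le_of_le (h.norm_le t ht x) (h'.norm_deriv_le t ht x))

lemma hasDerivAt_fourierCoef (hS : IsOpen S) {t : ℝ} (ht : t ∈ S) (n : ℤ) :
    HasDerivAt (fun t => fourierCoef (F t) n) (fourierCoef (D t) n) t := by
  have hmul : ∀ {f : ℝ → ℂ}, Continuous f → Continuous fun x : ℝ => f x * exp (-I * n * x) :=
    fun hf => hf.mul (by fun_prop)
  refine HasDerivAt.const_mul _
    (intervalIntegral.hasDerivAt_integral_of_dominated_loc_of_deriv_le (μ := volume)
      (F := fun t x => F t x * exp (-I * n * x)) (F' := fun t x => D t x * exp (-I * n * x))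
      (bound := fun _ => B) (hS.mem_nhds ht) ?_ ((hmul (h.continuous t ht)).intervalIntegrable _ _)
      (hmul (h.continuous_deriv t ht)).aestronglyMeasurable (Eventually.of_forall ?_)
      (continuous_const.intervalIntegrable _ _)
      (Eventually.of_forall fun x _ t ht => (h.hasDerivAt t ht x).mul_const _)).2
  · filter_upwards [hS.mem_nhds ht] with t ht
    exact (hmul (h.continuous t ht)).aestronglyMeasurable
  · intro x _ t ht
    rw [norm_mul, norm_exp_neg_I_mul, mul_one]
    exact h.norm_deriv_le t ht x

end IsBoundedDeriv

section Differentiability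

variable (hS : IsOpen S) (hS' : IsPreconnected S)
  (hd : ∀ t ∈ S, ∀ k, HasDerivAt (fun t => a t k) (a' t k) t)
  (ha : ∀ t ∈ S, ∀ k, ‖a t k‖ ≤ C * (bracket k ^ (r + 2))⁻¹)
  (ha' : ∀ t ∈ S, ∀ k, ‖a' t k‖ ≤ C * (bracket k ^ (r + 2))⁻¹)
include hS hS' hd ha ha'

lemma isBoundedDeriv_jet {j : ℕ} (hj : j ≤ r) :
    IsBoundedDeriv S (C * kernelMass) (fun t => jet (a t) j) fun t => jet (a' t) j where
  hasDerivAt t ht x :=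
    hasDerivAt_tsum_of_isPreconnected (u := fun k => C * decayKernel k) (t := S) (y₀ := t)
      (g := fun k t => jetTerm (a t) j x k) (g' := fun k t => jetTerm (a' t) j x k)
      (summable_decayKernel.mul_left C) hS hS'
      (fun k t ht => ((hd t ht k).const_mul ((I * (k : ℂ)) ^ j)).mul_const (exp (I * k * x)))
      (fun k t ht =>
        (norm_jetTerm_le hj (a' t) x k).trans (bracket_pow_mul_norm_le (ha' t ht k)))
      ht ((WeightedSumLE.of_decay (ha t ht)).summable_jetTerm hj x) ht
  continuous t ht := (WeightedSumLE.of_decay (ha t ht)).continuous_jet hj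
  continuous_deriv t ht := (WeightedSumLE.of_decay (ha' t ht)).continuous_jet hj
  norm_le t ht := (WeightedSumLE.of_decay (ha t ht)).norm_jet_le hj
  norm_deriv_le t ht := (WeightedSumLE.of_decay (ha' t ht)).norm_jet_le hj

lemma exists_isBoundedDeriv_evalJet (hQ : Q ∈ orderLE r) :
    ∃ B D, IsBoundedDeriv S B (fun t => evalJet Q (a t)) D := by
  refine orderLE_induction
    (P := fun Q => ∃ B D, IsBoundedDeriv S B (fun t => evalJet Q (a t)) D)
    (fun i hi => ?_) (fun y => ?_) ?_ ?_ hQ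
  · simp only [evalJet_X]
    exact ⟨_, _, isBoundedDeriv_jet hS hS' hd ha ha' hi⟩
  · simp only [evalJet_C]
    exact ⟨_, _, .const S y⟩
  · rintro p q ⟨_, _, hp⟩ ⟨_, _, hq⟩
    simp only [evalJet_add]
    exact ⟨_, _, hp.add hq⟩
  · rintro p q - - ⟨_, _, hp⟩ ⟨_, _, hq⟩
    simp only [evalJet_mul]
    exact ⟨_, _, hp.mul hq⟩

theorem exists_hasDerivAt_fourierCoef_evalJet (hQ : Q ∈ orderLE r) :
    ∃ (β : ℝ → ℤ → ℂ) (B : ℝ), ∀ t ∈ S, ∀ n,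
      HasDerivAt (fun t => fourierCoef (evalJet Q (a t)) n) (β t n) t ∧ ‖β t n‖ ≤ B := by
  obtain ⟨B, D, h⟩ := exists_isBoundedDeriv_evalJet hS hS' hd ha ha' hQ
  exact ⟨fun t => fourierCoef (D t), B, fun t ht n =>
    ⟨h.hasDerivAt_fourierCoef hS ht n, norm_fourierCoef_le (h.norm_deriv_le t ht) n⟩⟩

end Differentiability

end TimeDependence

/-! ### Smoothing of parabolic flows -/

section Regularization

open Filter Topology MvPolynomial MeasureTheory Set

section FrequencyBounds

variable {C : ℝ} {m p q : ℕ} {y : ℤ → ℂ}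

lemma bracket_pow_mul_norm_le_decayKernel_add {k : ℤ} (hk : k ≠ 0) (m : ℕ) (z : ℂ) :
    bracket k ^ m * ‖z‖ ≤ decayKernel k + 4 ^ (m + 1) * (|(k : ℝ)| ^ (m + 1) * ‖z‖) ^ 2 := by
  have hb := bracket_pos k
  have hk1 : (1 : ℝ) ≤ |(k : ℝ)| := by exact_mod_cast Int.one_le_abs hk
  have hpow : bracket k ^ (m + 1) ≤ 2 ^ (m + 1) * |(k : ℝ)| ^ (m + 1) := by
    rw [← mul_pow]
    exact pow_le_pow_left₀ hb.le (by unfold bracket; linarith) _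
  set w := 2 ^ (m + 1) * (|(k : ℝ)| ^ (m + 1) * ‖z‖) with hw
  have hw0 : 0 ≤ w := by positivity
  calc bracket k ^ m * ‖z‖ = (bracket k)⁻¹ * (bracket k ^ (m + 1) * ‖z‖) := by field_simp; ring
    _ ≤ (bracket k)⁻¹ * w := by
        refine mul_le_mul_of_nonneg_left ?_ (inv_pos.2 hb).le
        rw [hw, ← mul_assoc]
        exact mul_le_mul_of_nonneg_right hpow (norm_nonneg _)
    _ ≤ (bracket k)⁻¹ ^ 2 + w ^ 2 := by
        nlinarith [two_mul_le_add_sq (bracket k)⁻¹ w, mul_nonneg (inv_pos.2 hb).le hw0]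
    _ = _ := by rw [decayKernel, inv_pow, hw, mul_pow _ _ 2, pow_right_comm]; norm_num

lemma weightedSumLE_of_sum_frequencies_le
    (h : ∀ K, ∑ k ∈ frequencies K, (|(k : ℝ)| ^ (m + 1) * ‖y k‖) ^ 2 ≤ C) :
    WeightedSumLE m (‖y 0‖ + (kernelMass + 4 ^ (m + 1) * C)) y := by
  intro s
  obtain ⟨K, hK⟩ := exists_erase_zero_subset_frequencies s
  have hnonneg : ∀ k, 0 ≤ bracket k ^ m * ‖y k‖ := fun k =>
    mul_nonneg (pow_nonneg (bracket_pos k).le m) (norm_nonneg _)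
  calc ∑ k ∈ s, bracket k ^ m * ‖y k‖
      ≤ ∑ k ∈ insert 0 (s.erase 0), bracket k ^ m * ‖y k‖ :=
        Finset.sum_le_sum_of_subset_of_nonneg (Finset.insert_erase_subset 0 s)
          fun k _ _ => hnonneg k
    _ = ‖y 0‖ + ∑ k ∈ s.erase 0, bracket k ^ m * ‖y k‖ := by
        rw [Finset.sum_insert (Finset.notMem_erase 0 s)]
        simp [bracket]
    _ ≤ ‖y 0‖ + ∑ k ∈ s.erase 0,
          (decayKernel k + 4 ^ (m + 1) * (|(k : ℝ)| ^ (m + 1) * ‖y k‖) ^ 2) :=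
        add_le_add_right (Finset.sum_le_sum fun k hk =>
          bracket_pow_mul_norm_le_decayKernel_add (Finset.ne_of_mem_erase hk) m (y k)) _
    _ ≤ ‖y 0‖ + (kernelMass + 4 ^ (m + 1) * C) := by
        rw [Finset.sum_add_distrib, ← Finset.mul_sum]
        refine add_le_add_right (add_le_add ?_ (mul_le_mul_of_nonneg_left ?_ (by positivity))) _
        · exact summable_decayKernel.sum_le_tsum _ fun k _ => decayKernel_nonneg k
        · exact (Finset.sum_le_sum_of_subset_of_nonneg hK fun k _ _ => sq_nonneg _).trans (h K)

lemma exists_abs_dispersion_le (γ0 γ1 γ2 : ℝ) :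
    ∃ D, 0 ≤ D ∧ ∀ k : ℤ, |dispersion γ0 γ1 γ2 k| ≤ D * bracket k ^ 5 := by
  refine ⟨|γ0| + |γ1| + |γ2|, by positivity, fun k => ?_⟩
  have hpow : ∀ j ≤ 5, |(k : ℝ)| ^ j ≤ bracket k ^ 5 := fun j hj =>
    (pow_le_pow_left₀ (abs_nonneg _) (abs_le_bracket k) j).trans
      (pow_le_pow_right₀ (one_le_bracket k) hj)
  calc |dispersion γ0 γ1 γ2 k|
      ≤ |γ0 * (k : ℝ) ^ 5| + |γ1 * (k : ℝ) ^ 3| + |γ2 * (k : ℝ)| := by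
        unfold dispersion
        exact (abs_add_le _ _).trans (add_le_add_left (abs_sub _ _) _)
    _ = |γ0| * |(k : ℝ)| ^ 5 + |γ1| * |(k : ℝ)| ^ 3 + |γ2| * |(k : ℝ)| ^ 1 := by
        simp only [abs_mul, abs_pow, pow_one]
    _ ≤ |γ0| * bracket k ^ 5 + |γ1| * bracket k ^ 5 + |γ2| * bracket k ^ 5 := by
        have hmul : ∀ γ : ℝ, ∀ j ≤ 5, |γ| * |(k : ℝ)| ^ j ≤ |γ| * bracket k ^ 5 := fun γ j hj =>
          mul_le_mul_of_nonneg_left (hpow j hj) (abs_nonneg γ)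
        exact add_le_add (add_le_add (hmul γ0 5 le_rfl) (hmul γ1 3 (by norm_num)))
          (hmul γ2 1 (by norm_num))
    _ = (|γ0| + |γ1| + |γ2|) * bracket k ^ 5 := by ring

lemma norm_le_mul_bracket_pow_mono {C' : ℝ} {k : ℤ} {z : ℂ} (hC : C ≤ C')
    (hz : ‖z‖ ≤ C * (bracket k ^ p)⁻¹) : ‖z‖ ≤ C' * (bracket k ^ p)⁻¹ :=
  hz.trans (mul_le_mul_of_nonneg_right hC (inv_nonneg.2 (pow_nonneg (bracket_pos k).le p)))

lemma norm_le_mul_bracket_pow_antitone {k : ℤ} {z : ℂ} (hpq : p ≤ q) (hC : 0 ≤ C)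
    (hz : ‖z‖ ≤ C * (bracket k ^ q)⁻¹) : ‖z‖ ≤ C * (bracket k ^ p)⁻¹ :=
  hz.trans (mul_le_mul_of_nonneg_left (inv_anti₀ (pow_pos (bracket_pos k) p)
    (pow_le_pow_right₀ (one_le_bracket k) hpq)) hC)

lemma norm_le_of_sum_sq_le (hC : 0 ≤ C)
    (h : ∀ s : Finset ℤ, ∑ k ∈ s, (bracket k ^ p * ‖y k‖) ^ 2 ≤ C ^ 2) (k : ℤ) :
    ‖y k‖ ≤ C * (bracket k ^ p)⁻¹ := by
  have hsq : (bracket k ^ p * ‖y k‖) ^ 2 ≤ C ^ 2 := by simpa using h {k}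
  rw [← div_eq_mul_inv, le_div_iff₀ (pow_pos (bracket_pos k) p), mul_comm]
  exact (le_abs_self _).trans (abs_le_of_sq_le_sq hsq hC)

end FrequencyBounds

lemma fourierCoef_subleadingCoeff_zero {N : DiffPoly} {A : ℝ} {a : ℤ → ℂ}
    (ha : WeightedSumLE 4 A a) (hN : N ∈ orderLE 3) (m : ℕ) :
    fourierCoef (evalJet (subleadingCoeff N m) a) 0 = fourierCoef (evalJet (pderiv 2 N) a) 0 := by
  have h2 : pderiv 2 N ∈ orderLE 4 := orderLE_mono (by norm_num) (pderiv_mem_orderLE 2 hN)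
  have h3 : pderiv 3 N ∈ orderLE 3 := pderiv_mem_orderLE 3 hN
  have heval : evalJet (subleadingCoeff N m) a = fun x => evalJet (pderiv 2 N) a x +
      (m : ℂ) * evalJet (totalDeriv (pderiv 3 N)) a x := by
    ext x
    rw [subleadingCoeff, evalJet_add, evalJet_mul, Pi.add_apply, Pi.mul_apply]
    congr 2
    exact map_natCast _ m
  have hcont : Continuous fun x => (m : ℂ) * evalJet (totalDeriv (pderiv 3 N)) a x :=
    continuous_const.mul (ha.continuous_evalJet (totalDeriv_mem_orderLE h3))
  rw [heval, fourierCoef_add (ha.continuous_evalJet h2) hcont, fourierCoef_const_mul,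
    ha.fourierCoef_totalDeriv h3, Int.cast_zero, mul_zero, zero_mul, mul_zero, add_zero]

/-- `a` is the family of Fourier coefficients of a real solution on `[0, T]` of the equation with
nonlinearity `N`, bounded by `C` in `H¹³`, along which the mean of the coefficient of `∂ₓ²u` in the
linearization is at most `-c`. -/
structure ParabolicFlow (γ0 γ1 γ2 : ℝ) (N : DiffPoly) (c C T : ℝ) (a : ℝ → ℤ → ℂ) : Prop where
  continuousOn : ∀ k, ContinuousOn (fun t => a t k) (Icc 0 T)
  hasDerivAt : ∀ t ∈ Ioo 0 T, ∀ k, HasDerivAt (fun t => a t k)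
    (-(I * dispersion γ0 γ1 γ2 k * a t k) + fourierCoef (evalJet N (a t)) k) t
  conj_eq : ∀ t ∈ Icc 0 T, ∀ k, a t (-k) = conj (a t k)
  const_nonneg : 0 ≤ C
  sum_sq_le : ∀ t ∈ Icc 0 T, ∀ s : Finset ℤ, ∑ k ∈ s, (bracket k ^ 13 * ‖a t k‖) ^ 2 ≤ C ^ 2
  re_mean_le : ∀ t ∈ Icc 0 T, (fourierCoef (evalJet (pderiv 2 N) (a t)) 0).re ≤ -c

namespace ParabolicFlow

variable {γ0 γ1 γ2 c C C₁ T t : ℝ} {N Q : DiffPoly} {a : ℝ → ℤ → ℂ} {m : ℕ}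

lemma mono (h : ParabolicFlow γ0 γ1 γ2 N c C T a) {T' : ℝ} (hT : T' ≤ T) :
    ParabolicFlow γ0 γ1 γ2 N c C T' a where
  continuousOn k := (h.continuousOn k).mono (Icc_subset_Icc_right hT)
  hasDerivAt t ht := h.hasDerivAt t (Ioo_subset_Ioo_right hT ht)
  conj_eq t ht := h.conj_eq t (Icc_subset_Icc_right hT ht)
  const_nonneg := h.const_nonneg
  sum_sq_le t ht := h.sum_sq_le t (Icc_subset_Icc_right hT ht)
  re_mean_le t ht := h.re_mean_le t (Icc_subset_Icc_right hT ht)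

variable (h : ParabolicFlow γ0 γ1 γ2 N c C T a)
include h

lemma norm_le (ht : t ∈ Icc 0 T) (k : ℤ) : ‖a t k‖ ≤ C * (bracket k ^ 13)⁻¹ :=
  norm_le_of_sum_sq_le h.const_nonneg (h.sum_sq_le t ht) k

lemma weightedSumLE (ht : t ∈ Icc 0 T) : WeightedSumLE 11 (C * kernelMass) (a t) :=
  .of_decay (h.norm_le ht)

lemma exists_norm_deriv_le (hN : N ∈ orderLE 3) : ∃ C', 0 ≤ C' ∧ ∀ t ∈ Icc 0 T, ∀ k,
    ‖-(I * dispersion γ0 γ1 γ2 k * a t k) + fourierCoef (evalJet N (a t)) k‖ ≤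
      C' * (bracket k ^ 8)⁻¹ := by
  have hC := h.const_nonneg
  obtain ⟨D, hD0, hD⟩ := exists_abs_dispersion_le γ0 γ1 γ2
  obtain ⟨B, hB0, hB⟩ := exists_norm_fourierCoef_evalJet_le hN 8 (C * kernelMass)
  refine ⟨D * C + B, by positivity, fun t ht k => ?_⟩
  have hb := bracket_pos k
  have hlinear : ‖-(I * dispersion γ0 γ1 γ2 k * a t k)‖ ≤ D * C * (bracket k ^ 8)⁻¹ := by
    rw [norm_neg, norm_mul, norm_mul, norm_I, one_mul, norm_real, Real.norm_eq_abs]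
    calc |dispersion γ0 γ1 γ2 k| * ‖a t k‖ ≤ (D * bracket k ^ 5) * (C * (bracket k ^ 13)⁻¹) :=
          mul_le_mul (hD k) (h.norm_le ht k) (norm_nonneg _) (by positivity)
      _ = D * C * (bracket k ^ 8)⁻¹ := by field_simp
  rw [add_mul]
  exact (norm_add_le _ _).trans (add_le_add hlinear (hB _ (h.weightedSumLE ht) k))

lemma exists_norm_coef_le (hQ : Q ∈ orderLE 4) : ∃ B, ∀ t ∈ Icc 0 T, ∀ n,
    ‖fourierCoef (evalJet Q (a t)) n‖ ≤ B * (bracket n ^ 5)⁻¹ := by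
  obtain ⟨B, -, hB⟩ := exists_norm_fourierCoef_evalJet_le hQ 5 (C * kernelMass)
  exact ⟨B, fun t ht => hB _ ((h.weightedSumLE ht).mono (by norm_num))⟩

lemma exists_hasDerivAt_coef (hN : N ∈ orderLE 3) (hQ : Q ∈ orderLE 4) :
    ∃ (β : ℝ → ℤ → ℂ) (B : ℝ), ∀ t ∈ Ioo 0 T, ∀ n,
      HasDerivAt (fun t => fourierCoef (evalJet Q (a t)) n) (β t n) t ∧ ‖β t n‖ ≤ B := by
  obtain ⟨C', hC'0, hC'⟩ := h.exists_norm_deriv_le hN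
  refine exists_hasDerivAt_fourierCoef_evalJet (r := 4) (C := max C C') isOpen_Ioo
    isPreconnected_Ioo h.hasDerivAt (fun t ht k => ?_) (fun t ht k => ?_) hQ
  · exact norm_le_mul_bracket_pow_mono (le_max_left _ _) (norm_le_mul_bracket_pow_antitone
      (by norm_num) h.const_nonneg (h.norm_le (Ioo_subset_Icc_self ht) k))
  · exact norm_le_mul_bracket_pow_mono (le_max_right _ _) (norm_le_mul_bracket_pow_antitone
      (by norm_num) hC'0 (hC' t (Ioo_subset_Icc_self ht) k))

lemma continuousOn_coef (hQ : Q ∈ orderLE 4) (n : ℤ) :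
    ContinuousOn (fun t => fourierCoef (evalJet Q (a t)) n) (Icc 0 T) :=
  continuousOn_fourierCoef_evalJet (r := 11) h.continuousOn (fun _ ht => h.norm_le ht)
    (orderLE_mono (by norm_num) hQ) n

section Smoothing

variable (hN : N ∈ orderLE 3) (hm : 9 ≤ m)
  (hlow : ∀ t ∈ Icc 0 T, ∀ K, ∑ k ∈ frequencies K, (|(k : ℝ)| ^ (m - 1) * ‖a t k‖) ^ 2 ≤ C₁)
include hN hm hlow

lemma exists_norm_sub_leadingPart_le : ∃ (e : ℝ → ℤ → ℝ) (B : ℝ), ∀ t ∈ Icc 0 T,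
    (∀ k, 0 ≤ e t k) ∧ (∀ s : Finset ℤ, ∑ k ∈ s, e t k ^ 2 ≤ B) ∧
    ((Summable fun l : ℤ => ‖(I * l) ^ m * a t l‖ ^ 2) → ∀ k : ℤ, k ≠ 0 →
      ‖(I * k) ^ m * fourierCoef (evalJet N (a t)) k - leadingPart N m (a t) k‖ ≤
        B * |(k : ℝ)| * kernelConv (fun l => ‖(I * l) ^ m * a t l‖) k + e t k) := by
  set A := C + (kernelMass + 4 ^ (m - 2 + 1) * C₁)
  have hA : ∀ t ∈ Icc 0 T, WeightedSumLE (m - 2) A (a t) := fun t ht s => by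
    have hzero : ‖a t 0‖ ≤ C := by simpa [bracket] using h.norm_le ht 0
    have hsum := weightedSumLE_of_sum_frequencies_le (m := m - 2) (y := a t) (C := C₁)
      (by rw [show m - 2 + 1 = m - 1 by omega]; exact hlow t ht) s
    exact hsum.trans (add_le_add_left hzero _)
  obtain ⟨E, hE, R, -, hR⟩ := FifthOrderStmt4.exists_norm_sub_leadingPart_le hN hm (C * kernelMass)
  obtain ⟨B, hB⟩ := exists_norm_evalJet_le hE A
  refine ⟨fun t k => ‖fourierCoef (evalJet E (a t)) k‖, max R (B ^ 2), fun t ht =>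
    ⟨fun k => norm_nonneg _, fun s => ?_, fun hs k hk => ?_⟩⟩
  · exact (sum_norm_fourierCoef_sq_le ((hA t ht).continuous_evalJet hE) (hB _ (hA t ht)) s).trans
      (le_max_right _ _)
  · refine (hR (a t) A ((h.weightedSumLE ht).mono (by norm_num)) (hA t ht) hs k hk).trans
      (add_le_add_left ?_ _)
    exact mul_le_mul_of_nonneg_right (mul_le_mul_of_nonneg_right (le_max_left _ _) (abs_nonneg _))
      (kernelConv_nonneg (fun _ => norm_nonneg _) k)

lemma exists_linearizedFlow : ∃ C₀ β₀ β₁ e, LinearizedFlow γ0 γ1 γ2 C₀ c T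
    (fun t => fourierCoef (evalJet (pderiv 3 N) (a t)))
    (fun t => fourierCoef (evalJet (subleadingCoeff N m) (a t))) β₀ β₁
    (fun t k => (I * k) ^ m * a t k) (fun t k => (I * k) ^ m * fourierCoef (evalJet N (a t)) k)
    e := by
  have hQ₀ : pderiv 3 N ∈ orderLE 4 := orderLE_mono (by norm_num) (pderiv_mem_orderLE 3 hN)
  have hQ₁ := subleadingCoeff_mem_orderLE hN m
  obtain ⟨D₀, hD₀⟩ := h.exists_norm_coef_le hQ₀
  obtain ⟨D₁, hD₁⟩ := h.exists_norm_coef_le hQ₁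
  obtain ⟨β₀, B₀, hβ₀⟩ := h.exists_hasDerivAt_coef hN hQ₀
  obtain ⟨β₁, B₁, hβ₁⟩ := h.exists_hasDerivAt_coef hN hQ₁
  obtain ⟨e, R, he⟩ := h.exists_norm_sub_leadingPart_le hN hm hlow
  obtain ⟨C₀, hC₀⟩ := Finset.exists_le {D₀, D₁, B₀, B₁, R}
  simp only [Finset.mem_insert, Finset.mem_singleton, forall_eq_or_imp, forall_eq] at hC₀
  obtain ⟨hD₀C, hD₁C, hB₀C, hB₁C, hRC⟩ := hC₀
  have hα₀ : ∀ t ∈ Icc 0 T, ∀ n, _ := fun t ht n => norm_le_mul_bracket_pow_mono hD₀C (hD₀ t ht n)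
  have hα₁ : ∀ t ∈ Icc 0 T, ∀ n, _ := fun t ht n => norm_le_mul_bracket_pow_mono hD₁C (hD₁ t ht n)
  have hW_zero : ∀ t, (I * ((0 : ℤ) : ℂ)) ^ m * a t 0 = 0 := fun t => by
    rw [Int.cast_zero, mul_zero, zero_pow (by omega), zero_mul]
  refine ⟨C₀, β₀, β₁, e, h.continuousOn_coef hQ₀, h.continuousOn_coef hQ₁,
    fun k => continuousOn_const.mul (h.continuousOn k), fun t ht n => (hβ₀ t ht n).1,
    fun t ht n => (hβ₁ t ht n).1, fun t ht k => ?_, hα₀, hα₁, hW_zero, fun t ht hs => ?_⟩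
  · refine ((h.hasDerivAt t ht k).const_mul _).congr_deriv ?_
    ring
  · have ht' := Ioo_subset_Icc_self ht
    obtain ⟨he0, hesq, hrem⟩ := he t ht'
    refine ⟨hα₀ t ht', hα₁ t ht', fourierCoef_neg (conj_evalJet (h.conj_eq t ht') _), ?_,
      fun n => (hβ₀ t ht n).2.trans hB₀C, fun n => (hβ₁ t ht n).2.trans hB₁C, hW_zero t, hs,
      fun k hk => (hrem hs k hk).trans (add_le_add_left ?_ _), he0, fun s => (hesq s).trans hRC⟩
    · rw [fourierCoef_subleadingCoeff_zero ((h.weightedSumLE ht').mono (by norm_num)) hN]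
      exact h.re_mean_le t ht'
    · exact mul_le_mul_of_nonneg_right (mul_le_mul_of_nonneg_right hRC (abs_nonneg _))
        (kernelConv_nonneg (fun _ => norm_nonneg _) k)

theorem exists_smoothing (hγ : γ0 ≠ 0) (hc : 0 < c) (hT : 0 < T)
    (hint : ∀ K, ∫ t in (0)..T, ∑ k ∈ frequencies K, (|(k : ℝ)| ^ m * ‖a t k‖) ^ 2 ≤ C₁) :
    ∃ T' ∈ Ioo 0 T, ∃ C₂,
      (∀ t ∈ Icc 0 T', ∀ K, ∑ k ∈ frequencies K, (|(k : ℝ)| ^ m * ‖a t k‖) ^ 2 ≤ C₂) ∧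
      ∀ K, ∫ t in (0)..T', ∑ k ∈ frequencies K, (|(k : ℝ)| ^ (m + 1) * ‖a t k‖) ^ 2 ≤ C₂ := by
  obtain ⟨C₀, β₀, β₁, e, hflow⟩ := h.exists_linearizedFlow hN hm hlow
  have hlow' : ∀ t ∈ Icc 0 T, ∀ K,
      ∑ k ∈ frequencies K, (‖(I * k) ^ m * a t k‖ * |(k : ℝ)|⁻¹) ^ 2 ≤ C₁ := fun t ht K => by
    refine (Finset.sum_congr rfl fun k hk => ?_).trans_le (hlow t ht K)
    have hk0 : |(k : ℝ)| ≠ 0 := abs_ne_zero.2 (Int.cast_ne_zero.2 (mem_frequencies.1 hk).1)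
    rw [norm_I_mul_pow_mul, pow_sub₀ _ hk0 (by omega), pow_one, mul_right_comm]
  obtain ⟨T', hT', C₂, hpointwise, hintegral⟩ := hflow.exists_smoothing hγ hc hT hlow'
    (by simpa only [norm_I_mul_pow_mul] using hint)
  simp only [norm_I_mul_pow_mul, ← mul_assoc, ← pow_succ'] at hpointwise hintegral
  exact ⟨T', hT', C₂, hpointwise, hintegral⟩

end Smoothing

lemma sum_abs_pow_mul_norm_sq_le {j : ℕ} (hj : j ≤ 13) (ht : t ∈ Icc 0 T) (s : Finset ℤ) :
    ∑ k ∈ s, (|(k : ℝ)| ^ j * ‖a t k‖) ^ 2 ≤ C ^ 2 := by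
  refine (Finset.sum_le_sum fun k _ => ?_).trans (h.sum_sq_le t ht s)
  have hpow : |(k : ℝ)| ^ j ≤ bracket k ^ 13 :=
    (pow_le_pow_left₀ (abs_nonneg _) (abs_le_bracket k) j).trans
      (pow_le_pow_right₀ (one_le_bracket k) hj)
  gcongr

lemma integral_sum_sq_le (hT : 0 ≤ T) (s : Finset ℤ) :
    ∫ t in (0)..T, ∑ k ∈ s, (|(k : ℝ)| ^ 13 * ‖a t k‖) ^ 2 ≤ T * C ^ 2 := by
  have hcont : ContinuousOn (fun t => ∑ k ∈ s, (|(k : ℝ)| ^ 13 * ‖a t k‖) ^ 2) (Icc 0 T) :=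
    continuousOn_finsetSum _ fun k _ => (continuousOn_const.mul (h.continuousOn k).norm).pow 2
  calc ∫ t in (0)..T, ∑ k ∈ s, (|(k : ℝ)| ^ 13 * ‖a t k‖) ^ 2 ≤ ∫ _ in (0)..T, C ^ 2 :=
        intervalIntegral.integral_mono_on hT (hcont.intervalIntegrable_of_Icc hT)
          intervalIntegrable_const fun t ht => h.sum_abs_pow_mul_norm_sq_le le_rfl ht s
    _ = T * C ^ 2 := by rw [intervalIntegral.integral_const, sub_zero, smul_eq_mul]

theorem exists_sum_sq_le (hN : N ∈ orderLE 3) (hγ : γ0 ≠ 0) (hc : 0 < c) (hT : 0 < T) (n : ℕ) :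
    ∃ T' ∈ Ioc 0 T, ∃ C₁,
      (∀ t ∈ Icc 0 T', ∀ K, ∑ k ∈ frequencies K, (|(k : ℝ)| ^ (n + 12) * ‖a t k‖) ^ 2 ≤ C₁) ∧
      ∀ K, ∫ t in (0)..T', ∑ k ∈ frequencies K, (|(k : ℝ)| ^ (n + 13) * ‖a t k‖) ^ 2 ≤ C₁ := by
  induction n with
  | zero =>
    simp only [zero_add]
    exact ⟨T, ⟨hT, le_rfl⟩, max (C ^ 2) (T * C ^ 2),
      fun t ht K => (h.sum_abs_pow_mul_norm_sq_le (by norm_num) ht _).trans (le_max_left _ _),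
      fun K => (h.integral_sum_sq_le hT.le _).trans (le_max_right _ _)⟩
  | succ n ih =>
    obtain ⟨T₁, hT₁, C₁, hlow, hint⟩ := ih
    obtain ⟨T', hT', C₂, hpointwise, hintegral⟩ := (h.mono hT₁.2).exists_smoothing (m := n + 13)
      hN (by omega) hlow hγ hc hT₁.1 hint
    rw [show n + 1 + 12 = n + 13 by omega, show n + 1 + 13 = n + 13 + 1 by omega]
    exact ⟨T', ⟨hT'.1, hT'.2.le.trans hT₁.2⟩, C₂, hpointwise, hintegral⟩

theorem exists_weightedSumLE_initial (hN : N ∈ orderLE 3) (hγ : γ0 ≠ 0) (hc : 0 < c) (hT : 0 < T)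
    (m : ℕ) : ∃ A, WeightedSumLE m A (a 0) := by
  obtain ⟨T', hT', C₁, hpointwise, -⟩ := h.exists_sum_sq_le hN hγ hc hT m
  exact ⟨_, (weightedSumLE_of_sum_frequencies_le (m := m + 11)
    (hpointwise 0 (left_mem_Icc.2 hT'.1.le))).mono (by omega)⟩

end ParabolicFlow

end Regularization

section Nonlinearity

open MvPolynomial

variable {f : ℝ → ℝ} {y : ℤ → ℂ} {r : ℕ} {A : ℝ}

namespace WeightedSumLE

lemma ofReal_iteratedDeriv (h : WeightedSumLE r A y) (hf : ∀ x, (f x : ℂ) = jet y 0 x) {j : ℕ}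
    (hj : j ≤ r) (x : ℝ) : ((iteratedDeriv j f x : ℝ) : ℂ) = jet y j x := by
  induction j generalizing x with
  | zero => rw [iteratedDeriv_zero, hf]
  | succ j ih =>
    have hjet : HasDerivAt (fun x => ((iteratedDeriv j f x : ℝ) : ℂ)) (jet y (j + 1) x) x := by
      rw [show (fun x => ((iteratedDeriv j f x : ℝ) : ℂ)) = jet y j from funext (ih (by omega))]
      exact h.hasDerivAt_jet hj x
    have hre : HasDerivAt (iteratedDeriv j f) (jet y (j + 1) x).re x :=
      reCLM.hasFDerivAt.comp_hasDerivAt x hjet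
    rw [iteratedDeriv_succ, hre.deriv]
    exact hre.ofReal_comp.unique hjet

lemma contDiff (h : ∀ m, ∃ A, WeightedSumLE m A y) (hf : ∀ x, (f x : ℂ) = jet y 0 x) :
    ContDiff ℝ (⊤ : ℕ∞) f := by
  refine contDiff_of_differentiable_iteratedDeriv fun j _ => ?_
  obtain ⟨A, hA⟩ := h (j + 1)
  have hre : iteratedDeriv j f = fun x => reCLM (jet y j x) := by
    ext x
    rw [← hA.ofReal_iteratedDeriv hf (by omega) x, reCLM_apply, ofReal_re]
  rw [hre]
  exact reCLM.differentiable.comp fun x => (hA.hasDerivAt_jet le_rfl x).differentiableAt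

end WeightedSumLE

/-- The monomial `(∂ₓ³u)^a (∂ₓ²u)^b (∂ₓu)^c u^d`. -/
noncomputable def jetMonomial (a b c d : ℕ) : DiffPoly := X 3 ^ a * X 2 ^ b * X 1 ^ c * X 0 ^ d

/-- The nonlinearity `Nfun` as a differential polynomial. -/
noncomputable def nonlinearityPoly {j0 : ℕ} (lam : Fin j0 → ℝ) (a b c d : Fin j0 → ℕ) : DiffPoly :=
  ∑ j, C (lam j) * jetMonomial (a j) (b j) (c j) (d j)

lemma jetMonomial_mem_orderLE (a b c d : ℕ) : jetMonomial a b c d ∈ orderLE 3 :=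
  mul_mem (mul_mem (mul_mem (pow_mem (X_mem_orderLE (by norm_num)) a)
    (pow_mem (X_mem_orderLE (by norm_num)) b)) (pow_mem (X_mem_orderLE (by norm_num)) c))
    (pow_mem (X_mem_orderLE (by norm_num)) d)

lemma pderiv_two_jetMonomial (a b c d : ℕ) :
    pderiv 2 (jetMonomial a b c d) = C (b : ℝ) * jetMonomial a (b - 1) c d := by
  simp only [jetMonomial, Derivation.leibniz, Derivation.leibniz_pow, pderiv_X_self,
    pderiv_X_of_ne (show (3 : ℕ) ≠ 2 by norm_num), pderiv_X_of_ne (show (1 : ℕ) ≠ 2 by norm_num),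
    pderiv_X_of_ne (show (0 : ℕ) ≠ 2 by norm_num), smul_eq_mul, nsmul_eq_mul, map_natCast]
  ring

lemma WeightedSumLE.evalJet_jetMonomial (h : WeightedSumLE 3 A y)
    (hf : ∀ x, (f x : ℂ) = jet y 0 x) (a b c d : ℕ) (x : ℝ) :
    evalJet (jetMonomial a b c d) y x =
      ((iteratedDeriv 3 f x ^ a * iteratedDeriv 2 f x ^ b * deriv f x ^ c * f x ^ d : ℝ) : ℂ) := by
  push_cast
  rw [h.ofReal_iteratedDeriv hf le_rfl, h.ofReal_iteratedDeriv hf (by omega), ← iteratedDeriv_one,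
    h.ofReal_iteratedDeriv hf (by omega), hf, jetMonomial, evalJet]
  simp only [map_mul, map_pow, aeval_X]

variable {j0 : ℕ} (lam : Fin j0 → ℝ) (a b c d : Fin j0 → ℕ)

lemma nonlinearityPoly_mem_orderLE : nonlinearityPoly lam a b c d ∈ orderLE 3 :=
  sum_mem fun j _ =>
    mul_mem (algebraMap_mem (orderLE 3) (lam j)) (jetMonomial_mem_orderLE _ _ _ _)

lemma pderiv_two_nonlinearityPoly : pderiv 2 (nonlinearityPoly lam a b c d) =
    ∑ j, C (lam j * b j) * jetMonomial (a j) (b j - 1) (c j) (d j) := by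
  rw [nonlinearityPoly, map_sum]
  refine Finset.sum_congr rfl fun j _ => ?_
  rw [pderiv_C_mul, pderiv_two_jetMonomial, C_mul, mul_assoc]

lemma WeightedSumLE.evalJet_nonlinearityPoly (h : WeightedSumLE 3 A y)
    (hf : ∀ x, (f x : ℂ) = jet y 0 x) (x : ℝ) :
    evalJet (nonlinearityPoly lam a b c d) y x = Nfun j0 lam a b c d f x := by
  rw [nonlinearityPoly, evalJet_sum, Nfun, ofReal_sum]
  refine Finset.sum_congr rfl fun j _ => ?_
  rw [evalJet_mul, Pi.mul_apply, evalJet_C, h.evalJet_jetMonomial hf, ← ofReal_mul]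
  congr 1
  ring

lemma WeightedSumLE.fourierCoef_pderiv_two_nonlinearityPoly (h : WeightedSumLE 3 A y)
    (hf : ∀ x, (f x : ℂ) = jet y 0 x) :
    fourierCoef (evalJet (pderiv 2 (nonlinearityPoly lam a b c d)) y) 0 =
      PN j0 lam a b c d f := by
  have heval : evalJet (pderiv 2 (nonlinearityPoly lam a b c d)) y = fun x =>
      ∑ j, ((lam j * b j : ℝ) : ℂ) * evalJet (jetMonomial (a j) (b j - 1) (c j) (d j)) y x := by
    ext x
    rw [pderiv_two_nonlinearityPoly, evalJet_sum]
    exact Finset.sum_congr rfl fun j _ => by rw [evalJet_mul, Pi.mul_apply, evalJet_C]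
  rw [heval, fourierCoef_sum (F := fun j x => ((lam j * b j : ℝ) : ℂ) *
      evalJet (jetMonomial (a j) (b j - 1) (c j) (d j)) y x) _ fun j _ =>
    continuous_const.mul (h.continuous_evalJet (jetMonomial_mem_orderLE _ _ _ _)), PN, ofReal_sum]
  refine Finset.sum_congr rfl fun j _ => ?_
  rw [fourierCoef_const_mul, fourierCoef, ofReal_mul (lam j * b j / (2 * Real.pi)),
    ← intervalIntegral.integral_ofReal, ofReal_div, div_eq_mul_inv, mul_assoc]
  congr 2
  refine intervalIntegral.integral_congr fun x _ => ?_
  simp only [Int.cast_zero, mul_zero, zero_mul, exp_zero, mul_one]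
  exact h.evalJet_jetMonomial hf _ _ _ _ x

end Nonlinearity

/-! ### Weak solutions -/

section WeakDerivative

open MeasureTheory Set

variable {E : Type*} [NormedAddCommGroup E] [NormedSpace ℝ E] {a b : ℝ}

/-- Smooth functions on `ℝ` that vanish off the open interval `(a, b)`. The support may reach the
endpoints: this is the class of time profiles for which `IsSolution` allows test functions. -/
def IsTestFunction (a b : ℝ) (η : ℝ → ℝ) : Prop :=
  ContDiff ℝ (⊤ : ℕ∞) η ∧ ∀ t ∉ Ioo a b, η t = 0

lemma exists_isTestFunction_integral_eq_one (hab : a < b) :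
    ∃ χ, IsTestFunction a b χ ∧ ∫ t in a..b, χ t = 1 := by
  let χ : ContDiffBump ((a + b) / 2) :=
    ⟨(b - a) / 8, (b - a) / 4, by linarith, by linarith⟩
  have hsupp : ∀ t ∉ Ioo a b, χ.normed volume t = 0 := by
    intro t ht
    by_contra hne
    have hball : t ∈ Function.support (χ.normed volume) := hne
    rw [χ.support_normed_eq, Metric.mem_ball, Real.dist_eq, abs_lt] at hball
    have hrOut : χ.rOut = (b - a) / 4 := rfl
    exact ht ⟨by linarith, by linarith⟩
  refine ⟨χ.normed volume, ⟨χ.contDiff_normed, hsupp⟩, ?_⟩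
  rw [intervalIntegral.integral_of_le hab.le, setIntegral_eq_integral_of_forall_compl_eq_zero,
    χ.integral_normed]
  exact fun t ht => hsupp t fun h => ht ⟨h.1, h.2.le⟩

lemma contDiff_primitive {f : ℝ → ℝ} (hf : ContDiff ℝ (⊤ : ℕ∞) f) (a : ℝ) :
    ContDiff ℝ (⊤ : ℕ∞) fun t => ∫ s in a..t, f s := by
  have hderiv : ∀ t, HasDerivAt (fun t => ∫ s in a..t, f s) (f t) t := fun t =>
    (hf.continuous.integral_hasStrictDerivAt a t).hasDerivAt
  rw [contDiff_infty_iff_deriv]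
  refine ⟨fun t => (hderiv t).differentiableAt, ?_⟩
  rwa [show deriv (fun t => ∫ s in a..t, f s) = f from funext fun t => (hderiv t).deriv]

namespace IsTestFunction

variable {η χ : ℝ → ℝ}

lemma continuous (hη : IsTestFunction a b η) : Continuous η := hη.1.continuous

lemma continuous_deriv (hη : IsTestFunction a b η) : Continuous (deriv η) :=
  hη.1.continuous_deriv (by simp)

lemma hasDerivAt (hη : IsTestFunction a b η) (t : ℝ) : HasDerivAt η (deriv η t) t :=
  (hη.1.differentiable (by simp)).differentiableAt.hasDerivAt

lemma sub_const_mul (hη : IsTestFunction a b η) (hχ : IsTestFunction a b χ) (m : ℝ) :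
    IsTestFunction a b fun t => η t - m * χ t :=
  ⟨hη.1.sub (contDiff_const.mul hχ.1), fun t ht => by simp [hη.2 t ht, hχ.2 t ht]⟩

lemma intervalIntegral_smul (hη : IsTestFunction a b η) (hab : a ≤ b) (f : ℝ → E) :
    ∫ t in a..b, η t • f t = ∫ t, η t • f t := by
  rw [intervalIntegral.integral_of_le hab, setIntegral_eq_integral_of_forall_compl_eq_zero]
  exact fun t ht => by rw [hη.2 t fun h => ht ⟨h.1, h.2.le⟩, zero_smul]

lemma primitive (hη : IsTestFunction a b η) (hη0 : ∫ t in a..b, η t = 0) :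
    IsTestFunction a b fun t => ∫ s in a..t, η s := by
  refine ⟨contDiff_primitive hη.1 a, fun t ht => ?_⟩
  rcases le_or_gt t a with hta | hat
  · refine intervalIntegral.integral_zero_ae (Filter.Eventually.of_forall fun s hs => hη.2 s ?_)
    rw [uIoc_of_ge hta] at hs
    exact fun h => h.1.not_ge hs.2
  · have hbt : b ≤ t := not_lt.1 fun h => ht ⟨hat, h⟩
    have hint : ∀ x y, IntervalIntegrable η volume x y := hη.continuous.intervalIntegrable
    beta_reduce
    rw [← intervalIntegral.integral_add_adjacent_intervals (hint a b) (hint b t), hη0, zero_add]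
    refine intervalIntegral.integral_zero_ae (Filter.Eventually.of_forall fun s hs => hη.2 s ?_)
    rw [uIoc_of_le hbt] at hs
    exact fun h => h.2.not_gt hs.1

/-- `η - (∫ η) χ` has mean zero, hence is the derivative of a test function. -/
lemma integral_smul_eq_smul_integral (hη : IsTestFunction a b η) (hχ : IsTestFunction a b χ)
    (hχ1 : ∫ t in a..b, χ t = 1) {f : ℝ → E} (hf : Continuous f)
    (h : ∀ ζ, IsTestFunction a b ζ → ∫ t in a..b, deriv ζ t • f t = 0) :
    ∫ t in a..b, η t • f t = (∫ t in a..b, η t) • ∫ t in a..b, χ t • f t := by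
  set m := ∫ t in a..b, η t
  have hζ := hη.sub_const_mul hχ m
  have hζ0 : ∫ t in a..b, (η t - m * χ t) = 0 := by
    rw [intervalIntegral.integral_sub (hη.continuous.intervalIntegrable a b)
      ((hχ.continuous.const_mul m).intervalIntegrable a b), intervalIntegral.integral_const_mul,
      hχ1, mul_one, sub_self]
  have hderiv : ∀ t, deriv (fun t => ∫ s in a..t, (η s - m * χ s)) t = η t - m * χ t := fun t =>
    (hζ.continuous.integral_hasStrictDerivAt a t).hasDerivAt.deriv
  have hzero := h _ (hζ.primitive hζ0)
  simp only [hderiv, sub_smul, mul_smul] at hzero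
  have hηf : Continuous fun t => η t • f t := hη.continuous.smul hf
  have hχf : Continuous fun t => m • χ t • f t := (hχ.continuous.smul hf).const_smul m
  rw [intervalIntegral.integral_sub (hηf.intervalIntegrable a b) (hχf.intervalIntegrable a b),
    intervalIntegral.integral_smul] at hzero
  exact sub_eq_zero.1 hzero

end IsTestFunction

variable [CompleteSpace E] {f g : ℝ → E}

/-- The du Bois-Reymond lemma. -/
theorem exists_eqOn_const_of_integral_deriv_smul_eq_zero (hab : a < b) (hf : Continuous f)
    (h : ∀ η, IsTestFunction a b η → ∫ t in a..b, deriv η t • f t = 0) :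
    ∃ z, EqOn f (fun _ => z) (Ioo a b) := by
  obtain ⟨χ, hχ, hχ1⟩ := exists_isTestFunction_integral_eq_one hab
  set z := ∫ t in a..b, χ t • f t
  have hfz : Continuous fun t => f t - z := hf.sub continuous_const
  have hae : ∀ᵐ t : ℝ, t ∈ Ioo a b → f t - z = 0 := by
    refine isOpen_Ioo.ae_eq_zero_of_integral_contDiff_smul_eq_zero
      (hfz.locallyIntegrable.locallyIntegrableOn _) fun g hg _ hsupp => ?_
    have hη : IsTestFunction a b g :=
      ⟨hg, fun t ht => image_eq_zero_of_notMem_tsupport fun h => ht (hsupp h)⟩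
    have hgf : Continuous fun t => g t • f t := hη.continuous.smul hf
    have hgz : Continuous fun t => g t • z := hη.continuous.smul continuous_const
    rw [← hη.intervalIntegral_smul hab.le]
    simp only [smul_sub]
    rw [intervalIntegral.integral_sub (hgf.intervalIntegrable a b) (hgz.intervalIntegrable a b),
      intervalIntegral.integral_smul_const, hη.integral_smul_eq_smul_integral hχ hχ1 hf h, sub_self]
  have heq : (fun t => f t - z) =ᵐ[volume.restrict (Ioo a b)] fun _ => 0 :=
    (ae_restrict_iff' measurableSet_Ioo).2 hae
  have heqOn := Measure.eqOn_open_of_ae_eq heq isOpen_Ioo hfz.continuousOn continuousOn_const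
  exact ⟨z, fun t ht => sub_eq_zero.1 (heqOn ht)⟩

lemma hasDerivAt_of_integral_deriv_smul_of_continuous (hab : a < b) (hf : Continuous f)
    (hg : Continuous g)
    (h : ∀ η, IsTestFunction a b η → ∫ t in a..b, (deriv η t • f t + η t • g t) = 0) :
    ∀ t ∈ Ioo a b, HasDerivAt f (g t) t := by
  set G : ℝ → E := fun t => ∫ s in a..t, g s
  have hG : ∀ t, HasDerivAt G (g t) t := fun t => (hg.integral_hasStrictDerivAt a t).hasDerivAt
  have hGcont : Continuous G := continuous_iff_continuousAt.2 fun t => (hG t).continuousAt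
  obtain ⟨z, hz⟩ := exists_eqOn_const_of_integral_deriv_smul_eq_zero hab (hf.sub hGcont)
    fun η hη => by
      have hηf : Continuous fun t => deriv η t • f t := hη.continuous_deriv.smul hf
      have hηg : Continuous fun t => η t • g t := hη.continuous.smul hg
      have hηG : Continuous fun t => deriv η t • G t := hη.continuous_deriv.smul hGcont
      have hparts : ∫ t in a..b, η t • g t = -∫ t in a..b, deriv η t • G t := by
        simpa [hη.2 a (by simp), hη.2 b (by simp)] using
          intervalIntegral.integral_smul_deriv_eq_deriv_smul_of_hasDerivAt
            (fun t _ => hη.continuous.continuousAt.continuousWithinAt) hGcont.continuousOn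
            (fun t _ => hη.hasDerivAt t) (fun t _ => hG t)
            (hη.continuous_deriv.intervalIntegrable a b) (hg.intervalIntegrable a b)
      have hweak := h η hη
      rw [intervalIntegral.integral_add (hηf.intervalIntegrable a b)
        (hηg.intervalIntegrable a b), hparts] at hweak
      simp only [Pi.sub_apply, smul_sub]
      rwa [intervalIntegral.integral_sub (hηf.intervalIntegrable a b)
        (hηG.intervalIntegrable a b), sub_eq_add_neg]
  intro t ht
  refine ((hG t).const_add z).congr_of_eventuallyEq ?_
  filter_upwards [isOpen_Ioo.mem_nhds ht] with s hs
  exact sub_eq_iff_eq_add.1 (hz hs)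

lemma hasDerivAt_of_integral_deriv_smul (hab : a < b) (hf : ContinuousOn f (Icc a b))
    (hg : ContinuousOn g (Icc a b))
    (h : ∀ η, IsTestFunction a b η → ∫ t in a..b, (deriv η t • f t + η t • g t) = 0) :
    ∀ t ∈ Ioo a b, HasDerivAt f (g t) t := by
  set F := IccExtend hab.le (domRestrict (Icc a b) f)
  set G := IccExtend hab.le (domRestrict (Icc a b) g)
  have hF : ∀ t ∈ Icc a b, F t = f t := fun t ht => IccExtend_of_mem hab.le _ ht
  have hG : ∀ t ∈ Icc a b, G t = g t := fun t ht => IccExtend_of_mem hab.le _ ht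
  have hweak : ∀ η, IsTestFunction a b η →
      ∫ t in a..b, (deriv η t • F t + η t • G t) = 0 := fun η hη => by
    rw [← h η hη]
    refine intervalIntegral.integral_congr fun t ht => ?_
    rw [uIcc_of_le hab.le] at ht
    simp only [hF t ht, hG t ht]
  intro t ht
  rw [← hG t (Ioo_subset_Icc_self ht)]
  refine (hasDerivAt_of_integral_deriv_smul_of_continuous hab
    (continuousOn_iff_continuous_domRestrict.1 hf).Icc_extend'
    (continuousOn_iff_continuous_domRestrict.1 hg).Icc_extend' hweak t ht).congr_of_eventuallyEq ?_
  filter_upwards [isOpen_Ioo.mem_nhds ht] with s hs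
  exact (hF s (Ioo_subset_Icc_self hs)).symm

end WeakDerivative

section Sobolev

variable {s : ℕ} {f g : ℝ → ℝ} {S : Set ℝ} {u : ℝ → ℝ → ℝ}

lemma fc_sub (hf : Continuous f) (hg : Continuous g) (k : ℤ) :
    fc (fun x => f x - g x) k = fc f k - fc g k := by
  have hsub : (fun x => ((f x - g x : ℝ) : ℂ)) = fun x => (f x : ℂ) + (-1) * (g x : ℂ) := by
    ext x
    push_cast
    ring
  rw [fc_eq_fourierCoef, hsub, fourierCoef_add (by fun_prop) (by fun_prop), fourierCoef_const_mul,
    fc_eq_fourierCoef, fc_eq_fourierCoef]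
  ring

lemma norm_sq_le_two_mul_norm_sub_sq_add (x y : ℂ) :
    ‖x‖ ^ 2 ≤ 2 * ‖x - y‖ ^ 2 + 2 * ‖y‖ ^ 2 := by
  have htri : ‖x‖ ≤ ‖x - y‖ + ‖y‖ := by simpa using norm_add_le (x - y) y
  calc ‖x‖ ^ 2 ≤ (‖x - y‖ + ‖y‖) ^ 2 := pow_le_pow_left₀ (norm_nonneg x) htri 2
    _ ≤ 2 * (‖x - y‖ ^ 2 + ‖y‖ ^ 2) := add_sq_le
    _ = _ := mul_add _ _ _

lemma hsNorm_nonneg (s : ℕ) (f : ℝ → ℝ) : 0 ≤ hsNorm s f := Real.sqrt_nonneg _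

namespace MemHs

lemma sum_le (hf : MemHs s f) (F : Finset ℤ) :
    ∑ k ∈ F, (1 + (k : ℝ) ^ 2) ^ s * ‖fc f k‖ ^ 2 ≤ hsNorm s f ^ 2 := by
  rw [hsNorm, Real.sq_sqrt (tsum_nonneg fun k => by positivity)]
  exact hf.2.2.sum_le_tsum _ fun k _ => by positivity

lemma sub (hf : MemHs s f) (hg : MemHs s g) : MemHs s fun x => f x - g x := by
  refine ⟨hf.1.sub hg.1, hf.2.1.sub hg.2.1, ?_⟩
  refine Summable.of_nonneg_of_le (fun k => by positivity) (fun k => ?_)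
    ((hf.2.2.mul_left 2).add (hg.2.2.mul_left 2))
  have hsq : ‖fc f k - fc g k‖ ^ 2 ≤ 2 * ‖fc f k‖ ^ 2 + 2 * ‖fc g k‖ ^ 2 := by
    simpa using norm_sq_le_two_mul_norm_sub_sq_add (fc f k - fc g k) (-fc g k)
  calc (1 + (k : ℝ) ^ 2) ^ s * ‖fc (fun x => f x - g x) k‖ ^ 2
      ≤ (1 + (k : ℝ) ^ 2) ^ s * (2 * ‖fc f k‖ ^ 2 + 2 * ‖fc g k‖ ^ 2) := by
        rw [fc_sub hf.1 hg.1]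
        gcongr
    _ = _ := by ring

lemma sum_le_hsNorm_sub (hf : MemHs s f) (hg : MemHs s g) (F : Finset ℤ) :
    ∑ k ∈ F, (1 + (k : ℝ) ^ 2) ^ s * ‖fc f k‖ ^ 2 ≤
      2 * hsNorm s (fun x => f x - g x) ^ 2 + 2 * hsNorm s g ^ 2 := by
  calc ∑ k ∈ F, (1 + (k : ℝ) ^ 2) ^ s * ‖fc f k‖ ^ 2
      ≤ ∑ k ∈ F, (1 + (k : ℝ) ^ 2) ^ s * (2 * ‖fc f k - fc g k‖ ^ 2 + 2 * ‖fc g k‖ ^ 2) := by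
        gcongr
        exact norm_sq_le_two_mul_norm_sub_sq_add _ _
    _ = 2 * ∑ k ∈ F, (1 + (k : ℝ) ^ 2) ^ s * ‖fc (fun x => f x - g x) k‖ ^ 2 +
        2 * ∑ k ∈ F, (1 + (k : ℝ) ^ 2) ^ s * ‖fc g k‖ ^ 2 := by
        simp only [fc_sub hf.1 hg.1, Finset.mul_sum, ← Finset.sum_add_distrib]
        exact Finset.sum_congr rfl fun k _ => by ring
    _ ≤ _ := by
        gcongr
        · exact (hf.sub hg).sum_le F
        · exact hg.sum_le F

lemma norm_fc_le (hf : MemHs s f) (k : ℤ) : ‖fc f k‖ ≤ hsNorm s f := by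
  refine le_of_sq_le_sq ?_ (hsNorm_nonneg s f)
  have hweight : 1 ≤ (1 + (k : ℝ) ^ 2) ^ s := one_le_pow₀ (by linarith [sq_nonneg (k : ℝ)])
  calc ‖fc f k‖ ^ 2 ≤ (1 + (k : ℝ) ^ 2) ^ s * ‖fc f k‖ ^ 2 :=
        le_mul_of_one_le_left (sq_nonneg _) hweight
    _ ≤ hsNorm s f ^ 2 := by simpa using hf.sum_le {k}

end MemHs

lemma bracket_sq_le (k : ℤ) : bracket k ^ 2 ≤ 2 * (1 + (k : ℝ) ^ 2) := by
  rw [bracket]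
  nlinarith [sq_nonneg (|(k : ℝ)| - 1), sq_abs (k : ℝ)]

namespace ContInHs

lemma continuousOn_fc (hu : ContInHs s S u) (hmem : ∀ t ∈ S, MemHs s (u t)) (k : ℤ) :
    ContinuousOn (fun t => fc (u t) k) S := by
  refine Metric.continuousOn_iff.2 fun t₀ ht₀ ε hε => ?_
  obtain ⟨δ, hδ, hclose⟩ := hu t₀ ht₀ ε hε
  refine ⟨δ, hδ, fun t ht htδ => ?_⟩
  rw [dist_eq_norm, ← fc_sub (hmem t ht).1 (hmem t₀ ht₀).1]
  exact (((hmem t ht).sub (hmem t₀ ht₀)).norm_fc_le k).trans_lt (hclose t ht htδ)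

lemma exists_sum_le (hS : IsCompact S) (hu : ContInHs s S u)
    (hmem : ∀ t ∈ S, MemHs s (u t)) :
    ∃ M, ∀ t ∈ S, ∀ F : Finset ℤ, ∑ k ∈ F, (1 + (k : ℝ) ^ 2) ^ s * ‖fc (u t) k‖ ^ 2 ≤ M := by
  choose! δ hδ hclose using fun t₀ ht₀ => hu t₀ ht₀ 1 one_pos
  obtain ⟨centres, hcentres, hcover⟩ := hS.elim_nhds_subcover (fun t₀ => Metric.ball t₀ (δ t₀))
    fun t₀ ht₀ => Metric.ball_mem_nhds t₀ (hδ t₀ ht₀)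
  refine ⟨2 + 2 * ∑ t₀ ∈ centres, hsNorm s (u t₀) ^ 2, fun t ht F => ?_⟩
  obtain ⟨t₀, ht₀, htδ⟩ : ∃ t₀ ∈ centres, t ∈ Metric.ball t₀ (δ t₀) := by
    simpa only [Set.mem_iUnion, exists_prop] using hcover ht
  have hnear : hsNorm s (fun x => u t x - u t₀ x) ^ 2 ≤ 1 :=
    pow_le_one₀ (hsNorm_nonneg s _) (hclose t₀ (hcentres t₀ ht₀) t ht htδ).le
  have hcentre : hsNorm s (u t₀) ^ 2 ≤ ∑ t₀ ∈ centres, hsNorm s (u t₀) ^ 2 :=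
    Finset.single_le_sum (f := fun t₀ => hsNorm s (u t₀) ^ 2) (fun _ _ => sq_nonneg _) ht₀
  linarith [(hmem t ht).sum_le_hsNorm_sub (hmem t₀ (hcentres t₀ ht₀)) F]

lemma exists_sum_bracket_sq_le (hS : IsCompact S) (hu : ContInHs s S u)
    (hmem : ∀ t ∈ S, MemHs s (u t)) :
    ∃ C, 0 ≤ C ∧ ∀ t ∈ S, ∀ F : Finset ℤ,
      ∑ k ∈ F, (bracket k ^ s * ‖fc (u t) k‖) ^ 2 ≤ C ^ 2 := by
  obtain ⟨M, hM⟩ := hu.exists_sum_le hS hmem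
  refine ⟨√(2 ^ s * M), Real.sqrt_nonneg _, fun t ht F => ?_⟩
  have hM0 : 0 ≤ M := by simpa using hM t ht ∅
  rw [Real.sq_sqrt (by positivity)]
  calc ∑ k ∈ F, (bracket k ^ s * ‖fc (u t) k‖) ^ 2
      ≤ ∑ k ∈ F, 2 ^ s * ((1 + (k : ℝ) ^ 2) ^ s * ‖fc (u t) k‖ ^ 2) := by
        refine Finset.sum_le_sum fun k _ => ?_
        rw [mul_pow, ← mul_assoc, ← mul_pow 2, pow_right_comm]
        gcongr
        exact bracket_sq_le k
    _ ≤ 2 ^ s * M := by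
        rw [← Finset.mul_sum]
        exact mul_le_mul_of_nonneg_left (hM t ht F) (by positivity)

end ContInHs

end Sobolev

section WeakFormulation

open MeasureTheory Set

/-- The test functions `η(t) Re (z e^{-ikx})`. Letting `z` range over `ℂ` recovers the complex
exponential from the real-valued test functions that `IsSolution` admits. -/
noncomputable def testWave (η : ℝ → ℝ) (z : ℂ) (k : ℤ) (t x : ℝ) : ℝ :=
  η t * (z * exp (-I * k * x)).re

section TestWave

variable (η : ℝ → ℝ) (z : ℂ) (k : ℤ)

lemma iteratedDeriv_testWave (n : ℕ) (t : ℝ) :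
    iteratedDeriv n (testWave η z k t) = testWave η (z * (-I * k) ^ n) k t := by
  induction n with
  | zero => simp
  | succ n ih =>
    rw [iteratedDeriv_succ, ih]
    ext x
    have hphase : HasDerivAt (fun x : ℝ => -I * (k : ℂ) * (x : ℂ)) (-I * k) x := by
      simpa using (ofRealCLM.hasDerivAt (x := x)).const_mul (-I * (k : ℂ))
    have hwave : HasDerivAt (fun x : ℝ => (z * (-I * k) ^ n * exp (-I * k * x)).re)
        (z * (-I * k) ^ n * (exp (-I * k * x) * (-I * k))).re x :=
      reCLM.hasFDerivAt.comp_hasDerivAt x (hphase.cexp.const_mul (z * (-I * k) ^ n))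
    refine (hwave.const_mul (η t)).deriv.trans ?_
    rw [testWave, pow_succ]
    congr 2
    ring

lemma testWave_periodic (t : ℝ) : Function.Periodic (testWave η z k t) (2 * Real.pi) := by
  intro x
  have hphase : -I * k * ((x + 2 * Real.pi : ℝ) : ℂ) =
      -I * k * x + ((-k : ℤ) : ℂ) * (2 * Real.pi * I) := by
    push_cast
    ring
  simp only [testWave, hphase, exp_periodic.int_mul (-k) (-I * k * x)]

lemma dispersive_testWave (γ0 γ1 γ2 t x : ℝ) :
    γ0 * iteratedDeriv 5 (testWave η z k t) x + γ1 * iteratedDeriv 3 (testWave η z k t) x +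
      γ2 * deriv (testWave η z k t) x =
    testWave η (-(z * (I * dispersion γ0 γ1 γ2 k))) k t x := by
  have hre : ∀ (y : ℝ) (w : ℂ), y * w.re = ((y : ℂ) * w).re := fun y w => (re_ofReal_mul y w).symm
  have hI3 : I ^ 3 = -I := I_pow_three
  have hI5 : I ^ 5 = I := by rw [show 5 = 3 + 2 from rfl, pow_add, hI3, I_sq]; ring
  simp only [← iteratedDeriv_one (f := testWave η z k t), iteratedDeriv_testWave, testWave, hre,
    ← add_re]
  congr 1
  rw [dispersion, mul_pow, mul_pow, neg_pow I 5, neg_pow I 3, hI5, hI3]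
  push_cast
  ring

lemma integral_mul_testWave {f : ℝ → ℝ} (hf : Continuous f) (t : ℝ) :
    ∫ x in (0 : ℝ)..(2 * Real.pi), f x * testWave η z k t x =
      2 * Real.pi * (η t * (z * fc f k)).re := by
  have hint : IntervalIntegrable (fun x : ℝ => η t * z * ((f x : ℂ) * exp (-I * k * x))) volume
      0 (2 * Real.pi) := by
    refine Continuous.intervalIntegrable ?_ _ _
    fun_prop
  have hpi : ((2 * Real.pi : ℝ) : ℂ) ≠ 0 := ofReal_ne_zero.2 Real.two_pi_pos.ne'
  have hfc : ∫ x in (0 : ℝ)..(2 * Real.pi), (f x : ℂ) * exp (-I * k * x) =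
      ((2 * Real.pi : ℝ) : ℂ) * fc f k := by
    rw [fc, mul_inv_cancel_left₀ hpi]
  calc ∫ x in (0 : ℝ)..(2 * Real.pi), f x * testWave η z k t x
      = ∫ x in (0 : ℝ)..(2 * Real.pi), reCLM (η t * z * ((f x : ℂ) * exp (-I * k * x))) := by
        refine intervalIntegral.integral_congr fun x _ => ?_
        simp only [testWave, reCLM_apply, ← re_ofReal_mul]
        congr 1
        ring
    _ = (η t * z * (((2 * Real.pi : ℝ) : ℂ) * fc f k)).re := by
        rw [reCLM.intervalIntegral_comp_comm hint, intervalIntegral.integral_const_mul, hfc,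
          reCLM_apply]
    _ = 2 * Real.pi * (η t * (z * fc f k)).re := by
        rw [← re_ofReal_mul]
        congr 1
        ring

variable {η}

lemma contDiff_uncurry_testWave (hη : ContDiff ℝ (⊤ : ℕ∞) η) :
    ContDiff ℝ (⊤ : ℕ∞) (Function.uncurry (testWave η z k)) := by
  have hwave : ContDiff ℝ (⊤ : ℕ∞) fun p : ℝ × ℝ => z * exp (-I * k * (p.2 : ℂ)) :=
    contDiff_const.mul ((contDiff_const.mul (ofRealCLM.contDiff.comp contDiff_snd)).cexp)
  exact (hη.comp contDiff_fst).mul (reCLM.contDiff.comp hwave)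

lemma continuous_testWave (η : ℝ → ℝ) (t : ℝ) : Continuous (testWave η z k t) := by
  unfold testWave
  fun_prop

lemma integral_testWave_pairing (γ0 γ1 γ2 : ℝ) {f g : ℝ → ℝ} (hf : Continuous f)
    (hg : Continuous g) {t : ℝ} (hη : DifferentiableAt ℝ η t) :
    ∫ x in (0 : ℝ)..(2 * Real.pi), (f x * (deriv (fun τ => testWave η z k τ x) t +
        γ0 * iteratedDeriv 5 (testWave η z k t) x + γ1 * iteratedDeriv 3 (testWave η z k t) x +
        γ2 * deriv (testWave η z k t) x) + g x * testWave η z k t x) =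
      2 * Real.pi * (z * (deriv η t • fc f k +
        η t • (-(I * dispersion γ0 γ1 γ2 k * fc f k) + fc g k))).re := by
  have htime : ∀ x, deriv (fun τ => testWave η z k τ x) t = testWave (deriv η) z k t x :=
    fun x => deriv_mul_const hη _
  have hint : ∀ {h : ℝ → ℝ} (ζ : ℝ → ℝ) (w : ℂ), Continuous h →
      IntervalIntegrable (fun x => h x * testWave ζ w k t x) volume 0 (2 * Real.pi) :=
    fun ζ w hh => (hh.mul (continuous_testWave w k ζ t)).intervalIntegrable _ _
  simp only [add_assoc, htime]
  simp only [← add_assoc (γ0 * _), dispersive_testWave, mul_add]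
  rw [intervalIntegral.integral_add ((hint _ _ hf).add (hint _ _ hf)) (hint _ _ hg),
    intervalIntegral.integral_add (hint _ _ hf) (hint _ _ hf), integral_mul_testWave _ _ _ hf,
    integral_mul_testWave _ _ _ hf, integral_mul_testWave _ _ _ hg, ← mul_add, ← mul_add,
    ← add_re, ← add_re]
  congr 2
  simp only [real_smul]
  ring

end TestWave

namespace IsSolution

variable {γ0 γ1 γ2 : ℝ} {j0 : ℕ} {lam : Fin j0 → ℝ} {a b c d : Fin j0 → ℕ} {T₁ T₂ : ℝ}
  {u : ℝ → ℝ → ℝ} {k : ℤ}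

lemma integral_deriv_smul_fc_eq_zero (hu : IsSolution γ0 γ1 γ2 j0 lam a b c d T₁ T₂ u)
    (hT : T₁ < T₂) (hcont : ∀ t ∈ Icc T₁ T₂, Continuous (u t))
    (hNcont : ∀ t ∈ Icc T₁ T₂, Continuous (Nfun j0 lam a b c d (u t)))
    (hfc : ContinuousOn (fun t => fc (u t) k) (Icc T₁ T₂))
    (hNfc : ContinuousOn (fun t => fc (Nfun j0 lam a b c d (u t)) k) (Icc T₁ T₂))
    {η : ℝ → ℝ} (hη : IsTestFunction T₁ T₂ η) :
    ∫ t in T₁..T₂, (deriv η t • fc (u t) k +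
      η t • (-(I * dispersion γ0 γ1 γ2 k * fc (u t) k) + fc (Nfun j0 lam a b c d (u t)) k)) =
      0 := by
  set V : ℝ → ℂ := fun t => deriv η t • fc (u t) k +
    η t • (-(I * dispersion γ0 γ1 γ2 k * fc (u t) k) + fc (Nfun j0 lam a b c d (u t)) k)
  have hVcont : ContinuousOn V (Icc T₁ T₂) :=
    (hη.continuous_deriv.continuousOn.smul hfc).add (hη.continuous.continuousOn.smul
      ((continuousOn_const.mul hfc).neg.add hNfc))
  have hre : ∀ z : ℂ, (z * ∫ t in T₁..T₂, V t).re = 0 := by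
    intro z
    have hint : IntervalIntegrable (fun t => z * V t) volume T₁ T₂ := by
      refine ContinuousOn.intervalIntegrable ?_
      rw [uIcc_of_le hT.le]
      exact continuousOn_const.mul hVcont
    have hweak := hu.2 (testWave η z k) (contDiff_uncurry_testWave z k hη.1)
      (testWave_periodic η z k) fun t ht x => by rw [testWave, hη.2 t ht, zero_mul]
    rw [intervalIntegral.integral_congr (g := fun t => 2 * Real.pi * reCLM (z * V t))
      fun t ht => ?_, intervalIntegral.integral_const_mul, reCLM.intervalIntegral_comp_comm hint,
      intervalIntegral.integral_const_mul] at hweak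
    · exact (mul_eq_zero.1 hweak).resolve_left Real.two_pi_pos.ne'
    · rw [uIcc_of_le hT.le] at ht
      exact integral_testWave_pairing z k γ0 γ1 γ2 (hcont t ht) (hNcont t ht)
        (hη.hasDerivAt t).differentiableAt
  have hconj := hre (conj (∫ t in T₁..T₂, V t))
  rw [← normSq_eq_conj_mul_self, ofReal_re] at hconj
  exact normSq_eq_zero.1 hconj

lemma hasDerivAt_fc (hu : IsSolution γ0 γ1 γ2 j0 lam a b c d T₁ T₂ u)
    (hcont : ∀ t ∈ Icc T₁ T₂, Continuous (u t))
    (hNcont : ∀ t ∈ Icc T₁ T₂, Continuous (Nfun j0 lam a b c d (u t)))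
    (hfc : ContinuousOn (fun t => fc (u t) k) (Icc T₁ T₂))
    (hNfc : ContinuousOn (fun t => fc (Nfun j0 lam a b c d (u t)) k) (Icc T₁ T₂)) :
    ∀ t ∈ Ioo T₁ T₂, HasDerivAt (fun t => fc (u t) k)
      (-(I * dispersion γ0 γ1 γ2 k * fc (u t) k) + fc (Nfun j0 lam a b c d (u t)) k) t :=
  fun t ht =>
    have hT : T₁ < T₂ := ht.1.trans ht.2
    hasDerivAt_of_integral_deriv_smul hT hfc ((continuousOn_const.mul hfc).neg.add hNfc)
      (fun _ hη => hu.integral_deriv_smul_fc_eq_zero hT hcont hNcont hfc hNfc hη) t ht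

end IsSolution

end WeakFormulation

section InitialRegularity

open MvPolynomial Set

lemma fc_neg (f : ℝ → ℝ) (k : ℤ) : fc f (-k) = conj (fc f k) :=
  fourierCoef_neg (fun _ => conj_ofReal _) k

lemma ofReal_eq_jet_fc {r : ℕ} {A : ℝ} {f : ℝ → ℝ} (h : WeightedSumLE r A (fc f))
    (hf : Continuous f) (hper : Function.Periodic f (2 * Real.pi)) (x : ℝ) :
    (f x : ℂ) = jet (fc f) 0 x := by
  have hs : Summable (fc f) := Summable.of_norm (by simpa using (h.mono (Nat.zero_le r)).summable)
  exact eq_jet_fourierCoef (f := fun x => (f x : ℂ)) (continuous_ofReal.comp hf)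
    (fun x => congrArg ofReal (hper x)) hs x

lemma exists_Icc_forall_le_of_lt {T m : ℝ} {F : ℝ → ℝ} (hT : 0 < T)
    (hF : ContinuousOn F (Icc 0 T)) (h0 : F 0 < m) :
    ∃ T' > 0, T' ≤ T ∧ ∀ t ∈ Icc 0 T', F t ≤ m := by
  obtain ⟨δ, hδ, hball⟩ := Metric.mem_nhdsWithin_iff.1
    ((hF 0 (left_mem_Icc.2 hT.le)).eventually_lt_const h0)
  refine ⟨min T (δ / 2), lt_min hT (half_pos hδ), min_le_left _ _, fun t ht => ?_⟩
  have htδ : t ∈ Metric.ball (0 : ℝ) δ := by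
    rw [Metric.mem_ball, Real.dist_eq, sub_zero, abs_of_nonneg ht.1]
    exact (ht.2.trans (min_le_right _ _)).trans_lt (half_lt_self hδ)
  exact (hball ⟨htδ, ht.1, ht.2.trans (min_le_left _ _)⟩).le

section Nfun

variable {j0 : ℕ} (lam : Fin j0 → ℝ) (a b c d : Fin j0 → ℕ) {A : ℝ} {f : ℝ → ℝ}
  (h : WeightedSumLE 3 A (fc f)) (hf : ∀ x, (f x : ℂ) = jet (fc f) 0 x)
include h hf

lemma fc_Nfun (k : ℤ) : fc (Nfun j0 lam a b c d f) k =
    fourierCoef (evalJet (nonlinearityPoly lam a b c d) (fc f)) k := by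
  rw [fc_eq_fourierCoef]
  exact congrArg (fourierCoef · k)
    (funext fun x => (h.evalJet_nonlinearityPoly lam a b c d hf x).symm)

lemma continuous_Nfun : Continuous (Nfun j0 lam a b c d f) := by
  have hre : Nfun j0 lam a b c d f =
      fun x => (evalJet (nonlinearityPoly lam a b c d) (fc f) x).re := by
    ext x
    rw [h.evalJet_nonlinearityPoly lam a b c d hf, ofReal_re]
  rw [hre]
  exact continuous_re.comp (h.continuous_evalJet (nonlinearityPoly_mem_orderLE lam a b c d))

end Nfun

namespace IsSolution

variable {γ0 γ1 γ2 : ℝ} {j0 : ℕ} {lam : Fin j0 → ℝ} {a b c d : Fin j0 → ℕ} {T : ℝ}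
  {u : ℝ → ℝ → ℝ}

theorem exists_parabolicFlow (hu : IsSolution γ0 γ1 γ2 j0 lam a b c d 0 T u) (hT : 0 < T)
    (hmem : ∀ t ∈ Icc 0 T, MemHs 13 (u t)) (hcont : ContInHs 13 (Icc 0 T) u)
    (hP : PN j0 lam a b c d (u 0) < 0) :
    ∃ c₀ > 0, ∃ C, ∃ T₀ > 0,
      ParabolicFlow γ0 γ1 γ2 (nonlinearityPoly lam a b c d) c₀ C T₀ fun t => fc (u t) := by
  obtain ⟨C, hC, hsum⟩ := hcont.exists_sum_bracket_sq_le isCompact_Icc hmem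
  have hfc := hcont.continuousOn_fc hmem
  have hdecay : ∀ t ∈ Icc 0 T, ∀ k, ‖fc (u t) k‖ ≤ C * (bracket k ^ (3 + 2))⁻¹ := fun t ht k =>
    norm_le_mul_bracket_pow_antitone (by norm_num) hC (norm_le_of_sum_sq_le hC (hsum t ht) k)
  have hweight : ∀ t ∈ Icc 0 T, WeightedSumLE 3 (C * kernelMass) (fc (u t)) := fun t ht =>
    .of_decay (hdecay t ht)
  have hjet : ∀ t ∈ Icc 0 T, ∀ x, (u t x : ℂ) = jet (fc (u t)) 0 x := fun t ht =>
    ofReal_eq_jet_fc (hweight t ht) (hmem t ht).1 (hmem t ht).2.1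
  have hNfc : ∀ t ∈ Icc 0 T, ∀ k, fc (Nfun j0 lam a b c d (u t)) k =
      fourierCoef (evalJet (nonlinearityPoly lam a b c d) (fc (u t))) k := fun t ht =>
    fc_Nfun lam a b c d (hweight t ht) (hjet t ht)
  have hpoly := nonlinearityPoly_mem_orderLE lam a b c d
  have hmean := continuous_re.comp_continuousOn
    (continuousOn_fourierCoef_evalJet hfc hdecay (pderiv_mem_orderLE 2 hpoly) 0)
  have hmean0 : (fourierCoef (evalJet (pderiv 2 (nonlinearityPoly lam a b c d)) (fc (u 0))) 0).re <
      PN j0 lam a b c d (u 0) / 2 := by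
    have h0 : (0 : ℝ) ∈ Icc 0 T := left_mem_Icc.2 hT.le
    rw [(hweight 0 h0).fourierCoef_pderiv_two_nonlinearityPoly lam a b c d (hjet 0 h0), ofReal_re]
    linarith
  obtain ⟨T₀, hT₀, hT₀T, hneg⟩ := exists_Icc_forall_le_of_lt hT hmean hmean0
  have hsub : Icc 0 T₀ ⊆ Icc 0 T := Icc_subset_Icc_right hT₀T
  refine ⟨-(PN j0 lam a b c d (u 0) / 2), by linarith, C, T₀, hT₀, fun k => (hfc k).mono hsub,
    fun t ht k => ?_, fun t _ => fc_neg (u t), hC, fun t ht => hsum t (hsub ht),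
    fun t ht => (hneg t ht).trans_eq (neg_neg _).symm⟩
  have ht' : t ∈ Ioo 0 T := ⟨ht.1, ht.2.trans_le hT₀T⟩
  rw [← hNfc t (Ioo_subset_Icc_self ht')]
  exact hu.hasDerivAt_fc (fun t ht => (hmem t ht).1)
    (fun t ht => continuous_Nfun lam a b c d (hweight t ht) (hjet t ht)) (hfc k)
    ((continuousOn_fourierCoef_evalJet hfc hdecay hpoly k).congr fun t ht => hNfc t ht k) t ht'

theorem contDiff_initial (hγ0 : γ0 ≠ 0) (hu : IsSolution γ0 γ1 γ2 j0 lam a b c d 0 T u)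
    (hT : 0 < T) (hmem : ∀ t ∈ Icc 0 T, MemHs 13 (u t)) (hcont : ContInHs 13 (Icc 0 T) u)
    (hP : PN j0 lam a b c d (u 0) < 0) : ContDiff ℝ (⊤ : ℕ∞) (u 0) := by
  obtain ⟨c₀, hc₀, C, T₀, hT₀, hflow⟩ := hu.exists_parabolicFlow hT hmem hcont hP
  have hweight : ∀ m, ∃ A, WeightedSumLE m A (fc (u 0)) :=
    hflow.exists_weightedSumLE_initial (nonlinearityPoly_mem_orderLE lam a b c d) hγ0 hc₀ hT₀
  obtain ⟨A, hA⟩ := hweight 0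
  have h0 := hmem 0 (left_mem_Icc.2 hT.le)
  exact WeightedSumLE.contDiff hweight (ofReal_eq_jet_fc hA h0.1 h0.2.1)

end IsSolution

end InitialRegularity

theorem nonexistence_parabolic_general
    (γ0 γ1 γ2 : ℝ) (hγ0 : γ0 ≠ 0)
    (j0 : ℕ) (lam : Fin j0 → ℝ) (a b c d : Fin j0 → ℕ)
    (φ : ℝ → ℝ) (hφns : ¬ ContDiff ℝ (⊤ : ℕ∞) φ) (hPNφ : PN j0 lam a b c d φ < 0) :
    ∀ T : ℝ, 0 < T →
      ¬ ∃ u : ℝ → ℝ → ℝ,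
          u 0 = φ ∧
          IsSolution γ0 γ1 γ2 j0 lam a b c d 0 T u ∧
          (∀ t ∈ Set.Icc (0:ℝ) T, MemHs 13 (u t)) ∧
          ContInHs 13 (Set.Icc (0:ℝ) T) u := by
  rintro T hT ⟨u, rfl, hu, hmem, hcont⟩
  exact hφns (hu.contDiff_initial hγ0 hT hmem hcont hPNφ)

/-- **Non-existence for parabolic resonance type.**
If `φ ∈ H^{13}(𝕋)` is real-valued, not `C^∞`, and `P_N(φ) < 0`, then for every `T > 0`
there is no solution `u ∈ C([0,T];H^{13}(𝕋))` of the fifth order equation with `u(0) = φ`. -/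
theorem nonexistence_parabolic
    (γ0 γ1 γ2 : ℝ) (hγ0 : γ0 ≠ 0)
    (j0 : ℕ) (lam : Fin j0 → ℝ) (a b c d : Fin j0 → ℕ)
    (hp : ∀ j : Fin j0, 2 ≤ a j + b j + c j + d j)
    (φ : ℝ → ℝ) (hφ : MemHs 13 φ)
    (hφns : ¬ ContDiff ℝ (⊤ : ℕ∞) φ)
    (hPNφ : PN j0 lam a b c d φ < 0) :
    ∀ T : ℝ, 0 < T →
      ¬ ∃ u : ℝ → ℝ → ℝ,
          u 0 = φ ∧
          IsSolution γ0 γ1 γ2 j0 lam a b c d 0 T u ∧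
          (∀ t ∈ Set.Icc (0:ℝ) T, MemHs 13 (u t)) ∧
          ContInHs 13 (Set.Icc (0:ℝ) T) u :=
  nonexistence_parabolic_general γ0 γ1 γ2 hγ0 j0 lam a b c d φ hφns hPNφ

end FifthOrderStmt4
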